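/- arXiv:2109.07209 — 4 statements merged into one kernel-verified Lean document; each statement's English description precedes it below -/
import Mathlib

section
/- For all integers n ≥ 0, α ≥ 0, β ≥ 0, γ ≥ 0, the number of (4,8)-regular overpartitions satisfies p̄_{4,8}( 16 · 3^{4α+1} · 5^{4β} · 7^{4γ} · n + 34 · 3^{4α} · 5^{4β} · 7^{4γ} ) ≡ 0 (mod 32). -/
/-- The number of `(j,k)`-regular overpartitions of `n`: pairs `(λ, μ)` where `λ` is a
partition of some `m ≤ n` into distinct parts, `μ` is a partition of `n - m`, and no part
of `λ` or `μ` is congruent to `j` modulo `k`. -/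
def regularOverpartitions (j k n : ℕ) : ℕ :=
  ∑ m ∈ Finset.range (n + 1),
    ((Nat.Partition.distincts m).filter (fun lam => ∀ i ∈ lam.parts, i % k ≠ j)).card *
    ((Finset.univ : Finset (Nat.Partition (n - m))).filter
      (fun mu => ∀ i ∈ mu.parts, i % k ≠ j)).card

/-!
Write `φ(q) = ∑ q ^ (k ^ 2)` over the integers and `ψ(q) = ∑ q ^ (k (k + 1) / 2)` over the natural
numbers. By Euler's product formulas and Jacobi's triple product, the generating function `P` of
`(4, 8)`-regular overpartitions satisfies `P φ(-q) φ(-q⁸) = φ(-q⁴)`. The dissection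
`φ(± q) = φ(q⁴) ± 2 q ψ(q⁸)` turns `1 / φ(-q)` into a polynomial of degree three in `q` over the
power series in `q⁴`; the terms of `P` with exponent `≡ 2 (mod 4)` then give
`∑ p̄(4 m + 2) qᵐ = 4 (q⁴; q⁴)_∞³ / (φ(q)⁴ - 16 q ψ(q²)⁴)`.
Since `φ ≡ 1 (mod 2)`, the denominator is `≡ 1 (mod 8)`, so `p̄(4 m + 2)` is modulo `32` four times
the `m`-th coefficient of `(q⁴; q⁴)_∞³`. By Jacobi's identity for the cube, that coefficient
vanishes unless `m` is four times a triangular number, that is, unless `2 m + 1` is a square.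
-/

namespace QSeries

open Finset PowerSeries Filter
open scoped Topology PowerSeries.WithPiTopology

/-! ### The finite Jacobi triple product -/

section Finite

variable {S : Type*} [CommRing S]

/-- The Gaussian binomial coefficient `[n, k]_q`, defined by the `q`-Pascal recursion so that it
makes sense for every element `q` of a commutative ring. -/
def gaussBinom (q : S) : ℕ → ℕ → S
  | _, 0 => 1
  | 0, _ + 1 => 0
  | n + 1, k + 1 => gaussBinom q n k + q ^ (k + 1) * gaussBinom q n (k + 1)

/-- The finite `q`-Pochhammer symbol `(a; q)_n`. -/
def qPochhammer (a q : S) (n : ℕ) : S := ∏ i ∈ range n, (1 - a * q ^ i)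

lemma gaussBinom_zero_right (q : S) (n : ℕ) : gaussBinom q n 0 = 1 := by cases n <;> rfl

lemma gaussBinom_succ_succ (q : S) (n k : ℕ) :
    gaussBinom q (n + 1) (k + 1) = gaussBinom q n k + q ^ (k + 1) * gaussBinom q n (k + 1) := rfl

lemma gaussBinom_eq_zero_of_lt (q : S) {n k : ℕ} (h : n < k) : gaussBinom q n k = 0 := by
  induction n generalizing k with
  | zero => obtain ⟨k, rfl⟩ := Nat.exists_eq_succ_of_ne_zero h.ne'; rfl
  | succ n ih =>
    obtain ⟨k, rfl⟩ := Nat.exists_eq_succ_of_ne_zero (Nat.ne_zero_of_lt h)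
    rw [Nat.succ_eq_add_one, gaussBinom_succ_succ, ih (by omega), ih (by omega), mul_zero, add_zero]

lemma gaussBinom_self (q : S) (n : ℕ) : gaussBinom q n n = 1 := by
  induction n with
  | zero => rfl
  | succ n ih =>
    rw [gaussBinom_succ_succ, ih, gaussBinom_eq_zero_of_lt q n.lt_succ_self, mul_zero, add_zero]

lemma qPochhammer_zero (a q : S) : qPochhammer a q 0 = 1 := prod_range_zero _

lemma qPochhammer_succ (a q : S) (n : ℕ) :
    qPochhammer a q (n + 1) = qPochhammer a q n * (1 - a * q ^ n) := prod_range_succ _ n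

lemma qPochhammer_succ' (a q : S) (n : ℕ) :
    qPochhammer a q (n + 1) = (1 - a) * qPochhammer (a * q) q n := by
  rw [qPochhammer, prod_range_succ', mul_comm, pow_zero, mul_one, qPochhammer]
  simp only [pow_succ', mul_assoc]

theorem gaussBinom_mul_qPochhammer (q : S) (a b : ℕ) :
    gaussBinom q (a + b) a * (qPochhammer q q a * qPochhammer q q b) = qPochhammer q q (a + b) := by
  induction a generalizing b with
  | zero => rw [gaussBinom_zero_right, qPochhammer_zero, one_mul, one_mul, zero_add]
  | succ a iha =>
    induction b with
    | zero => rw [add_zero, gaussBinom_self, qPochhammer_zero, one_mul, mul_one]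
    | succ b ihb =>
      have left_smaller := iha (b + 1)
      rw [show a + 1 + b = a + (b + 1) by ring] at ihb
      rw [show a + 1 + (b + 1) = a + (b + 1) + 1 by ring, gaussBinom_succ_succ,
        qPochhammer_succ _ _ (a + (b + 1))]
      simp only [qPochhammer_succ _ _ a, qPochhammer_succ _ _ b] at left_smaller ihb ⊢
      linear_combination (1 - q * q ^ a) * left_smaller + q ^ (a + 1) * (1 - q * q ^ b) * ihb

lemma sum_gaussBinom_succ (q : S) (n : ℕ) (g : ℕ → S) :
    ∑ j ∈ range (n + 2), gaussBinom q (n + 1) j * g j =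
      ∑ j ∈ range (n + 1), gaussBinom q n j * (g (j + 1) + q ^ j * g j) := by
  have top_vanishes : ∑ j ∈ range (n + 2), gaussBinom q n j * (q ^ j * g j) =
      ∑ j ∈ range (n + 1), gaussBinom q n j * (q ^ j * g j) := by
    rw [sum_range_succ, gaussBinom_eq_zero_of_lt q n.lt_succ_self, zero_mul, add_zero]
  rw [sum_range_succ'] at top_vanishes ⊢
  simp only [gaussBinom_succ_succ, mul_add, sum_add_distrib, ← top_vanishes, ← add_assoc,
    gaussBinom_zero_right, pow_zero, one_mul, add_mul]
  congr 2
  exact sum_congr rfl fun j _ ↦ by ring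

theorem qPochhammer_neg_eq_sum_gaussBinom (a q : S) (m : ℕ) :
    qPochhammer (-a) q m =
      ∑ j ∈ range (m + 1), gaussBinom q m j * (a ^ j * q ^ j.choose 2) := by
  induction m generalizing a with
  | zero => simp [qPochhammer_zero, gaussBinom_zero_right]
  | succ m ih =>
    rw [sum_gaussBinom_succ, qPochhammer_succ', neg_mul, ih, mul_sum]
    refine sum_congr rfl fun j _ ↦ ?_
    rw [Nat.choose_succ_succ' j 1, Nat.choose_one_right]
    ring

/-- The generalized triangular number `k (k + 1) / 2`, for an integer `k`; thus
`triangular (-k) = k (k - 1) / 2`. -/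
def triangular (k : ℤ) : ℕ := (k * (k + 1) / 2).toNat

lemma two_mul_triangular (k : ℤ) : 2 * (triangular k : ℤ) = k * (k + 1) := by
  have nonneg : 0 ≤ k * (k + 1) := by rcases lt_or_ge k 0 with h | h <;> nlinarith
  rw [triangular, Int.toNat_of_nonneg (by omega),
    Int.mul_ediv_cancel' (Int.even_mul_succ_self k).two_dvd]

lemma triangular_eq_add_triangular_neg (j : ℕ) : triangular j = j + triangular (-j) := by
  have := two_mul_triangular j
  have := two_mul_triangular (-j)
  zify
  linarith

lemma triangular_neg_natCast (j : ℕ) : triangular (-j) = j.choose 2 := by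
  rw [triangular, Nat.choose_two_right]
  rcases j with _ | j
  · rfl
  · rw [← Int.toNat_natCast (_ / 2)]
    push_cast
    grind

/-- The general term `a ^ (k (k + 1) / 2) * b ^ (k (k - 1) / 2)` of Ramanujan's theta series
`f(a, b)`. -/
def thetaTerm (a b : S) (k : ℤ) : S := a ^ triangular k * b ^ triangular (-k)

lemma thetaTerm_self (q : S) (k : ℤ) : thetaTerm q q k = q ^ k.natAbs ^ 2 := by
  rw [thetaTerm, ← pow_add]
  congr 1
  zify
  rw [sq_abs]
  linarith [two_mul_triangular k, two_mul_triangular (-k)]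

lemma pow_mul_thetaTerm_sub_one (a b : S) (j n : ℕ) :
    (a * b) ^ j * thetaTerm a b (j - (n + 1 : ℕ)) = b * (a * b) ^ n * thetaTerm a b (j - n) := by
  have ha : j + triangular (j - (n + 1 : ℕ)) = n + triangular (j - n) := by
    have := two_mul_triangular (j - (n + 1 : ℕ))
    have := two_mul_triangular (j - n)
    push_cast at *
    zify
    linarith
  have hb : j + triangular (-(j - (n + 1 : ℕ))) = n + triangular (-(j - n)) + 1 := by
    have := two_mul_triangular (-(j - (n + 1 : ℕ)))
    have := two_mul_triangular (-(j - n))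
    push_cast at *
    zify
    linarith
  have hab := congrArg₂ (fun d e ↦ a ^ d * b ^ e) ha hb
  simp only [pow_add] at hab
  simp only [thetaTerm, mul_pow]
  linear_combination hab

theorem qPochhammer_mul_qPochhammer_eq_sum (a b : S) (m n : ℕ) :
    qPochhammer (-a) (a * b) m * qPochhammer (-b) (a * b) n =
      ∑ j ∈ range (m + n + 1), gaussBinom (a * b) (m + n) j * thetaTerm a b (j - n) := by
  induction n with
  | zero =>
    rw [qPochhammer_zero, mul_one, qPochhammer_neg_eq_sum_gaussBinom]
    refine sum_congr rfl fun j _ ↦ ?_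
    rw [Nat.cast_zero, sub_zero, thetaTerm, triangular_eq_add_triangular_neg,
      triangular_neg_natCast, pow_add, mul_assoc, ← mul_pow, add_zero]
  | succ n ih =>
    rw [← add_assoc, sum_gaussBinom_succ, qPochhammer_succ, ← mul_assoc, ih, sum_mul]
    refine sum_congr rfl fun j _ ↦ ?_
    rw [pow_mul_thetaTerm_sub_one]
    push_cast
    rw [add_sub_add_right_eq_sub]
    ring

lemma map_qPochhammer {T : Type*} [CommRing T] (f : S →+* T) (a q : S) (n : ℕ) :
    f (qPochhammer a q n) = qPochhammer (f a) (f q) n := by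
  simp only [qPochhammer, map_prod, map_sub, map_one, map_mul, map_pow]

lemma map_gaussBinom {T : Type*} [CommRing T] (f : S →+* T) (q : S) (n k : ℕ) :
    f (gaussBinom q n k) = gaussBinom (f q) n k := by
  induction n generalizing k with
  | zero => cases k <;> simp [gaussBinom]
  | succ n ih =>
    cases k with
    | zero => simp [gaussBinom_zero_right]
    | succ k => simp [gaussBinom_succ_succ, ih]

open DualNumber TrivSqZeroExt

lemma one_add_smul_eps_pow (r : S) (n : ℕ) : (1 + r • ε : S[ε]) ^ n = 1 + (n * r) • ε := by
  ext
  · simp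
  · simp [snd_pow]

lemma thetaTerm_mul_one_add_eps (a b : S) (k : ℤ) :
    thetaTerm (inl a * (1 + (1 : S) • ε) : S[ε]) (inl b * (1 + (-1 : S) • ε)) k =
      inl (thetaTerm a b k) * (1 + (k : S) • ε) := by
  have exponent_diff : (k : S) = triangular k + triangular (-k) * (-1) := by
    have := two_mul_triangular k
    have := two_mul_triangular (-k)
    have : k = triangular k + triangular (-k) * (-1) := by linarith
    exact_mod_cast congrArg (Int.cast (R := S)) this
  have one_add_mul_one_add (x y : S) : (1 + x • ε : S[ε]) * (1 + y • ε) = 1 + (x + y) • ε := by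
    ext <;> simp [add_comm]
  rw [thetaTerm, mul_pow, mul_pow, one_add_smul_eps_pow, one_add_smul_eps_pow, mul_mul_mul_comm,
    one_add_mul_one_add, mul_one, ← exponent_diff, thetaTerm, inl_mul, inl_pow, inl_pow]

-- The derivative of the finite triple product at `a = -1`, with `a * b = q` fixed: both sides
-- vanish there, and the `ε`-parts for `a = -(1 + ε)`, `b = -q (1 - ε)` are compared.
theorem qPochhammer_mul_qPochhammer_succ_eq_neg_sum (q : S) (n : ℕ) :
    qPochhammer q q n * qPochhammer q q (n + 1) =
      -∑ j ∈ range (n + 1 + (n + 1) + 1), gaussBinom q (n + 1 + (n + 1)) j *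
        (((j - (n + 1 : ℕ) : ℤ) : S) * thetaTerm (-1) (-q) (j - (n + 1 : ℕ))) := by
  set a : S[ε] := inl (-1) * (1 + (1 : S) • ε) with ha
  set b : S[ε] := inl (-q) * (1 + (-1 : S) • ε) with hb
  have mul_eq : a * b = inl q := by ext <;> simp [a, b]
  have snd_left : snd (qPochhammer (-a) (inl q) (n + 1) * qPochhammer (-b) (inl q) (n + 1)) =
      -(qPochhammer q q n * qPochhammer q q (n + 1)) := by
    have fst_qPochhammer (c : S[ε]) (m : ℕ) :
        fst (qPochhammer c (inl q) m) = qPochhammer (fst c) q m :=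
      map_qPochhammer (fstHom S S S).toRingHom c (inl q) m
    have one_add_a : 1 - -a = -ε := by ext <;> simp [a]
    rw [qPochhammer_succ', one_add_a, mul_assoc, neg_mul, snd_neg, DualNumber.snd_mul]
    simp [fst_qPochhammer, a, b]
  have snd_right (j : ℕ) (k : ℤ) : snd (gaussBinom (inl q : S[ε]) (n + 1 + (n + 1)) j *
      thetaTerm a b k) = gaussBinom q (n + 1 + (n + 1)) j * (k * thetaTerm (-1) (-q) k) := by
    rw [show gaussBinom (inl q : S[ε]) (n + 1 + (n + 1)) j = inl (gaussBinom q _ j) from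
      (map_gaussBinom (inlHom S S) q _ j).symm, ha, hb, thetaTerm_mul_one_add_eps]
    simp [mul_comm]
  have finite_triple := congrArg snd (qPochhammer_mul_qPochhammer_eq_sum a b (n + 1) (n + 1))
  rw [mul_eq, snd_left, snd_sum, sum_congr rfl fun j _ ↦ snd_right j _] at finite_triple
  rw [← finite_triple, neg_neg]

end Finite

variable {R : Type*} [CommRing R]

/-! ### Infinite products of power series -/

section Limits

variable [TopologicalSpace R]

lemma tendsto_of_X_pow_dvd_sub {u : ℕ → R⟦X⟧} {f : R⟦X⟧} (h : ∀ n, X ^ n ∣ u n - f) :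
    Tendsto u atTop (𝓝 f) := by
  refine (WithPiTopology.tendsto_iff_coeff_tendsto R _ _ _).2 fun d ↦
    tendsto_nhds_of_eventually_eq ?_
  filter_upwards [eventually_gt_atTop d] with n hn
  rw [← sub_eq_zero, ← map_sub]
  exact X_pow_dvd_iff.1 (h n) d hn

lemma X_pow_dvd_of_tendsto [T1Space R] {u : ℕ → R⟦X⟧} {f : R⟦X⟧} {d : ℕ}
    (hu : Tendsto u atTop (𝓝 f)) (h : ∀ᶠ n in atTop, X ^ d ∣ u n) : X ^ d ∣ f := by
  have isClosed : IsClosed {g : R⟦X⟧ | X ^ d ∣ g} := by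
    simp only [X_pow_dvd_iff, Set.ofPred_forall]
    exact isClosed_iInter fun m ↦ isClosed_iInter fun _ ↦
      isClosed_singleton.preimage (WithPiTopology.continuous_coeff R m)
  exact isClosed.mem_of_tendsto hu h

lemma summable_of_X_pow_natAbs_dvd {c : ℤ → R⟦X⟧} (hc : ∀ k, X ^ (k.natAbs - 1) ∣ c k) :
    Summable c := by
  refine (WithPiTopology.summable_iff_summable_coeff R).2 fun d ↦
    summable_of_ne_finset_zero (s := Icc (-(d + 1 : ℤ)) (d + 1)) fun k hk ↦ ?_
  exact X_pow_dvd_iff.1 (hc k) d (by rw [mem_Icc] at hk; omega)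

end Limits

section InfiniteProduct

variable [TopologicalSpace R]

/-- The infinite `q`-Pochhammer symbol `(a; q)_∞`, a limit in the topology of coefficientwise
convergence. It is meaningful when `X ∣ q`; otherwise the product may have the junk value `1`. -/
noncomputable def qPochhammerInf (a q : R⟦X⟧) : R⟦X⟧ := ∏' i : ℕ, (1 - a * q ^ i)

variable {q : R⟦X⟧}

lemma hasProd_qPochhammerInf (hq : X ∣ q) (a : R⟦X⟧) :
    HasProd (fun i ↦ 1 - a * q ^ i) (qPochhammerInf a q) := by
  refine Multipliable.hasProd ?_
  simp only [sub_eq_add_neg]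
  refine WithPiTopology.multipliable_one_add_of_tendsto_order_atTop_nhds_top R ?_
  refine ENat.tendsto_nhds_top_iff_natCast_lt.2 fun d ↦ ?_
  filter_upwards [eventually_gt_atTop d] with i hi
  refine (Nat.cast_lt.2 hi).trans_le (nat_le_order _ _ (X_pow_dvd_iff.1 ?_))
  exact ((pow_dvd_pow_of_dvd hq i).mul_left a).neg_right

lemma tendsto_qPochhammer (hq : X ∣ q) (a : R⟦X⟧) :
    Tendsto (qPochhammer a q) atTop (𝓝 (qPochhammerInf a q)) :=
  (hasProd_qPochhammerInf hq a).tendsto_prod_nat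

variable [IsTopologicalRing R] [T2Space R]

lemma X_pow_dvd_qPochhammerInf_sub (hq : X ∣ q) {a : R⟦X⟧} {d : ℕ} (ha : X ^ d ∣ a) (n : ℕ) :
    X ^ (n + d) ∣ qPochhammerInf a q - qPochhammer a q n := by
  refine X_pow_dvd_of_tendsto ((tendsto_qPochhammer hq a).sub_const _) ?_
  filter_upwards [eventually_ge_atTop n] with m hm
  induction m, hm using Nat.le_induction with
  | base => simp
  | succ m hm ih =>
    have tail_dvd : X ^ (n + d) ∣ a * q ^ m := by
      rw [add_comm, pow_add]
      exact mul_dvd_mul ha ((pow_dvd_pow X hm).trans (pow_dvd_pow_of_dvd hq m))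
    rw [qPochhammer_succ, mul_sub, mul_one, sub_right_comm]
    exact dvd_sub ih (tail_dvd.mul_left _)

lemma isUnit_qPochhammerInf (hq : X ∣ q) {a : R⟦X⟧} (ha : X ∣ a) :
    IsUnit (qPochhammerInf a q) := by
  have h := X_pow_dvd_qPochhammerInf_sub (a := a) (d := 1) hq (by rwa [pow_one]) 0
  rw [qPochhammer_zero, zero_add, pow_one, X_dvd_iff, map_sub, sub_eq_zero, map_one] at h
  rw [isUnit_iff_constantCoeff, h]
  exact isUnit_one

lemma X_pow_dvd_qPochhammerInf_mul_gaussBinom_sub_one (hq : X ∣ q) {a b c : ℕ} (ha : c ≤ a)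
    (hb : c ≤ b) : X ^ (c + 1) ∣ qPochhammerInf q q * gaussBinom q (a + b) a - 1 := by
  have approx {n : ℕ} (hn : c ≤ n) : X ^ (c + 1) ∣ qPochhammerInf q q - qPochhammer q q n :=
    (pow_dvd_pow X (by omega)).trans
      (X_pow_dvd_qPochhammerInf_sub (d := 1) hq (by rwa [pow_one]) n)
  rw [← (isUnit_qPochhammerInf hq hq).dvd_mul_left]
  have split : qPochhammerInf q q * (qPochhammerInf q q * gaussBinom q (a + b) a - 1) =
      gaussBinom q (a + b) a * qPochhammerInf q q * (qPochhammerInf q q - qPochhammer q q a) +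
      gaussBinom q (a + b) a * qPochhammer q q a * (qPochhammerInf q q - qPochhammer q q b) -
      (qPochhammerInf q q - qPochhammer q q (a + b)) := by
    linear_combination gaussBinom_mul_qPochhammer q a b
  rw [split]
  exact dvd_sub (dvd_add ((approx ha).mul_left _) ((approx hb).mul_left _)) (approx (by omega))

theorem tendsto_qPochhammerInf_mul_sum_gaussBinom (hq : X ∣ q) {c : ℤ → R⟦X⟧}
    (hc : ∀ k, X ^ (k.natAbs - 1) ∣ c k) :
    Tendsto (fun n : ℕ ↦ qPochhammerInf q q *
        ∑ j ∈ range (n + n + 1), gaussBinom q (n + n) j * c (j - n))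
      atTop (𝓝 (∑' k, c k)) := by
  have partial_sums : Tendsto (fun n : ℕ ↦ ∑ k ∈ Icc (-n : ℤ) n, c k) atTop (𝓝 (∑' k, c k)) :=
    (summable_of_X_pow_natAbs_dvd hc).hasSum.comp tendsto_Icc_neg
  have reindex (n : ℕ) : ∑ k ∈ Icc (-n : ℤ) n, c k = ∑ j ∈ range (n + n + 1), c (j - n) := by
    refine sum_nbij' (fun k ↦ (k + n).toNat) (fun j ↦ j - n) ?_ ?_ ?_ ?_ ?_ <;>
      intro k hk <;> simp only [mem_Icc, mem_range] at hk ⊢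
    all_goals grind
  have term_dvd (n j : ℕ) (hj : j ∈ range (n + n + 1)) :
      X ^ n ∣ qPochhammerInf q q * (gaussBinom q (n + n) j * c (j - n)) - c (j - n) := by
    rw [mem_range] at hj
    obtain ⟨i, hi⟩ := Nat.exists_eq_add_of_le (Nat.lt_succ_iff.1 hj)
    have h := mul_dvd_mul (X_pow_dvd_qPochhammerInf_mul_gaussBinom_sub_one hq
      (min_le_left j i) (min_le_right j i)) (hc (j - n))
    rw [← pow_add, ← hi] at h
    rw [← mul_assoc, ← sub_one_mul]
    exact (pow_dvd_pow X (by omega)).trans h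
  have error_tendsto : Tendsto (fun n : ℕ ↦ ∑ j ∈ range (n + n + 1),
      (qPochhammerInf q q * (gaussBinom q (n + n) j * c (j - n)) - c (j - n))) atTop (𝓝 0) :=
    tendsto_of_X_pow_dvd_sub fun n ↦ by rw [sub_zero]; exact dvd_sum (term_dvd n)
  have h := partial_sums.add error_tendsto
  rw [add_zero] at h
  refine h.congr fun n ↦ ?_
  rw [reindex, sum_sub_distrib, add_sub_cancel, mul_sum]

end InfiniteProduct

/-! ### Theta series -/

lemma hasSum_int_even_add_odd {M : Type*} [AddCommMonoid M] [TopologicalSpace M] [ContinuousAdd M]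
    {f : ℤ → M} {s t : M} (hs : HasSum (fun k ↦ f (2 * k)) s)
    (ht : HasSum (fun k ↦ f (2 * k + 1)) t) : HasSum f (s + t) := by
  have double_injective : Function.Injective fun k : ℤ ↦ 2 * k :=
    mul_right_injective₀ two_ne_zero
  refine (double_injective.hasSum_range_iff.2 hs).add_isCompl ?_
    (((add_left_injective 1).comp double_injective).hasSum_range_iff.2 ht)
  simpa [Function.comp_def] using Int.isCompl_even_odd

lemma natAbs_sub_one_le_triangular (k : ℤ) : k.natAbs - 1 ≤ triangular k := by
  have htri := two_mul_triangular k
  rcases k.natAbs.eq_zero_or_pos with h0 | hpos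
  · rw [h0]
    exact Nat.zero_le _
  · zify [hpos]
    rcases abs_cases k with ⟨habs, _⟩ | ⟨habs, _⟩ <;> rw [habs] <;> nlinarith [sq_nonneg (k + 1)]

lemma X_pow_dvd_thetaTerm {a b : R⟦X⟧} (hab : X ∣ a * b) (k : ℤ) :
    X ^ (k.natAbs - 1) ∣ thetaTerm a b k := by
  have h : (a * b) ^ (k.natAbs - 1) ∣ thetaTerm a b k := by
    rw [mul_pow]
    refine mul_dvd_mul (pow_dvd_pow a (natAbs_sub_one_le_triangular k)) (pow_dvd_pow b ?_)
    simpa using natAbs_sub_one_le_triangular (-k)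
  exact (pow_dvd_pow_of_dvd hab _).trans h

section Theta

variable [TopologicalSpace R]

/-- Ramanujan's theta series `f(a, b) = ∑ a ^ (k (k + 1) / 2) * b ^ (k (k - 1) / 2)`, the sum being
over all integers `k`. It is meaningful when `X ∣ a * b`. -/
noncomputable def ramanujanTheta (a b : R⟦X⟧) : R⟦X⟧ := ∑' k, thetaTerm a b k

/-- The theta series `φ(q) = ∑ q ^ (k ^ 2)`, the sum being over all integers `k`. -/
noncomputable def phi (q : R⟦X⟧) : R⟦X⟧ := ramanujanTheta q q

/-- The theta series `ψ(q) = ∑ q ^ (k (k + 1) / 2)`, the sum being over the natural numbers `k`;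
it is encoded as `f(q, q ^ 3)`, whose exponents `k (2 k - 1)` run through the triangular numbers. -/
noncomputable def psi (q : R⟦X⟧) : R⟦X⟧ := ramanujanTheta q (q ^ 3)

lemma hasSum_ramanujanTheta {a b : R⟦X⟧} (hab : X ∣ a * b) :
    HasSum (thetaTerm a b) (ramanujanTheta a b) :=
  (summable_of_X_pow_natAbs_dvd (X_pow_dvd_thetaTerm hab)).hasSum

variable [IsTopologicalRing R] [T2Space R]

theorem ramanujanTheta_eq_qPochhammerInf {a b : R⟦X⟧} (hab : X ∣ a * b) :
    ramanujanTheta a b = qPochhammerInf (-a) (a * b) * qPochhammerInf (-b) (a * b) *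
      qPochhammerInf (a * b) (a * b) := by
  refine tendsto_nhds_unique
    (tendsto_qPochhammerInf_mul_sum_gaussBinom hab (X_pow_dvd_thetaTerm hab)) ?_
  simp only [← qPochhammer_mul_qPochhammer_eq_sum]
  rw [mul_comm (qPochhammerInf (-a) (a * b) * _)]
  exact ((tendsto_qPochhammer hab (-a)).mul (tendsto_qPochhammer hab (-b))).const_mul
    (qPochhammerInf (a * b) (a * b))

variable {q : R⟦X⟧}

theorem hasSum_neg_qPochhammerInf_pow_three (hq : X ∣ q) :
    HasSum (fun k : ℤ ↦ (k : R⟦X⟧) * thetaTerm (-1) (-q) k) (-qPochhammerInf q q ^ 3) := by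
  have terms_dvd (k : ℤ) : X ^ (k.natAbs - 1) ∣ (k : R⟦X⟧) * thetaTerm (-1) (-q) k :=
    (X_pow_dvd_thetaTerm (by rwa [neg_mul_neg, one_mul]) k).mul_left _
  have cube := ((tendsto_qPochhammer hq q).mul
    ((tendsto_add_atTop_iff_nat 1).2 (tendsto_qPochhammer hq q))).const_mul (qPochhammerInf q q)
  simp only [qPochhammer_mul_qPochhammer_succ_eq_neg_sum, mul_neg] at cube
  have tsum_eq := tendsto_nhds_unique ((tendsto_add_atTop_iff_nat 1).2
    (tendsto_qPochhammerInf_mul_sum_gaussBinom hq terms_dvd)).neg cube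
  rw [pow_three, ← tsum_eq, neg_neg]
  exact (summable_of_X_pow_natAbs_dvd terms_dvd).hasSum

lemma qPochhammerInf_eq_mul_even_odd (hq : X ∣ q) (a : R⟦X⟧) :
    qPochhammerInf a q = qPochhammerInf a (q ^ 2) * qPochhammerInf (a * q) (q ^ 2) := by
  have hq2 : X ∣ q ^ 2 := dvd_pow hq two_ne_zero
  refine (hasProd_qPochhammerInf hq a).unique (HasProd.even_mul_odd ?_ ?_)
  · simpa only [pow_mul] using hasProd_qPochhammerInf hq2 a
  · simpa only [pow_succ', pow_mul, mul_assoc] using hasProd_qPochhammerInf hq2 (a * q)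

lemma qPochhammerInf_mul_neg (hq : X ∣ q) (a : R⟦X⟧) :
    qPochhammerInf a q * qPochhammerInf (-a) q = qPochhammerInf (a ^ 2) (q ^ 2) := by
  refine ((hasProd_qPochhammerInf hq a).mul (hasProd_qPochhammerInf hq (-a))).unique ?_
  convert! hasProd_qPochhammerInf (dvd_pow hq two_ne_zero) (a ^ 2) using 2 with i
  ring

lemma qPochhammerInf_neg_one (hq : X ∣ q) :
    qPochhammerInf (-1) q = 2 * qPochhammerInf (-q) q := by
  refine tendsto_nhds_unique ((tendsto_add_atTop_iff_nat 1).2 (tendsto_qPochhammer hq (-1))) ?_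
  simp only [qPochhammer_succ', sub_neg_eq_add, one_add_one_eq_two, neg_one_mul]
  exact (tendsto_qPochhammer hq _).const_mul 2

lemma qPochhammerInf_neg_mul_qPochhammerInf_sq (hq : X ∣ q) :
    qPochhammerInf (-q) q * qPochhammerInf q (q ^ 2) = 1 := by
  have hsq := qPochhammerInf_mul_neg hq q
  have hsplit := qPochhammerInf_eq_mul_even_odd hq q
  rw [← pow_two] at hsplit
  have hunit := isUnit_qPochhammerInf hq hq
  refine hunit.mul_left_cancel ?_
  linear_combination qPochhammerInf q (q ^ 2) * hsq - hsplit

lemma phi_eq_qPochhammerInf (hq : X ∣ q) :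
    phi q = qPochhammerInf (-q) (q ^ 2) ^ 2 * qPochhammerInf (q ^ 2) (q ^ 2) := by
  rw [phi, ramanujanTheta_eq_qPochhammerInf (hq.mul_left q), ← pow_two, ← pow_two]

lemma psi_eq_qPochhammerInf (hq : X ∣ q) :
    psi q = qPochhammerInf (-q) (q ^ 2) * qPochhammerInf (q ^ 4) (q ^ 4) := by
  rw [psi, ramanujanTheta_eq_qPochhammerInf (hq.mul_right _), ← pow_succ',
    qPochhammerInf_eq_mul_even_odd (dvd_pow hq two_ne_zero) (-q)]
  congr 3 <;> ring

lemma phi_neg (hq : X ∣ q) :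
    phi (-q) = qPochhammerInf q (q ^ 2) * qPochhammerInf q q := by
  rw [phi_eq_qPochhammerInf hq.neg_right, neg_neg, neg_sq, qPochhammerInf_eq_mul_even_odd hq q,
    ← pow_two]
  ring

lemma isUnit_phi (hq : X ∣ q) : IsUnit (phi q) := by
  have hq2 : X ∣ q ^ 2 := dvd_pow hq two_ne_zero
  rw [phi_eq_qPochhammerInf hq]
  exact ((isUnit_qPochhammerInf hq2 hq.neg_right).pow 2).mul (isUnit_qPochhammerInf hq2 hq2)

theorem phi_mul_phi_neg (hq : X ∣ q) : phi q * phi (-q) = phi (-q ^ 2) ^ 2 := by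
  have hq2 : X ∣ q ^ 2 := dvd_pow hq two_ne_zero
  rw [phi_eq_qPochhammerInf hq, phi_eq_qPochhammerInf hq.neg_right, phi_neg hq2, neg_neg, neg_sq,
    ← qPochhammerInf_mul_neg hq2]
  ring

theorem psi_sq_mul_phi_neg (hq : X ∣ q) :
    psi q ^ 2 * phi (-q) = qPochhammerInf (q ^ 2) (q ^ 2) ^ 3 := by
  have hq2 : X ∣ q ^ 2 := dvd_pow hq two_ne_zero
  have hprod : qPochhammerInf q (q ^ 2) * qPochhammerInf (-q) (q ^ 2) =
      qPochhammerInf (q ^ 2) (q ^ 4) := by rw [qPochhammerInf_mul_neg hq2, ← pow_mul]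
  have hsplit : qPochhammerInf (q ^ 2) (q ^ 2) =
      qPochhammerInf (q ^ 2) (q ^ 4) * qPochhammerInf (q ^ 4) (q ^ 4) := by
    rw [qPochhammerInf_eq_mul_even_odd hq2 (q ^ 2), ← pow_mul, ← pow_add]
  calc psi q ^ 2 * phi (-q)
      = (qPochhammerInf q (q ^ 2) * qPochhammerInf (-q) (q ^ 2) *
          qPochhammerInf (q ^ 4) (q ^ 4)) ^ 2 * qPochhammerInf (q ^ 2) (q ^ 2) := by
        rw [psi_eq_qPochhammerInf hq, phi_eq_qPochhammerInf hq.neg_right, neg_neg, neg_sq]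
        ring
    _ = qPochhammerInf (q ^ 2) (q ^ 2) ^ 3 := by rw [hprod, ← hsplit]; ring

theorem ramanujanTheta_one_right (hq : X ∣ q) : ramanujanTheta q 1 = 2 * psi q := by
  have hprod : qPochhammerInf (q ^ 2) (q ^ 2) * qPochhammerInf (-q ^ 2) (q ^ 2) =
      qPochhammerInf (q ^ 4) (q ^ 4) := by
    rw [qPochhammerInf_mul_neg (dvd_pow hq two_ne_zero), ← pow_mul]
  have hsplit : qPochhammerInf (-q) q =
      qPochhammerInf (-q) (q ^ 2) * qPochhammerInf (-q ^ 2) (q ^ 2) := by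
    rw [qPochhammerInf_eq_mul_even_odd hq (-q), neg_mul, ← pow_two]
  calc ramanujanTheta q 1
      = 2 * qPochhammerInf (-q) q * (qPochhammerInf q q * qPochhammerInf (-q) q) := by
        rw [ramanujanTheta_eq_qPochhammerInf (hq.mul_right 1), mul_one, qPochhammerInf_neg_one hq]
        ring
    _ = 2 * qPochhammerInf (-q) (q ^ 2) *
          (qPochhammerInf (q ^ 2) (q ^ 2) * qPochhammerInf (-q ^ 2) (q ^ 2)) := by
        rw [qPochhammerInf_mul_neg hq, hsplit]
        ring
    _ = 2 * psi q := by rw [hprod, psi_eq_qPochhammerInf hq]; ring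

theorem phi_eq_phi_pow_four_add (hq : X ∣ q) :
    phi q = phi (q ^ 4) + 2 * q * psi (q ^ 8) := by
  have even_terms (k : ℤ) : thetaTerm q q (2 * k) = thetaTerm (q ^ 4) (q ^ 4) k := by
    simp only [thetaTerm_self, ← pow_mul, Int.natAbs_mul, mul_pow]
    norm_num
  have odd_terms (k : ℤ) : thetaTerm q q (2 * k + 1) = q * thetaTerm (q ^ 8) 1 k := by
    rw [thetaTerm_self, thetaTerm, one_pow, mul_one, ← pow_mul, ← pow_succ']
    congr 1
    zify
    linarith [two_mul_triangular k, sq_abs (2 * k + 1)]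
  have hq4 : X ∣ q ^ 4 * q ^ 4 := (dvd_pow hq four_ne_zero).mul_left _
  have hq8 : X ∣ q ^ 8 := dvd_pow hq (by norm_num)
  refine (hasSum_ramanujanTheta (hq.mul_left q)).unique (hasSum_int_even_add_odd ?_ ?_)
  · simp only [even_terms]
    exact hasSum_ramanujanTheta hq4
  · rw [mul_assoc, mul_left_comm, ← ramanujanTheta_one_right hq8]
    simpa only [odd_terms] using (hasSum_ramanujanTheta (hq8.mul_right 1)).mul_left q

lemma phi_neg_eq_phi_pow_four_sub (hq : X ∣ q) :
    phi (-q) = phi (q ^ 4) - 2 * q * psi (q ^ 8) := by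
  rw [phi_eq_phi_pow_four_add hq.neg_right, Even.neg_pow (by decide), Even.neg_pow (by decide)]
  ring

lemma coeff_qPochhammerInf_X_pow_pow_three {l m : ℕ} (hl : l ≠ 0)
    (hm : ∀ k, m ≠ l * triangular k) :
    coeff m (qPochhammerInf (X ^ l) (X ^ l : R⟦X⟧) ^ 3) = 0 := by
  have hX : X ∣ (X ^ l : R⟦X⟧) := dvd_pow_self X hl
  have term_eq (k : ℤ) : (k : R⟦X⟧) * thetaTerm (-1) (-X ^ l) k =
      C ((k : R) * (-1) ^ triangular k * (-1) ^ triangular (-k)) * X ^ (l * triangular (-k)) := by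
    rw [thetaTerm, neg_pow (X ^ l : R⟦X⟧), ← pow_mul]
    simp [mul_assoc]
  have hsum := (WithPiTopology.hasSum_iff_hasSum_coeff R).1
    (hasSum_neg_qPochhammerInf_pow_three hX) m
  rw [← neg_eq_zero, ← map_neg]
  refine hsum.unique ?_
  convert! hasSum_zero with k
  rw [term_eq, coeff_C_mul, coeff_X_pow, if_neg (hm _), mul_zero]

end Theta

lemma exists_phi_eq_one_add_two_mul [UniformSpace R] [IsUniformAddGroup R]
    [CompleteSpace R] [T2Space R] {q : R⟦X⟧} (hq : X ∣ q) : ∃ s, phi q = 1 + 2 * s := by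
  have even_terms : Function.Even (thetaTerm q q) := fun k ↦ by
    simp only [thetaTerm_self, Int.natAbs_neg]
  refine ⟨∑' k : ℕ+, thetaTerm q q k, (tsum_int_eq_zero_add_two_mul_tsum_pnat even_terms
    (hasSum_ramanujanTheta (hq.mul_left q)).summable).trans ?_⟩
  rw [thetaTerm_self, Int.natAbs_zero, zero_pow two_ne_zero, pow_zero, nsmul_eq_mul, Nat.cast_two]

section Expand

variable [TopologicalSpace R] {l : ℕ}

lemma continuous_expand (hl : l ≠ 0) : Continuous (expand l hl : R⟦X⟧ →ₐ[R] R⟦X⟧) := by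
  refine continuous_iff_continuousAt.2 fun f ↦
    (WithPiTopology.tendsto_iff_coeff_tendsto R _ _ _).2 fun d ↦ ?_
  simp only [coeff_expand]
  split_ifs
  · exact (WithPiTopology.continuous_coeff R _).continuousAt
  · exact tendsto_const_nhds

lemma expand_ramanujanTheta [T2Space R] (hl : l ≠ 0) {a b : R⟦X⟧} (hab : X ∣ a * b) :
    expand l hl (ramanujanTheta a b) = ramanujanTheta (expand l hl a) (expand l hl b) := by
  refine ((hasSum_ramanujanTheta hab).map (expand l hl) (continuous_expand hl)).tsum_eq.symm.trans
    (tsum_congr fun k ↦ ?_)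
  simp only [Function.comp_apply, thetaTerm, map_mul, map_pow]

lemma expand_phi [T2Space R] (hl : l ≠ 0) {q : R⟦X⟧} (hq : X ∣ q) :
    expand l hl (phi q) = phi (expand l hl q) := expand_ramanujanTheta hl (hq.mul_left q)

lemma expand_psi [T2Space R] (hl : l ≠ 0) {q : R⟦X⟧} (hq : X ∣ q) :
    expand l hl (psi q) = psi (expand l hl q) := by
  rw [psi, expand_ramanujanTheta hl (hq.mul_right _), map_pow, psi]

end Expand

/-! ### The generating function of regular overpartitions -/

section GeneratingFunction

lemma mk_regularOverpartitions (j k : ℕ) :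
    (mk fun n ↦ (regularOverpartitions j k n : R)) =
      (mk fun n ↦ (#{lam ∈ Nat.Partition.distincts n | ∀ i ∈ lam.parts, i % k ≠ j} : R)) *
      mk fun n ↦ (#(Nat.Partition.restricted n (· % k ≠ j)) : R) := by
  ext n
  rw [coeff_mul, Nat.sum_antidiagonal_eq_sum_range_succ_mk]
  simp only [coeff_mk, regularOverpartitions, Nat.Partition.restricted, Nat.cast_sum, Nat.cast_mul]

variable [TopologicalSpace R]

lemma hasProd_ite_mod_eq {j k : ℕ} (hj : 0 < j) (hjk : j < k) (a : R⟦X⟧) :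
    HasProd (fun i ↦ if (i + 1) % k = j then 1 - a * X ^ (i + 1) else 1)
      (qPochhammerInf (a * X ^ j) (X ^ k)) := by
  have index_injective : Function.Injective fun i : ℕ ↦ k * i + (j - 1) := fun _ _ h ↦ by
    simpa [(hj.trans hjk).ne'] using h
  refine (index_injective.hasProd_iff fun i hi ↦ if_neg fun h ↦ hi ⟨(i + 1) / k, ?_⟩).1 ?_
  · have := Nat.div_add_mod (i + 1) k
    simp only
    omega
  · convert! hasProd_qPochhammerInf (dvd_pow_self X (hj.trans hjk).ne') (a * X ^ j) using 2 with i
    have succ_index : k * i + (j - 1) + 1 = j + k * i := by omega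
    rw [Function.comp_apply, succ_index, Nat.add_mul_mod_self_left, Nat.mod_eq_of_lt hjk,
      if_pos rfl, pow_add, pow_mul, mul_assoc]

variable [T2Space R]

lemma hasProd_mk_card_distincts_filter (p : ℕ → Prop) [DecidablePred p] :
    HasProd (fun i ↦ if p (i + 1) then 1 + X ^ (i + 1) else 1)
      (mk fun n ↦ (#{lam ∈ Nat.Partition.distincts n | ∀ i ∈ lam.parts, p i} : R)) := by
  convert! Nat.Partition.hasProd_genFun (R := R) fun i c ↦ if p i ∧ c < 2 then 1 else 0 using 1
  · ext1 i
    rw [tsum_eq_single 0 fun c hc ↦ by simp [show ¬ c + 1 < 2 by omega]]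
    split_ifs <;> simp_all
  · ext n
    rw [coeff_mk, Nat.Partition.coeff_genFun, ← Nat.Partition.countRestricted_two,
      Nat.Partition.countRestricted, filter_filter]
    simp_rw [card_filter, Finsupp.prod, prod_boole]
    push_cast
    refine sum_congr rfl fun lam _ ↦ if_congr ?_ rfl rfl
    simp only [Order.lt_two_iff, Multiset.toFinsupp_support, Multiset.mem_toFinset,
      Multiset.toFinsupp_apply]
    grind

variable [IsTopologicalRing R] {j k : ℕ}

lemma mk_card_distincts_mul (hj : 0 < j) (hjk : j < k) :
    (mk fun n ↦ (#{lam ∈ Nat.Partition.distincts n | ∀ i ∈ lam.parts, i % k ≠ j} : R)) *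
      qPochhammerInf (-X ^ j) (X ^ k) = qPochhammerInf (-X) X := by
  rw [← neg_one_mul (X ^ j)]
  refine ((hasProd_mk_card_distincts_filter (R := R) (· % k ≠ j)).mul
    (hasProd_ite_mod_eq hj hjk (-1))).unique ?_
  convert! hasProd_qPochhammerInf dvd_rfl (-X : R⟦X⟧) using 2 with i
  split_ifs <;> simp_all [pow_succ']

lemma mk_card_restricted_mul (hj : 0 < j) (hjk : j < k) :
    (mk fun n ↦ (#(Nat.Partition.restricted n (· % k ≠ j)) : R)) * qPochhammerInf X X =
      qPochhammerInf (X ^ j) (X ^ k) := by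
  have geometric (i : ℕ) : (∑' m : ℕ, (X : R⟦X⟧) ^ ((i + 1) * m)) * (1 - X ^ (i + 1)) = 1 := by
    simp only [pow_mul]
    exact WithPiTopology.tsum_pow_mul_one_sub_of_constantCoeff_eq_zero (by simp)
  refine ((Nat.Partition.hasProd_powerSeriesMk_card_restricted R (· % k ≠ j)).mul
    (hasProd_qPochhammerInf dvd_rfl (X : R⟦X⟧))).unique ?_
  convert! hasProd_ite_mod_eq hj hjk (1 : R⟦X⟧) using 2 with i
  · split_ifs <;> simp_all [← pow_succ']
  · rw [one_mul]

theorem mk_regularOverpartitions_mul (hj : 0 < j) (hjk : j < k) :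
    (mk fun n ↦ (regularOverpartitions j k n : R)) *
        (qPochhammerInf (-X ^ j) (X ^ k) * qPochhammerInf X X) =
      qPochhammerInf (-X) X * qPochhammerInf (X ^ j) (X ^ k) := by
  rw [mk_regularOverpartitions, ← mk_card_distincts_mul hj hjk, ← mk_card_restricted_mul hj hjk]
  ring

theorem mk_regularOverpartitions_mul_phi_mul_phi (hj : 0 < j) :
    (mk fun n ↦ (regularOverpartitions j (2 * j) n : R)) * phi (-X) * phi (-X ^ (2 * j)) =
      phi (-X ^ j) := by
  have hX : X ∣ (X : R⟦X⟧) := dvd_rfl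
  have hY : X ∣ (X ^ j : R⟦X⟧) := dvd_pow_self X hj.ne'
  have hY2 : X ∣ (X ^ j : R⟦X⟧) ^ 2 := dvd_pow hY two_ne_zero
  have gen := mk_regularOverpartitions_mul (R := R) hj (show j < 2 * j by omega)
  have euler := qPochhammerInf_neg_mul_qPochhammerInf_sq hX
  rw [mul_comm 2 j, pow_mul] at gen ⊢
  rw [phi_neg hX, phi_neg hY2, phi_eq_qPochhammerInf hY.neg_right, neg_neg, neg_sq,
    ← qPochhammerInf_mul_neg hY2 (X ^ j)]
  linear_combination (qPochhammerInf X (X ^ 2) * qPochhammerInf (X ^ j) ((X ^ j) ^ 2) *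
      qPochhammerInf ((X ^ j) ^ 2) ((X ^ j) ^ 2)) * gen +
    qPochhammerInf (X ^ j) ((X ^ j) ^ 2) ^ 2 * qPochhammerInf ((X ^ j) ^ 2) ((X ^ j) ^ 2) * euler

end GeneratingFunction

/-! ### Exponents congruent to two modulo four -/

section Dissection

lemma mk_coeff_mul_expand {l r : ℕ} (hl : l ≠ 0) (hr : r < l) (f g : R⟦X⟧) :
    (mk fun m ↦ coeff (l * m + r) (f * expand l hl g)) = (mk fun m ↦ coeff (l * m + r) f) * g := by
  ext m
  rw [coeff_mk, coeff_mul, coeff_mul]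
  symm
  refine sum_of_injOn (fun p ↦ (l * p.1 + r, l * p.2)) ?_ ?_ ?_ ?_
  · rintro ⟨a, b⟩ _ ⟨c, d⟩ _ h
    simpa [hl] using h
  · rintro ⟨a, b⟩ hab
    rw [mem_coe, HasAntidiagonal.mem_antidiagonal] at hab ⊢
    rw [← hab]
    ring
  · rintro ⟨a, b⟩ hab not_mem
    rw [HasAntidiagonal.mem_antidiagonal] at hab
    rw [coeff_expand, if_neg, mul_zero]
    rintro ⟨d, rfl⟩
    have hd : d ≤ m := by
      by_contra! h
      nlinarith
    obtain ⟨c, rfl⟩ := Nat.exists_eq_add_of_le' hd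
    exact not_mem ⟨(c, d), by simp, Prod.ext (by linarith) rfl⟩
  · rintro ⟨a, b⟩ _
    rw [coeff_mk, coeff_expand, if_pos (dvd_mul_right l b), Nat.mul_div_cancel_left b hl.bot_lt]

lemma mk_coeff_X_pow_mul_expand {l r s : ℕ} (hl : l ≠ 0) (hr : r < l) (hs : s < l) (g : R⟦X⟧) :
    (mk fun m ↦ coeff (l * m + r) (X ^ s * expand l hl g)) = if r = s then g else 0 := by
  have exponent_eq (m : ℕ) : l * m + r = s ↔ r = s ∧ m = 0 := by
    rcases m with _ | m
    · simp
    · simp only [Nat.mul_add_one]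
      omega
  have monomial_eq : (mk fun m ↦ coeff (l * m + r) (X ^ s : R⟦X⟧)) = if r = s then 1 else 0 := by
    ext m
    rw [coeff_mk, coeff_X_pow, if_congr (exponent_eq m) rfl rfl, ite_and]
    split_ifs with h <;> simp_all [coeff_one]
  rw [mk_coeff_mul_expand hl hr, monomial_eq, ite_mul, one_mul, zero_mul]

variable [TopologicalSpace R] [IsTopologicalRing R] [T2Space R]

-- Multiplying `φ(-X) = f - 2 X p`, where `f = φ(X⁴)` and `p = ψ(X⁸)`, by `(f + 2 X p)` and by
-- `(f² + 4 X² p²)` gives `f⁴ - 16 X⁴ p⁴`, a series in `X⁴`.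
lemma mk_regularOverpartitions_four_eight_mul :
    (mk fun n ↦ (regularOverpartitions 4 8 n : R)) *
        (phi (-X ^ 8) * (phi (X ^ 4) ^ 4 - 16 * X ^ 4 * psi (X ^ 8) ^ 4)) =
      phi (-X ^ 4) * phi (X ^ 4) ^ 3 + X * (2 * phi (-X ^ 4) * phi (X ^ 4) ^ 2 * psi (X ^ 8)) +
      X ^ 2 * (4 * phi (-X ^ 8) ^ 2 * psi (X ^ 8) ^ 2) +
      X ^ 3 * (8 * phi (-X ^ 4) * psi (X ^ 8) ^ 3) := by
  have gen := mk_regularOverpartitions_mul_phi_mul_phi (R := R) four_pos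
  have hneg := phi_neg_eq_phi_pow_four_sub (dvd_refl (X : R⟦X⟧))
  have hprod := phi_mul_phi_neg (dvd_pow_self (X : R⟦X⟧) four_ne_zero)
  norm_num only [← pow_mul] at gen hprod
  rw [hneg] at gen
  linear_combination (phi (X ^ 4) + 2 * X * psi (X ^ 8)) *
    (phi (X ^ 4) ^ 2 + 4 * X ^ 2 * psi (X ^ 8) ^ 2) * gen + 4 * X ^ 2 * psi (X ^ 8) ^ 2 * hprod

lemma mk_regularOverpartitions_four_eight_mul_expand :
    (mk fun n ↦ (regularOverpartitions 4 8 n : R)) * expand 4 four_ne_zero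
        (phi (-X ^ 2) * (phi X ^ 4 - 16 * X * psi (X ^ 2) ^ 4)) =
      X ^ 0 * expand 4 four_ne_zero (phi (-X) * phi X ^ 3) +
      X ^ 1 * expand 4 four_ne_zero (2 * phi (-X) * phi X ^ 2 * psi (X ^ 2)) +
      X ^ 2 * expand 4 four_ne_zero (4 * phi (-X ^ 2) ^ 2 * psi (X ^ 2) ^ 2) +
      X ^ 3 * expand 4 four_ne_zero (8 * phi (-X) * psi (X ^ 2) ^ 3) := by
  have hX : X ∣ (X : R⟦X⟧) := dvd_rfl
  have hX2 : X ∣ (X ^ 2 : R⟦X⟧) := dvd_pow_self X two_ne_zero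
  simp only [map_mul, map_sub, map_pow, map_neg, map_ofNat, expand_X, expand_phi _ hX,
    expand_phi _ hX.neg_right, expand_phi _ hX2.neg_right, expand_psi _ hX2, ← pow_mul, pow_zero,
    one_mul, pow_one]
  exact mk_regularOverpartitions_four_eight_mul

theorem mk_regularOverpartitions_four_mul_add_two :
    (mk fun m ↦ (regularOverpartitions 4 8 (4 * m + 2) : R)) *
        (phi X ^ 4 - 16 * X * psi (X ^ 2) ^ 4) =
      4 * qPochhammerInf (X ^ 4) (X ^ 4) ^ 3 := by
  have hX2 : X ∣ (X ^ 2 : R⟦X⟧) := dvd_pow_self X two_ne_zero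
  have component : (mk fun m ↦ (regularOverpartitions 4 8 (4 * m + 2) : R)) *
      (phi (-X ^ 2) * (phi X ^ 4 - 16 * X * psi (X ^ 2) ^ 4)) =
        4 * phi (-X ^ 2) ^ 2 * psi (X ^ 2) ^ 2 := by
    have h2 : 2 < 4 := by decide
    have hsection := mk_coeff_mul_expand four_ne_zero h2
      (mk fun n ↦ (regularOverpartitions 4 8 n : R))
    simp only [coeff_mk] at hsection
    have mk_add (f g : ℕ → R) : (mk fun m ↦ f m + g m) = mk f + mk g := rfl
    rw [← hsection, mk_regularOverpartitions_four_eight_mul_expand]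
    simp only [map_add, mk_add]
    rw [mk_coeff_X_pow_mul_expand _ h2 (by decide), mk_coeff_X_pow_mul_expand _ h2 (by decide),
      mk_coeff_X_pow_mul_expand _ h2 (by decide), mk_coeff_X_pow_mul_expand _ h2 (by decide)]
    simp
  have hcube := psi_sq_mul_phi_neg hX2
  rw [← pow_mul] at hcube
  refine (isUnit_phi hX2.neg_right).mul_left_cancel ?_
  linear_combination component + 4 * phi (-X ^ 2) * hcube

end Dissection

theorem regularOverpartitions_four_mul_add_two_modEq (m : ℕ) :
    (regularOverpartitions 4 8 (4 * m + 2) : ℤ) ≡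
      4 * coeff m (qPochhammerInf (X ^ 4) (X ^ 4 : ℤ⟦X⟧) ^ 3) [ZMOD 32] := by
  set P : ℤ⟦X⟧ := mk fun m ↦ (regularOverpartitions 4 8 (4 * m + 2) : ℤ)
  set J : ℤ⟦X⟧ := qPochhammerInf (X ^ 4) (X ^ 4) ^ 3
  obtain ⟨s, hs⟩ := exists_phi_eq_one_add_two_mul (dvd_refl (X : ℤ⟦X⟧))
  obtain ⟨w, hw⟩ : ∃ w, phi X ^ 4 - 16 * X * psi (X ^ 2) ^ 4 = 1 + 8 * w :=
    ⟨s + 3 * s ^ 2 + 4 * s ^ 3 + 2 * s ^ 4 - 2 * X * psi (X ^ 2) ^ 4, by rw [hs]; ring⟩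
  have key : P * (1 + 8 * w) = 4 * J := by
    rw [← hw]
    exact mk_regularOverpartitions_four_mul_add_two
  have congruence : C 4 * J - P = C 32 * (w * J - 2 * w ^ 2 * P) := by
    simp only [map_ofNat]
    linear_combination (8 * w - 1) * key
  have coeff_congruence := congrArg (coeff m) congruence
  rw [map_sub, coeff_C_mul, coeff_C_mul, coeff_mk] at coeff_congruence
  exact Int.modEq_iff_dvd.2 ⟨_, coeff_congruence⟩

lemma not_isSquare_of_mod_three_eq_two {v : ℕ} (hv : v % 3 = 2) : ¬IsSquare v := by
  rintro ⟨r, rfl⟩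
  rw [Nat.mul_mod] at hv
  have := Nat.mod_lt r three_pos
  interval_cases r % 3 <;> omega

lemma isSquare_of_isSquare_sq_mul {u v : ℕ} (hu : u ≠ 0) (h : IsSquare (u ^ 2 * v)) :
    IsSquare v := by
  obtain ⟨r, hr⟩ := h
  rw [← pow_two] at hr
  obtain ⟨t, rfl⟩ := (Nat.pow_dvd_pow_iff two_ne_zero).1 (Dvd.intro v hr)
  rw [mul_pow, mul_right_inj' (pow_ne_zero 2 hu)] at hr
  exact ⟨t, hr.trans (pow_two t)⟩

end QSeries

open QSeries

theorem stmt_4_general {N : ℕ} (hodd : Odd N) (hN : ¬IsSquare N) :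
    32 ∣ regularOverpartitions 4 8 (2 * N) := by
  obtain ⟨m, rfl⟩ := hodd
  have hm (k : ℤ) : m ≠ 4 * triangular k := fun h ↦ by
    have : ((2 * m + 1 : ℕ) : ℤ) = (2 * k + 1) * (2 * k + 1) := by
      rw [h]
      push_cast
      linarith [two_mul_triangular k]
    exact hN (Int.isSquare_natCast_iff.1 ⟨2 * k + 1, this⟩)
  have h := regularOverpartitions_four_mul_add_two_modEq m
  rw [coeff_qPochhammerInf_X_pow_pow_three four_ne_zero hm, mul_zero, Int.modEq_zero_iff_dvd] at h
  rw [show 2 * (2 * m + 1) = 4 * m + 2 by ring]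
  exact_mod_cast h

theorem stmt_4 (n α β γ : ℕ) :
    32 ∣ regularOverpartitions 4 8
        (16 * 3 ^ (4 * α + 1) * 5 ^ (4 * β) * 7 ^ (4 * γ) * n
          + 34 * 3 ^ (4 * α) * 5 ^ (4 * β) * 7 ^ (4 * γ)) := by
  set u := 3 ^ (2 * α) * 5 ^ (2 * β) * 7 ^ (2 * γ) with hu
  have odd_u : Odd u := .mul (.mul (.pow (by decide)) (.pow (by decide))) (.pow (by decide))
  have not_square : ¬IsSquare (u ^ 2 * (24 * n + 17)) := fun h ↦
    not_isSquare_of_mod_three_eq_two (by omega) (isSquare_of_isSquare_sq_mul odd_u.pos.ne' h)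
  convert stmt_4_general (odd_u.pow.mul ⟨12 * n + 8, by ring⟩) not_square using 2
  rw [hu]
  ring
end

section
/- For all integers n ≥ 0, α ≥ 0, β ≥ 0, γ ≥ 0 and every j ∈ {1, 2, 3, 4}, the number of (4,8)-regular overpartitions satisfies p̄_{4,8}( 16 · 3^{4α} · 5^{4β+1} · 7^{4γ} · (5n + j) + 2 · 3^{4α} · 5^{4β+2} · 7^{4γ} ) ≡ 0 (mod 32). -/
/-!
Write `φ(q) = ∑ q ^ (k ^ 2)` over all integers `k`, and let `G` be the generating function of the
`(4,8)`-regular overpartitions. Gauss's identity `φ(-q) = ∏ (1 - q ^ i) / (1 + q ^ i)` gives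
`G * φ(-q) * φ(-q ^ 8) = φ(-q ^ 4)`, and `φ(q) * φ(-q) = φ(-q ^ 2) ^ 2` turns this into
`G * φ(-q ^ 8) ^ 7 = φ(q) * φ(q ^ 2) ^ 2 * φ(q ^ 4) ^ 3`. As `φ` is `1` modulo `2`, its powers are
simple modulo powers of `2`, and for odd `M` the `2 * M`-th coefficient of `G` is determined modulo
`32` by whether `M` is a square and by the parities of the numbers of positive solutions of
`x ^ 2 + 8 * y ^ 2 = M` and `x ^ 2 + 16 * y ^ 2 = M`.

If `M` is `1` modulo `8` and not of the form `x ^ 2 + 2 * y ^ 2`, only the last parity matters, and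
Zagier's involution expresses it through the number `d(M)` of divisors: the coefficient is
`8 * d(M)` modulo `32`. A prime that is `5` or `7` modulo `8` and divides `M` to an exact odd power
excludes `x ^ 2 + 2 * y ^ 2 = M` and forces `4 ∣ d(M)`.
-/

open PowerSeries PowerSeries.WithPiTopology Filter Topology Finset

namespace RegularOverpartitions

section Dilation

variable {R : Type*} [CommRing R]

/-- The substitution `f(q) ↦ f(q ^ d)` on formal power series, with the condition `d ≠ 0` carried
by an instance so that numerals need no proof. -/
noncomputable abbrev dilate (d : ℕ) [NeZero d] : R⟦X⟧ →ₐ[R] R⟦X⟧ := expand d (NeZero.ne d)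

theorem dilate_dilate {d e m : ℕ} [NeZero d] [NeZero e] [NeZero m] (h : d * e = m) (f : R⟦X⟧) :
    dilate d (dilate e f) = dilate m f := by
  subst h
  exact (expand_mul d (NeZero.ne d) e (NeZero.ne e) f).symm

/-- `f` only involves powers `q ^ n` with `n ≡ r` modulo `d`. -/
def IsSupportedMod {d : ℕ} (r : ZMod d) (f : R⟦X⟧) : Prop :=
  ∀ n : ℕ, (n : ZMod d) ≠ r → coeff n f = 0

theorem IsSupportedMod.mul {d : ℕ} {r s : ZMod d} {f g : R⟦X⟧} (hf : IsSupportedMod r f)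
    (hg : IsSupportedMod s g) : IsSupportedMod (r + s) (f * g) := by
  intro n hn
  rw [coeff_mul]
  refine sum_eq_zero fun ij hij ↦ ?_
  rw [← mem_antidiagonal.mp hij, Nat.cast_add] at hn
  by_cases hi : (ij.1 : ZMod d) = r
  · rw [hg _ fun hj ↦ hn (by rw [hi, hj]), mul_zero]
  · rw [hf _ hi, zero_mul]

theorem isSupportedMod_dilate {d e : ℕ} [NeZero e] (h : d ∣ e) (f : R⟦X⟧) :
    IsSupportedMod (0 : ZMod d) (dilate e f) := by
  intro n hn
  rw [Ne, ZMod.natCast_eq_zero_iff] at hn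
  exact coeff_expand_of_not_dvd e (NeZero.ne e) f fun he ↦ hn (h.trans he)

theorem IsSupportedMod.coeff_eq_zero_of_odd {f : R⟦X⟧} (hf : IsSupportedMod (0 : ZMod 2) f)
    {n : ℕ} (hn : Odd n) : coeff n f = 0 :=
  hf n (by rw [ZMod.natCast_eq_one_iff_odd.mpr hn]; decide)

theorem IsSupportedMod.coeff_eq_zero_of_even {f : R⟦X⟧} (hf : IsSupportedMod (1 : ZMod 2) f)
    {n : ℕ} (hn : Even n) : coeff n f = 0 :=
  hf n (by rw [ZMod.natCast_eq_zero_iff_even.mpr hn]; decide)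

variable [TopologicalSpace R]

theorem continuous_of_continuous_coeff {Y : Type*} [TopologicalSpace Y] {F : Y → R⟦X⟧}
    (h : ∀ n, Continuous fun y ↦ coeff n (F y)) : Continuous F := by
  refine continuous_iff_continuousAt.mpr fun y ↦ ?_
  exact (tendsto_iff_coeff_tendsto R _ _ _).mpr fun n ↦ (h n).tendsto y

theorem continuous_dilate (d : ℕ) [NeZero d] : Continuous (dilate d : R⟦X⟧ →ₐ[R] R⟦X⟧) := by
  refine continuous_of_continuous_coeff fun n ↦ ?_
  simp only [coeff_expand]
  split_ifs
  · exact continuous_coeff R _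
  · exact continuous_const

theorem continuous_evalNegHom [IsTopologicalRing R] : Continuous (evalNegHom : R⟦X⟧ →+* R⟦X⟧) := by
  refine continuous_of_continuous_coeff fun n ↦ ?_
  simp only [evalNegHom, coeff_rescale]
  exact continuous_const.mul (continuous_coeff R n)

theorem tendsto_zero_of_X_pow_dvd {f : ℕ → R⟦X⟧} (h : ∀ n, X ^ n ∣ f n) :
    Tendsto f atTop (𝓝 0) := by
  refine (tendsto_iff_coeff_tendsto R _ _ _).mpr fun d ↦ tendsto_const_nhds.congr' ?_
  filter_upwards [eventually_gt_atTop d] with n hn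
  rw [X_pow_dvd_iff.mp (h n) d hn, map_zero]

end Dilation

section PartsProduct

variable {R : Type*} [CommRing R]

/-- The factor at `i + 1` of the product defining `partsProd`. -/
noncomputable def partsFactor (p : ℕ → Prop) [DecidablePred p] (c : R) (i : ℕ) : R⟦X⟧ :=
  if p (i + 1) then 1 + C c * X ^ (i + 1) else 1

theorem X_pow_succ_dvd_partsFactor_sub_one (p : ℕ → Prop) [DecidablePred p] (c : R) (i : ℕ) :
    X ^ (i + 1) ∣ partsFactor p c i - 1 := by
  unfold partsFactor
  split_ifs <;> simp

variable [TopologicalSpace R]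

/-- The product of `1 + c * q ^ i` over the positive integers `i` satisfying `p`. For `c = 1` it
generates the partitions into distinct parts satisfying `p`; for `c = -1` its inverse generates all
partitions into parts satisfying `p`. -/
noncomputable def partsProd (p : ℕ → Prop) [DecidablePred p] (c : R) : R⟦X⟧ :=
  ∏' i, partsFactor p c i

/-- The product of `1 + c * q ^ i` over all positive integers `i`. -/
noncomputable abbrev eulerProd (c : R) : R⟦X⟧ := partsProd (fun _ ↦ True) c

theorem hasProd_partsProd (p : ℕ → Prop) [DecidablePred p] (c : R) :
    HasProd (partsFactor p c) (partsProd p c) := by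
  have h_order : Tendsto (fun i ↦ (partsFactor p c i - 1).order) atTop (𝓝 ⊤) := by
    refine ENat.tendsto_nhds_top_iff_natCast_lt.mpr fun n ↦ ?_
    filter_upwards [eventually_ge_atTop n] with i hi
    have h_le := nat_le_order _ _ (X_pow_dvd_iff.mp (X_pow_succ_dvd_partsFactor_sub_one p c i))
    exact lt_of_lt_of_le (by exact_mod_cast Nat.lt_succ_of_le hi) h_le
  have h_hasProd := (multipliable_one_add_of_tendsto_order_atTop_nhds_top (R := R) h_order).hasProd
  simp only [add_sub_cancel] at h_hasProd
  exact h_hasProd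

variable [T2Space R]

theorem constantCoeff_partsProd (p : ℕ → Prop) [DecidablePred p] (c : R) :
    constantCoeff (partsProd p c) = 1 := by
  have h_factor : constantCoeff ∘ partsFactor p c = fun _ ↦ 1 := by
    ext i
    simp only [Function.comp_apply, partsFactor]
    split_ifs <;> simp
  have h_map := (hasProd_partsProd p c).map (constantCoeff (R := R)) (continuous_constantCoeff R)
  rw [h_factor] at h_map
  exact h_map.unique hasProd_one

theorem dilate_eulerProd (d : ℕ) [NeZero d] (c : R) :
    dilate d (eulerProd c) = partsProd (d ∣ ·) c := by
  have hd : 0 < d := Nat.pos_of_neZero d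
  have h_pred (i : ℕ) : d * (i + 1) - 1 + 1 = d * (i + 1) := Nat.sub_add_cancel (by nlinarith)
  have h_inj : Function.Injective fun i : ℕ ↦ d * (i + 1) - 1 := fun i j hij ↦ by
    have h_mul : d * (i + 1) = d * (j + 1) := by
      rw [← h_pred i, ← h_pred j]
      exact congrArg (· + 1) hij
    exact Nat.succ_injective (Nat.eq_of_mul_eq_mul_left hd h_mul)
  refine ((hasProd_partsProd _ c).map (dilate d) (continuous_dilate d)).unique ?_
  convert! (h_inj.hasProd_iff ?_).mpr (hasProd_partsProd (d ∣ ·) c) using 1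
  · ext1 i
    simp [partsFactor, h_pred, pow_mul, expand_C]
  · intro i hi
    refine if_neg fun ⟨k, hk⟩ ↦ hi ⟨k - 1, ?_⟩
    have hk0 : 0 < k := Nat.pos_of_ne_zero (by rintro rfl; simp at hk)
    simp only [Nat.sub_add_cancel hk0, ← hk, Nat.add_sub_cancel]

variable [IsTopologicalRing R]

theorem partsProd_mul_partsProd {p q r s : ℕ → Prop} [DecidablePred p] [DecidablePred q]
    [DecidablePred r] [DecidablePred s] (h_or : ∀ i, p i ∨ q i ↔ r i ∨ s i)
    (h_and : ∀ i, p i ∧ q i ↔ r i ∧ s i) (c : R) :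
    partsProd p c * partsProd q c = partsProd r c * partsProd s c := by
  refine ((hasProd_partsProd p c).mul (hasProd_partsProd q c)).unique ?_
  convert! (hasProd_partsProd r c).mul (hasProd_partsProd s c) using 1
  ext1 i
  have h_or := h_or (i + 1)
  have h_and := h_and (i + 1)
  simp only [partsFactor]
  split_ifs <;> first | ring1 | tauto

theorem partsProd_ne_mul_dilate (d : ℕ) [NeZero d] (c : R) :
    partsProd (· % (2 * d) ≠ d) c * dilate d (eulerProd c)
      = eulerProd c * dilate (2 * d) (eulerProd c) := by
  have hd : 0 < d := Nat.pos_of_neZero d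
  rw [dilate_eulerProd, dilate_eulerProd]
  have h_dvd (i : ℕ) : d ∣ i ↔ i % (2 * d) = d ∨ 2 * d ∣ i := by
    rw [← Nat.dvd_mod_iff (dvd_mul_left d 2), Nat.dvd_iff_mod_eq_zero (m := 2 * d)]
    have h_lt : i % (2 * d) < 2 * d := Nat.mod_lt _ (by positivity)
    constructor
    · rintro ⟨k, hk⟩
      have hk2 : k < 2 := by nlinarith
      interval_cases k <;> omega
    · rintro (h | h) <;> rw [h]
      exact dvd_zero d
  have h_disj (i : ℕ) (hi : 2 * d ∣ i) : i % (2 * d) ≠ d := by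
    rw [Nat.mod_eq_zero_of_dvd hi]; exact hd.ne
  refine partsProd_mul_partsProd (fun i ↦ ?_) (fun i ↦ ?_) c <;>
  · have := h_dvd i
    have := h_disj i
    tauto

theorem eulerProd_mul_evalNegHom_mul_dilate_sq (c : R) :
    eulerProd (-c) * evalNegHom (eulerProd (-c)) * dilate 2 (eulerProd c) ^ 2
      = eulerProd c * evalNegHom (eulerProd c) * dilate 2 (eulerProd (-c)) ^ 2 := by
  have h_hasProd (a b : R) := ((hasProd_partsProd (fun _ ↦ True) a).mul
    ((hasProd_partsProd (fun _ ↦ True) a).map evalNegHom continuous_evalNegHom)).mul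
    ((hasProd_partsProd (2 ∣ ·) b).mul (hasProd_partsProd (2 ∣ ·) b))
  rw [dilate_eulerProd, dilate_eulerProd, sq, sq]
  refine (h_hasProd (-c) c).unique ?_
  convert! h_hasProd c (-c) using 1
  ext1 i
  have h_C (a : R) : evalNegHom (C a : R⟦X⟧) = C a := by
    ext n; cases n <;> simp [evalNegHom, coeff_rescale, coeff_C]
  by_cases h : 2 ∣ i + 1
  · simp only [partsFactor, h, Function.comp, map_add, map_one, map_mul, map_pow, evalNegHom_X,
      h_C, if_true, map_neg, Even.neg_pow (even_iff_two_dvd.mpr h)]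
    ring
  · simp only [partsFactor, h, Function.comp, map_add, map_one, map_mul, map_pow, evalNegHom_X,
      h_C, if_true, if_false, map_neg,
      Odd.neg_pow (Nat.not_even_iff_odd.mp (even_iff_two_dvd.not.mpr h))]
    ring

end PartsProduct

section GeneratingFunction

variable {R : Type*} [CommRing R] [TopologicalSpace R] [T2Space R]

theorem mk_card_distincts_filter (p : ℕ → Prop) [DecidablePred p] :
    (mk fun n ↦ (#{lam ∈ Nat.Partition.distincts n | ∀ i ∈ lam.parts, p i} : R))
      = partsProd p 1 := by
  refine HasProd.unique ?_ (hasProd_partsProd p 1)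
  convert! Nat.Partition.hasProd_genFun (fun i c ↦ if c < 2 ∧ p i then (1 : R) else 0) using 1
  · ext1 i
    rw [tsum_eq_single 0 fun b hb ↦ by rw [if_neg (by omega), zero_smul]]
    by_cases h : p (i + 1) <;> simp [partsFactor, h]
  · ext n
    simp only [coeff_mk, Nat.Partition.coeff_genFun]
    rw [← Nat.Partition.countRestricted_two, Nat.Partition.countRestricted, filter_filter,
      card_filter]
    push_cast
    refine sum_congr rfl fun x _ ↦ ?_
    rw [Finsupp.prod, prod_boole]
    congr 1
    simp only [Multiset.toFinsupp_support, Multiset.toFinsupp_apply, Multiset.mem_toFinset]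
    grind

variable [IsTopologicalRing R]

theorem mk_card_restricted_mul_partsProd (p : ℕ → Prop) [DecidablePred p] :
    (mk fun n ↦ (#(Nat.Partition.restricted n p) : R)) * partsProd p (-1) = 1 := by
  refine ((Nat.Partition.hasProd_powerSeriesMk_card_restricted R p).mul
    (hasProd_partsProd p (-1))).unique ?_
  convert! hasProd_one using 1
  ext1 i
  unfold partsFactor
  split_ifs
  · simp_rw [pow_mul, map_neg, map_one, neg_one_mul, ← sub_eq_add_neg]
    exact tsum_pow_mul_one_sub_of_constantCoeff_eq_zero (by simp)
  · exact one_mul 1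

/-- The generating function of the `(j, k)`-regular overpartitions. -/
noncomputable def overpartitionSeries (R : Type*) [CommRing R] (j k : ℕ) : R⟦X⟧ :=
  mk fun n ↦ (regularOverpartitions j k n : R)

theorem overpartitionSeries_mul_partsProd (j k : ℕ) :
    overpartitionSeries R j k * partsProd (· % k ≠ j) (-1) = partsProd (· % k ≠ j) 1 := by
  have h_mul : overpartitionSeries R j k
      = partsProd (· % k ≠ j) 1 * mk fun n ↦ (#(Nat.Partition.restricted n (· % k ≠ j)) : R) := by
    rw [← mk_card_distincts_filter]
    ext n
    rw [coeff_mul, Nat.sum_antidiagonal_eq_sum_range_succ_mk]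
    simp only [overpartitionSeries, coeff_mk, regularOverpartitions, Nat.Partition.restricted,
      Nat.cast_sum, Nat.cast_mul]
  rw [h_mul, mul_assoc, mk_card_restricted_mul_partsProd, mul_one]

end GeneratingFunction

section Shanks

variable {R : Type*} [CommRing R]

/-- The partial sums `1 + 2 * ∑ (-1) ^ j * q ^ (j ^ 2)`, over `1 ≤ j ≤ n`, of Gauss's theta
series. -/
def thetaPartialSum (q : R) (n : ℕ) : R :=
  1 + 2 * ∑ j ∈ range n, (-1) ^ (j + 1) * q ^ (j + 1) ^ 2

/-- The coefficient of `q ^ (s * (n + 1))` in Shanks's formula for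
`(∏ (1 + q ^ i)) * thetaPartialSum q n`. -/
def shanksCoeff (q : R) (n s : ℕ) : R :=
  (-1) ^ s * (∏ i ∈ range s, (1 + q ^ i)) * ∏ i ∈ Ico s n, (1 - q ^ (i + 1))

theorem shanksCoeff_self (q : R) (n : ℕ) :
    shanksCoeff q n n = (-1) ^ n * ∏ i ∈ range n, (1 + q ^ i) := by
  simp [shanksCoeff]

theorem shanksCoeff_succ_left (q : R) {n s : ℕ} (hs : s ≤ n) :
    shanksCoeff q (n + 1) s = shanksCoeff q n s * (1 - q ^ (n + 1)) := by
  rw [shanksCoeff, shanksCoeff, prod_Ico_succ_top hs, mul_assoc _ _ (1 - _)]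

theorem shanksCoeff_succ_right (q : R) {n s : ℕ} (hs : s < n) :
    shanksCoeff q n (s + 1) * (1 - q ^ (s + 1)) = -(1 + q ^ s) * shanksCoeff q n s := by
  rw [shanksCoeff, shanksCoeff, prod_range_succ, prod_eq_prod_Ico_succ_bot hs]
  ring

theorem sum_shanksCoeff_telescope (q : R) {n k : ℕ} (hk : k ≤ n) :
    ∑ s ∈ range (k + 1), shanksCoeff q n s *
        (q ^ (s * (n + 2)) * (1 - q ^ (n + 1)) - q ^ (s * (n + 1)) * (1 + q ^ (n + 1)))
      = -(1 + q ^ k) * shanksCoeff q n k * q ^ ((k + 1) * (n + 1)) := by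
  induction k with
  | zero => simp; ring
  | succ k ih =>
    rw [sum_range_succ, ih (by omega), ← shanksCoeff_succ_right q hk]
    ring

theorem two_mul_prod_one_add_pow_succ (q : R) (n : ℕ) :
    2 * ∏ i ∈ range n, (1 + q ^ (i + 1)) = ∏ i ∈ range (n + 1), (1 + q ^ i) := by
  rw [prod_range_succ', pow_zero, mul_comm, one_add_one_eq_two]

theorem prod_mul_thetaPartialSum (q : R) (n : ℕ) :
    (∏ i ∈ range n, (1 + q ^ (i + 1))) * thetaPartialSum q n
      = ∑ s ∈ range (n + 1), shanksCoeff q n s * q ^ (s * (n + 1)) := by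
  induction n with
  | zero => simp [thetaPartialSum, shanksCoeff]
  | succ n ih =>
    have h_theta : thetaPartialSum q (n + 1)
        = thetaPartialSum q n + 2 * ((-1) ^ (n + 1) * q ^ (n + 1) ^ 2) := by
      rw [thetaPartialSum, thetaPartialSum, sum_range_succ]
      ring
    have h_sum : ∑ s ∈ range (n + 1), shanksCoeff q (n + 1) s * q ^ (s * (n + 2))
        = (1 + q ^ (n + 1)) * (∑ s ∈ range (n + 1), shanksCoeff q n s * q ^ (s * (n + 1)))
          - (1 + q ^ n) * shanksCoeff q n n * q ^ ((n + 1) * (n + 1)) := by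
      rw [sub_eq_add_neg, ← neg_mul, ← neg_mul, ← sum_shanksCoeff_telescope q le_rfl, mul_sum,
        ← sum_add_distrib]
      refine sum_congr rfl fun s hs ↦ ?_
      rw [shanksCoeff_succ_left q (mem_range_succ_iff.mp hs)]
      ring
    have h_two := two_mul_prod_one_add_pow_succ q (n + 1)
    rw [sum_range_succ, h_sum, ← ih, shanksCoeff_self, shanksCoeff_self, h_theta]
    simp only [prod_range_succ] at h_two ⊢
    linear_combination (-1) ^ (n + 1) * q ^ (n + 1) ^ 2 * h_two

end Shanks

section Theta

/-- The series `∑ q ^ (j ^ 2)` over `j ≥ 1`. -/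
noncomputable def squareSeries : ℤ⟦X⟧ := mk fun n ↦ if IsSquare n ∧ n ≠ 0 then 1 else 0

/-- Gauss's theta series `φ(q) = ∑ q ^ (j ^ 2)` over all integers `j`. -/
noncomputable def theta : ℤ⟦X⟧ := 1 + 2 * squareSeries

/-- The alternating theta series `φ(-q)`. -/
noncomputable def thetaNeg : ℤ⟦X⟧ := evalNegHom theta

theorem thetaNeg_eq : thetaNeg = 1 + 2 * evalNegHom squareSeries := by
  rw [thetaNeg, theta, map_add, map_one, map_mul, map_ofNat]

theorem hasSum_squareSeries : HasSum (fun j : ℕ ↦ (X : ℤ⟦X⟧) ^ (j + 1) ^ 2) squareSeries := by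
  refine (hasSum_iff_hasSum_coeff ℤ).mpr fun n ↦ ?_
  simp only [coeff_X_pow, squareSeries, coeff_mk]
  split_ifs with h
  · obtain ⟨⟨r, rfl⟩, hr⟩ := h
    have hr_pos : r - 1 + 1 = r := Nat.sub_add_cancel (Nat.pos_of_ne_zero (by simp_all))
    convert! hasSum_ite_eq (r - 1) (1 : ℤ) using 1
    ext j
    congr 1
    rw [← sq, eq_iff_iff, Nat.pow_left_inj two_ne_zero]
    omega
  · convert! hasSum_zero using 1
    ext j
    exact if_neg fun hj ↦ h ⟨⟨j + 1, by rw [hj, sq]⟩, by rw [hj]; positivity⟩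

theorem tendsto_thetaPartialSum : Tendsto (thetaPartialSum (X : ℤ⟦X⟧)) atTop (𝓝 thetaNeg) := by
  have h_sum := (hasSum_squareSeries.map evalNegHom continuous_evalNegHom).tendsto_sum_nat
  have h_term (j : ℕ) :
      (evalNegHom ∘ fun j : ℕ ↦ (X : ℤ⟦X⟧) ^ (j + 1) ^ 2) j
        = (-1) ^ (j + 1) * X ^ (j + 1) ^ 2 := by
    have h_sign : (-1 : ℤ⟦X⟧) ^ (j + 1) ^ 2 = (-1) ^ (j + 1) :=
      neg_one_pow_congr (Nat.even_pow' two_ne_zero)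
    rw [Function.comp_apply, map_pow, evalNegHom_X, neg_pow, h_sign]
  simp only [h_term] at h_sum
  rw [thetaNeg_eq]
  exact (h_sum.const_mul 2).const_add 1

/-- Gauss's identity `φ(-q) = ∏ (1 - q ^ i) / (1 + q ^ i)`. -/
theorem eulerProd_mul_thetaNeg : eulerProd 1 * thetaNeg = eulerProd (-1) := by
  have h_prod (c : ℤ) : Tendsto (fun n ↦ ∏ i ∈ range n, (1 + C c * X ^ (i + 1))) atTop
      (𝓝 (eulerProd c)) := by
    simpa [partsFactor] using (hasProd_partsProd (fun _ ↦ True) c).tendsto_prod_nat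
  have h_pos := (h_prod 1).mul tendsto_thetaPartialSum
  have h_dvd (n : ℕ) : (X : ℤ⟦X⟧) ^ n ∣ (∏ i ∈ range n, (1 + C 1 * X ^ (i + 1))) *
      thetaPartialSum X n - ∏ i ∈ range n, (1 + C (-1) * X ^ (i + 1)) := by
    simp only [map_one, one_mul, prod_mul_thetaPartialSum, sum_range_succ' _ n]
    have h_zero : shanksCoeff (X : ℤ⟦X⟧) n 0 * X ^ (0 * (n + 1))
        = ∏ i ∈ range n, (1 + C (-1) * X ^ (i + 1)) := by
      simp [shanksCoeff, sub_eq_add_neg]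
    rw [h_zero, add_sub_cancel_right]
    refine dvd_sum fun s _ ↦ Dvd.dvd.mul_left (pow_dvd_pow X ?_) _
    nlinarith
  have h_neg := (h_prod (-1)).add (tendsto_zero_of_X_pow_dvd h_dvd)
  simp only [add_sub_cancel, add_zero] at h_neg
  exact tendsto_nhds_unique h_pos h_neg

theorem constantCoeff_thetaNeg : constantCoeff thetaNeg = 1 := by
  simpa [constantCoeff_partsProd] using congrArg constantCoeff eulerProd_mul_thetaNeg

theorem theta_mul_thetaNeg : theta * thetaNeg = dilate 2 thetaNeg ^ 2 := by
  have h_even := eulerProd_mul_evalNegHom_mul_dilate_sq (1 : ℤ)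
  have h_evalNeg : evalNegHom thetaNeg = theta := by
    rw [thetaNeg, evalNegHom, rescale_rescale, neg_one_mul, neg_neg, rescale_one, RingHom.id_apply]
  have h_theta := congrArg evalNegHom eulerProd_mul_thetaNeg
  have h_dilate := congrArg (dilate 2) eulerProd_mul_thetaNeg
  rw [map_mul, h_evalNeg] at h_theta
  rw [map_mul] at h_dilate
  have h_const : constantCoeff (evalNegHom (eulerProd (1 : ℤ))) = 1 := by
    rw [← coeff_zero_eq_constantCoeff_apply, evalNegHom, coeff_rescale, pow_zero, one_mul,
      coeff_zero_eq_constantCoeff_apply, constantCoeff_partsProd]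
  have h_ne : eulerProd (1 : ℤ) * evalNegHom (eulerProd 1) * dilate 2 (eulerProd 1) ^ 2 ≠ 0 :=
    ne_zero_of_map (f := constantCoeff (R := ℤ)) (by simp [h_const, constantCoeff_partsProd])
  refine mul_left_cancel₀ h_ne ?_
  rw [← h_theta, ← h_dilate, ← eulerProd_mul_thetaNeg] at h_even
  linear_combination h_even

theorem overpartitionSeries_mul_thetaNeg (d : ℕ) [NeZero d] :
    overpartitionSeries ℤ d (2 * d) * thetaNeg * dilate (2 * d) thetaNeg = dilate d thetaNeg := by
  have h_series := overpartitionSeries_mul_partsProd (R := ℤ) d (2 * d)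
  have h_neg := partsProd_ne_mul_dilate d (-1 : ℤ)
  have h_pos := partsProd_ne_mul_dilate d (1 : ℤ)
  simp only [← eulerProd_mul_thetaNeg, map_mul] at h_neg
  have h_ne : eulerProd (1 : ℤ) * dilate (2 * d) (eulerProd 1) ≠ 0 :=
    ne_zero_of_map (f := constantCoeff (R := ℤ)) (by simp [constantCoeff_partsProd])
  refine mul_left_cancel₀ h_ne ?_
  linear_combination dilate d (eulerProd 1) * dilate d thetaNeg * h_series
    + dilate d thetaNeg * h_pos - overpartitionSeries ℤ d (2 * d) * h_neg

theorem coeff_four_mul_squareSeries (n : ℕ) :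
    coeff (4 * n) squareSeries = coeff n squareSeries := by
  have h_isSquare : IsSquare (4 * n) ↔ IsSquare n := by
    refine ⟨fun ⟨r, hr⟩ ↦ ?_, fun ⟨r, hr⟩ ↦ ⟨2 * r, by rw [hr]; ring⟩⟩
    obtain ⟨s, rfl⟩ : 2 ∣ r := Nat.prime_two.dvd_of_dvd_pow (n := 2) ⟨2 * n, by linarith⟩
    exact ⟨s, by linarith⟩
  simp [squareSeries, h_isSquare]

theorem isSupportedMod_squareSeries_sub_dilate :
    IsSupportedMod (1 : ZMod 2) (squareSeries - dilate 4 squareSeries) := by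
  intro n hn
  rw [map_sub, sub_eq_zero, coeff_expand]
  split_ifs with h
  · obtain ⟨m, rfl⟩ := h
    rw [coeff_four_mul_squareSeries, Nat.mul_div_cancel_left m four_pos]
  · refine (coeff_mk _ _).trans (if_neg fun ⟨⟨r, hr⟩, _⟩ ↦ h ?_)
    have h_even : 2 ∣ r * r := by
      rw [Ne, ZMod.natCast_eq_one_iff_odd, Nat.not_odd_iff_even] at hn
      exact hr ▸ hn.two_dvd
    obtain ⟨s, rfl⟩ := (or_self_iff.mp (Nat.prime_two.dvd_mul.mp h_even))
    exact ⟨s * s, by rw [hr]; ring⟩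

end Theta

section Congruence

theorem ofNat_dvd_iff_forall_dvd_coeff {k : ℕ} [k.AtLeastTwo] {f : ℤ⟦X⟧} :
    (OfNat.ofNat k : ℤ⟦X⟧) ∣ f ↔ ∀ n, (OfNat.ofNat k : ℤ) ∣ coeff n f := by
  rw [← map_ofNat (C (R := ℤ)) k]
  refine ⟨fun ⟨g, hg⟩ n ↦ ⟨coeff n g, by rw [hg, coeff_C_mul]⟩, fun h ↦ ?_⟩
  choose g hg using h
  exact ⟨mk g, by ext n; rw [coeff_C_mul, coeff_mk, hg]⟩

theorem two_dvd_sq_sub_dilate (f : ℤ⟦X⟧) : 2 ∣ f ^ 2 - dilate 2 f := by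
  have h_frobenius : (f ^ 2).map (Int.castRingHom (ZMod 2))
      = (dilate 2 f).map (Int.castRingHom (ZMod 2)) := by
    have h := MvPowerSeries.map_frobenius_expand 2 (NeZero.ne 2)
      (f := (f.map (Int.castRingHom (ZMod 2)) : MvPowerSeries Unit (ZMod 2)))
    rw [ZMod.frobenius_zmod, MvPowerSeries.map_id] at h
    rw [map_pow, PowerSeries.map_expand]
    exact h.symm
  refine ofNat_dvd_iff_forall_dvd_coeff.mpr fun n ↦ ?_
  rw [map_sub]
  refine (ZMod.intCast_eq_intCast_iff_dvd_sub _ _ 2).mp ?_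
  simpa only [coeff_map, eq_intCast] using congrArg (coeff n) h_frobenius.symm

theorem two_dvd_evalNegHom_sub (f : ℤ⟦X⟧) : 2 ∣ evalNegHom f - f := by
  refine ofNat_dvd_iff_forall_dvd_coeff.mpr fun n ↦ ?_
  rw [map_sub, evalNegHom, coeff_rescale, ← sub_one_mul]
  refine Dvd.dvd.mul_right ?_ _
  rcases Nat.even_or_odd n with hn | hn <;> simp [hn.neg_one_pow]

theorem eight_dvd_thetaNeg_sq_sub :
    8 ∣ thetaNeg ^ 2 - (1 + 4 * squareSeries + 4 * dilate 2 squareSeries) := by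
  obtain ⟨f, hf⟩ := two_dvd_evalNegHom_sub squareSeries
  obtain ⟨g, hg⟩ := two_dvd_sq_sub_dilate squareSeries
  have h_evalNeg : evalNegHom squareSeries = squareSeries + 2 * f := by linear_combination hf
  refine ⟨f + 2 * squareSeries * f + 2 * f ^ 2 + g, ?_⟩
  rw [thetaNeg_eq, h_evalNeg]
  linear_combination 4 * hg

theorem two_pow_succ_dvd_dilate_pow_sub_one (d k : ℕ) [NeZero d] {f : ℤ⟦X⟧} (hf : 2 ∣ f - 1) :
    2 ^ (k + 1) ∣ dilate d f ^ 2 ^ k - 1 := by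
  have h_dvd := map_dvd (dilate d : ℤ⟦X⟧ →ₐ[ℤ] ℤ⟦X⟧) hf
  rw [map_sub, map_one, map_ofNat] at h_dvd
  have h_pow := dvd_sub_pow_of_dvd_sub (p := 2) (by exact_mod_cast h_dvd) k
  rwa [one_pow, Nat.cast_ofNat] at h_pow

theorem two_dvd_theta_sub_one : 2 ∣ theta - 1 := ⟨squareSeries, by rw [theta]; ring⟩

theorem two_dvd_thetaNeg_sub_one : 2 ∣ thetaNeg - 1 :=
  ⟨evalNegHom squareSeries, by rw [thetaNeg_eq]; ring⟩

theorem dilate_theta_mul_dilate_thetaNeg {d e : ℕ} [NeZero d] [NeZero e] (h : d * 2 = e) :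
    dilate d theta * dilate d thetaNeg = dilate e thetaNeg ^ 2 := by
  rw [← map_mul, theta_mul_thetaNeg, map_pow, dilate_dilate h]

theorem overpartitionSeries_mul_pow_eq :
    overpartitionSeries ℤ 4 8 * dilate 8 thetaNeg ^ 7
      = theta * dilate 2 theta ^ 2 * dilate 4 theta ^ 3 := by
  have h_series : overpartitionSeries ℤ 4 8 * thetaNeg * dilate 8 thetaNeg = dilate 4 thetaNeg :=
    overpartitionSeries_mul_thetaNeg 4
  have h_one := theta_mul_thetaNeg
  have h_two := dilate_theta_mul_dilate_thetaNeg (d := 2) (e := 4) rfl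
  have h_four := dilate_theta_mul_dilate_thetaNeg (d := 4) (e := 8) rfl
  have h_ne : dilate 4 thetaNeg ≠ 0 :=
    ne_zero_of_map (f := constantCoeff (R := ℤ)) (by simp [constantCoeff_thetaNeg])
  have h_cancel : overpartitionSeries ℤ 4 8 * dilate 4 thetaNeg ^ 3 * dilate 8 thetaNeg
      = theta * dilate 2 theta ^ 2 := by
    refine mul_right_cancel₀ h_ne ?_
    calc overpartitionSeries ℤ 4 8 * dilate 4 thetaNeg ^ 3 * dilate 8 thetaNeg * dilate 4 thetaNeg
        = overpartitionSeries ℤ 4 8 * (dilate 4 thetaNeg ^ 2) ^ 2 * dilate 8 thetaNeg := by ring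
      _ = overpartitionSeries ℤ 4 8 * (theta * thetaNeg) * dilate 2 theta ^ 2 *
          dilate 8 thetaNeg := by rw [← h_two, h_one]; ring
      _ = theta * dilate 2 theta ^ 2 * dilate 4 thetaNeg := by rw [← h_series]; ring
  calc overpartitionSeries ℤ 4 8 * dilate 8 thetaNeg ^ 7
      = overpartitionSeries ℤ 4 8 * (dilate 8 thetaNeg ^ 2) ^ 3 * dilate 8 thetaNeg := by ring
    _ = theta * dilate 2 theta ^ 2 * dilate 4 theta ^ 3 := by rw [← h_four, ← h_cancel]; ring

theorem thirtyTwo_dvd_overpartitionSeries_sub :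
    32 ∣ overpartitionSeries ℤ 4 8
      - theta * dilate 2 (theta ^ 2 * dilate 2 theta ^ 3 * dilate 4 thetaNeg ^ 9) := by
  obtain ⟨f, hf⟩ := two_pow_succ_dvd_dilate_pow_sub_one 8 4 two_dvd_thetaNeg_sub_one
  refine ⟨-overpartitionSeries ℤ 4 8 * f, ?_⟩
  simp only [map_mul, map_pow, dilate_dilate (show 2 * 2 = 4 from rfl),
    dilate_dilate (show 2 * 4 = 8 from rfl)]
  linear_combination dilate 8 thetaNeg ^ 9 * overpartitionSeries_mul_pow_eq
    - overpartitionSeries ℤ 4 8 * hf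

theorem theta_eq_dilate_add :
    theta = dilate 4 theta + 2 * (squareSeries - dilate 4 squareSeries) := by
  rw [theta, map_add, map_one, map_mul, map_ofNat]
  ring

theorem coeff_two_mul_theta_mul_dilate (M : ℕ) (f : ℤ⟦X⟧) :
    coeff (2 * M) (theta * dilate 2 f) = coeff M (dilate 2 theta * f) := by
  have h_odd := isSupportedMod_squareSeries_sub_dilate.mul (isSupportedMod_dilate (dvd_refl 2) f)
  have h_split : theta * dilate 2 f = dilate 2 (dilate 2 theta * f)
      + C 2 * ((squareSeries - dilate 4 squareSeries) * dilate 2 f) := by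
    rw [map_mul, dilate_dilate (show 2 * 2 = 4 from rfl), map_ofNat]
    linear_combination dilate 2 f * theta_eq_dilate_add
  rw [h_split, map_add, coeff_C_mul, h_odd.coeff_eq_zero_of_even (even_two_mul M), mul_zero,
    add_zero, coeff_expand_mul]

theorem coeff_theta_sq_mul_dilate {M : ℕ} (hM : Odd M) (f : ℤ⟦X⟧) :
    coeff M (theta ^ 2 * dilate 2 f)
      = 4 * coeff M (squareSeries * (dilate 4 theta * dilate 2 f)) := by
  have h_even (g : ℤ⟦X⟧) : IsSupportedMod (0 : ZMod 2) (dilate 4 g) :=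
    isSupportedMod_dilate (by norm_num) g
  have h_two := isSupportedMod_dilate (dvd_refl 2) f
  have h_odd := isSupportedMod_squareSeries_sub_dilate
  have h_split : theta ^ 2 * dilate 2 f
      = C 4 * (squareSeries * (dilate 4 theta * dilate 2 f)) + dilate 4 (theta ^ 2) * dilate 2 f
        + C 4 * ((squareSeries - dilate 4 squareSeries) * (squareSeries - dilate 4 squareSeries)
          * dilate 2 f)
        - C 4 * (dilate 4 (squareSeries * theta) * dilate 2 f) := by
    simp only [map_mul, map_pow, map_ofNat]
    linear_combination dilate 2 f
      * (theta + dilate 4 theta + 2 * (squareSeries - dilate 4 squareSeries)) * theta_eq_dilate_add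
  rw [h_split]
  simp only [map_add, map_sub, coeff_C_mul]
  rw [((h_even _).mul h_two).coeff_eq_zero_of_odd hM,
    ((h_even _).mul h_two).coeff_eq_zero_of_odd hM,
    ((h_odd.mul h_odd).mul h_two).coeff_eq_zero_of_odd hM]
  ring

theorem eight_dvd_dilate_theta_mul_sub :
    8 ∣ dilate 4 theta * dilate 2 (theta ^ 4 * dilate 2 thetaNeg ^ 9)
      - (1 + 4 * dilate 8 squareSeries + 4 * dilate 16 squareSeries) := by
  obtain ⟨f, hf⟩ := two_pow_succ_dvd_dilate_pow_sub_one 2 2 two_dvd_theta_sub_one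
  obtain ⟨g, hg⟩ := two_pow_succ_dvd_dilate_pow_sub_one 4 2 two_dvd_thetaNeg_sub_one
  obtain ⟨h, hh⟩ := eight_dvd_thetaNeg_sq_sub
  replace hh := congrArg (dilate 8) hh
  have h_four := dilate_theta_mul_dilate_thetaNeg (d := 4) (e := 8) rfl
  refine ⟨dilate 8 h + dilate 8 thetaNeg ^ 2 * (f * dilate 4 thetaNeg ^ 8
    + g * (dilate 4 thetaNeg ^ 4 + 1)), ?_⟩
  simp only [map_mul, map_pow, map_sub, map_add, map_one, map_ofNat,
    dilate_dilate (show 2 * 2 = 4 from rfl), dilate_dilate (show 8 * 2 = 16 from rfl)] at hh ⊢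
  linear_combination hh + dilate 2 theta ^ 4 * dilate 4 thetaNeg ^ 8 * h_four
    + dilate 8 thetaNeg ^ 2 * dilate 4 thetaNeg ^ 8 * hf
    + dilate 8 thetaNeg ^ 2 * (dilate 4 thetaNeg ^ 4 + 1) * hg

theorem regularOverpartitions_two_mul_modEq {M : ℕ} (hM : Odd M) :
    (regularOverpartitions 4 8 (2 * M) : ℤ) ≡ 4 * coeff M squareSeries
      + 16 * (coeff M (squareSeries * dilate 8 squareSeries)
        + coeff M (squareSeries * dilate 16 squareSeries)) [ZMOD 32] := by
  have h_series := ofNat_dvd_iff_forall_dvd_coeff.mp thirtyTwo_dvd_overpartitionSeries_sub (2 * M)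
  have h_theta := ofNat_dvd_iff_forall_dvd_coeff.mp
    (eight_dvd_dilate_theta_mul_sub.mul_left squareSeries) M
  have h_coeff : coeff (2 * M)
        (theta * dilate 2 (theta ^ 2 * dilate 2 theta ^ 3 * dilate 4 thetaNeg ^ 9))
      = 4 * coeff M (squareSeries *
        (dilate 4 theta * dilate 2 (theta ^ 4 * dilate 2 thetaNeg ^ 9))) := by
    rw [coeff_two_mul_theta_mul_dilate, ← coeff_theta_sq_mul_dilate hM, map_mul (dilate 2),
      map_pow, map_pow, dilate_dilate (show 2 * 2 = 4 from rfl)]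
    congr 1
    ring
  have h_expand : squareSeries * (1 + 4 * dilate 8 squareSeries + 4 * dilate 16 squareSeries)
      = squareSeries + C 4 * (squareSeries * dilate 8 squareSeries
        + squareSeries * dilate 16 squareSeries) := by
    rw [map_ofNat]
    ring
  rw [map_sub, h_coeff, overpartitionSeries, coeff_mk] at h_series
  rw [mul_sub, h_expand, map_sub, map_add, coeff_C_mul, map_add] at h_theta
  exact (Int.modEq_iff_dvd.mpr (by omega)).symm

end Congruence

section Zagier

theorem card_modEq_card_filter_fixed {α : Type*} [DecidableEq α] {s : Finset α} {g : α → α}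
    (h_mem : ∀ a ∈ s, g a ∈ s) (h_invol : ∀ a ∈ s, g (g a) = a) :
    #s ≡ #{a ∈ s | g a = a} [MOD 2] := by
  have h_moved : ∑ _a ∈ s with ¬g _a = _a, (1 : ZMod 2) = 0 := by
    refine sum_involution (fun a _ ↦ g a) (fun _ _ ↦ by decide) (fun a ha _ ↦ (mem_filter.mp ha).2)
      (fun a ha ↦ ?_) (fun a ha ↦ h_invol a (mem_filter.mp ha).1)
    obtain ⟨ha, hga⟩ := mem_filter.mp ha
    exact mem_filter.mpr ⟨h_mem a ha, fun h ↦ hga (h.symm.trans (h_invol a ha))⟩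
  rw [sum_const, nsmul_one] at h_moved
  rw [← ZMod.natCast_eq_natCast_iff, ← card_filter_add_card_filter_not (s := s) (fun a ↦ g a = a),
    Nat.cast_add, h_moved, add_zero]

/-- The representations `M = x ^ 2 + d * y ^ 2` with `x` and `y` positive. -/
def posReps (d M : ℕ) : Finset (ℕ × ℕ) :=
  {t ∈ Icc 1 M ×ˢ Icc 1 M | t.1 ^ 2 + d * t.2 ^ 2 = M}

theorem mem_posReps {d M x y : ℕ} (hd : d ≠ 0) :
    (x, y) ∈ posReps d M ↔ 0 < x ∧ 0 < y ∧ x ^ 2 + d * y ^ 2 = M := by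
  have hd := Nat.pos_of_ne_zero hd
  simp only [posReps, mem_filter, mem_product, mem_Icc]
  refine ⟨by omega, fun ⟨hx, hy, h⟩ ↦ ⟨⟨⟨hx, ?_⟩, hy, ?_⟩, h⟩⟩ <;> nlinarith [Nat.mul_pos hd hy]

/-- The solutions of `x ^ 2 + 4 * y * z = M` in positive integers, on which Zagier's involution
acts. -/
def zagierTriples (M : ℕ) : Finset (ℕ × ℕ × ℕ) :=
  {t ∈ Icc 1 M ×ˢ Icc 1 M ×ˢ Icc 1 M | t.1 ^ 2 + 4 * (t.2.1 * t.2.2) = M}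

theorem mem_zagierTriples {M x y z : ℕ} :
    (x, y, z) ∈ zagierTriples M ↔ 0 < x ∧ 0 < y ∧ 0 < z ∧ x ^ 2 + 4 * (y * z) = M := by
  simp only [zagierTriples, mem_filter, mem_product, mem_Icc]
  refine ⟨by omega, fun ⟨hx, hy, hz, h⟩ ↦ ⟨⟨⟨hx, ?_⟩, ⟨hy, ?_⟩, hz, ?_⟩, h⟩⟩ <;> nlinarith

/-- Zagier's involution on `zagierTriples M`. The truncated subtractions are exact on the triples
with `y ≠ x + z` and `x ≠ 2 * y`. -/
def zagierMap : ℕ × ℕ × ℕ → ℕ × ℕ × ℕ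
  | (x, y, z) =>
    if x + z < y then (x + 2 * z, z, y - x - z)
    else if x < 2 * y then (2 * y - x, y, x + z - y)
    else (x - 2 * y, x + z - y, y)

theorem ne_of_mem_zagierTriples {M x y z : ℕ} (h_odd : Odd M) (h_sq : ¬IsSquare M)
    (h : (x, y, z) ∈ zagierTriples M) : x + z ≠ y ∧ x ≠ 2 * y := by
  obtain ⟨-, -, -, h⟩ := mem_zagierTriples.mp h
  refine ⟨?_, ?_⟩ <;> rintro rfl
  · exact h_sq ⟨x + 2 * z, by rw [← h]; ring⟩
  · exact Nat.not_even_iff_odd.mpr h_odd ⟨2 * y ^ 2 + 2 * (y * z), by rw [← h]; ring⟩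

theorem zagierMap_mem {M : ℕ} (h_odd : Odd M) (h_sq : ¬IsSquare M) {t : ℕ × ℕ × ℕ}
    (ht : t ∈ zagierTriples M) : zagierMap t ∈ zagierTriples M := by
  obtain ⟨x, y, z⟩ := t
  obtain ⟨h_ne, h_ne'⟩ := ne_of_mem_zagierTriples h_odd h_sq ht
  obtain ⟨hx, hy, hz, h⟩ := mem_zagierTriples.mp ht
  simp only [zagierMap]
  split_ifs with h_lt h_lt'
  · obtain ⟨w, rfl⟩ := Nat.exists_eq_add_of_lt h_lt
    rw [show x + z + w + 1 - x - z = w + 1 by omega, mem_zagierTriples]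
    exact ⟨by omega, hz, by omega, by rw [← h]; ring⟩
  · obtain ⟨v, hv⟩ := Nat.exists_eq_add_of_le (not_lt.mp h_lt)
    obtain ⟨w, hw⟩ := Nat.exists_eq_add_of_lt h_lt'
    rw [show 2 * y - x = w + 1 by omega, show x + z - y = v by omega, mem_zagierTriples]
    refine ⟨by omega, hy, by omega, ?_⟩
    rw [← h]
    zify at hv hw ⊢
    linear_combination -(w + 1 + 2 * y - x : ℤ) * hw - 4 * y * hv
  · obtain ⟨w, rfl⟩ := Nat.exists_eq_add_of_le (not_lt.mp h_lt')
    rw [show 2 * y + w - 2 * y = w by omega, show 2 * y + w + z - y = y + w + z by omega,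
      mem_zagierTriples]
    exact ⟨by omega, by omega, hy, by rw [← h]; ring⟩

theorem zagierMap_zagierMap {M : ℕ} (h_odd : Odd M) (h_sq : ¬IsSquare M) {t : ℕ × ℕ × ℕ}
    (ht : t ∈ zagierTriples M) : zagierMap (zagierMap t) = t := by
  obtain ⟨x, y, z⟩ := t
  have := ne_of_mem_zagierTriples h_odd h_sq ht
  obtain ⟨hx, -, hz, -⟩ := mem_zagierTriples.mp ht
  simp only [zagierMap]
  split_ifs <;> simp only [Prod.mk.injEq] <;> grind

theorem zagierMap_eq_self_iff {M x y z : ℕ} (h_odd : Odd M) (h_sq : ¬IsSquare M)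
    (ht : (x, y, z) ∈ zagierTriples M) : zagierMap (x, y, z) = (x, y, z) ↔ x = y := by
  have := ne_of_mem_zagierTriples h_odd h_sq ht
  obtain ⟨hx, hy, hz, -⟩ := mem_zagierTriples.mp ht
  simp only [zagierMap]
  split_ifs <;> simp only [Prod.mk.injEq] <;> grind

theorem mod_four_eq_of_mul_mod_four_eq_one {a b : ℕ} (h : a * b % 4 = 1) : a % 4 = b % 4 := by
  have h_zmod : ∀ a b : ZMod 4, a * b = 1 → a = b := by decide
  refine (ZMod.natCast_eq_natCast_iff' a b 4).mp (h_zmod _ _ ?_)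
  exact_mod_cast (ZMod.natCast_eq_natCast_iff' (a * b) 1 4).mpr h

theorem card_filter_zagierMap_eq_self {M : ℕ} (hM : M % 4 = 1) (h_sq : ¬IsSquare M) :
    #{t ∈ zagierTriples M | zagierMap t = t} = #{t ∈ M.divisorsAntidiagonal | t.1 < t.2} := by
  have h_odd : Odd M := Nat.odd_iff.mpr (by omega)
  have h_modEq {a b : ℕ} (h : a * b = M) : a % 4 = b % 4 :=
    mod_four_eq_of_mul_mod_four_eq_one (h ▸ hM)
  refine card_nbij' (fun t ↦ (t.1, t.1 + 4 * t.2.2)) (fun t ↦ (t.1, t.1, (t.2 - t.1) / 4))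
    ?_ ?_ ?_ ?_
  · rintro ⟨x, y, z⟩ ht
    obtain ⟨ht, h_fixed⟩ := mem_filter.mp ht
    obtain rfl := (zagierMap_eq_self_iff h_odd h_sq ht).mp h_fixed
    obtain ⟨-, -, hz, h⟩ := mem_zagierTriples.mp ht
    simp only [coe_filter, Set.mem_ofPred_eq, Nat.mem_divisorsAntidiagonal]
    exact ⟨⟨by rw [← h]; ring, by omega⟩, by omega⟩
  · rintro ⟨a, b⟩ hab
    simp only [coe_filter, Set.mem_ofPred_eq, Nat.mem_divisorsAntidiagonal] at hab ⊢
    obtain ⟨⟨h, -⟩, h_lt⟩ := hab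
    obtain ⟨z, rfl⟩ : ∃ z, b = a + 4 * z := ⟨(b - a) / 4, by have := h_modEq h; omega⟩
    have ha : 0 < a := Nat.pos_of_ne_zero (by rintro rfl; omega)
    have h_mem : (a, a, (a + 4 * z - a) / 4) ∈ zagierTriples M :=
      mem_zagierTriples.mpr ⟨ha, ha, by omega, by
        rw [← h, Nat.add_sub_cancel_left, Nat.mul_div_cancel_left z four_pos]; ring⟩
    exact ⟨h_mem, (zagierMap_eq_self_iff h_odd h_sq h_mem).mpr rfl⟩
  · rintro ⟨x, y, z⟩ ht
    obtain ⟨ht, h_fixed⟩ := mem_filter.mp ht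
    obtain rfl := (zagierMap_eq_self_iff h_odd h_sq ht).mp h_fixed
    simp
  · rintro ⟨a, b⟩ hab
    simp only [coe_filter, Set.mem_ofPred_eq, Nat.mem_divisorsAntidiagonal] at hab
    have := h_modEq hab.1.1
    simp only [Prod.mk.injEq, true_and]
    omega

theorem card_filter_swap_eq_self {M : ℕ} :
    #{t ∈ zagierTriples M | (t.1, t.2.2, t.2.1) = t} = #(posReps 4 M) := by
  refine card_nbij' (fun t ↦ (t.1, t.2.1)) (fun t ↦ (t.1, t.2, t.2)) ?_ ?_ ?_ ?_
  · rintro ⟨x, y, z⟩ ht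
    simp only [coe_filter, Set.mem_ofPred_eq, mem_zagierTriples, Prod.mk.injEq] at ht
    obtain ⟨⟨hx, hy, -, h⟩, -, rfl, -⟩ := ht
    exact (mem_posReps four_ne_zero).mpr ⟨hx, hy, by rw [← h]; ring⟩
  · rintro ⟨x, y⟩ ht
    obtain ⟨hx, hy, h⟩ := (mem_posReps four_ne_zero).mp ht
    exact mem_filter.mpr ⟨mem_zagierTriples.mpr ⟨hx, hy, hy, by rw [← h]; ring⟩, rfl⟩
  · rintro ⟨x, y, z⟩ ht
    simp only [coe_filter, Set.mem_ofPred_eq, Prod.mk.injEq] at ht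
    simp only [ht.2.2.2]
  · exact fun _ _ ↦ rfl

theorem card_posReps_four_modEq {M : ℕ} (hM : M % 4 = 1) (h_sq : ¬IsSquare M) :
    #(posReps 4 M) ≡ #{t ∈ M.divisorsAntidiagonal | t.1 < t.2} [MOD 2] := by
  have h_odd : Odd M := Nat.odd_iff.mpr (by omega)
  rw [← card_filter_swap_eq_self, ← card_filter_zagierMap_eq_self hM h_sq]
  refine (card_modEq_card_filter_fixed (fun ⟨x, y, z⟩ ht ↦ ?_) fun _ _ ↦ rfl).symm.trans
    (card_modEq_card_filter_fixed (fun _ ↦ zagierMap_mem h_odd h_sq)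
      fun _ ↦ zagierMap_zagierMap h_odd h_sq)
  obtain ⟨hx, hy, hz, h⟩ := mem_zagierTriples.mp ht
  exact mem_zagierTriples.mpr ⟨hx, hz, hy, by rw [← h]; ring⟩

theorem card_divisors_eq_two_mul {M : ℕ} (h_sq : ¬IsSquare M) :
    #M.divisors = 2 * #{t ∈ M.divisorsAntidiagonal | t.1 < t.2} := by
  have h_swap : #{t ∈ M.divisorsAntidiagonal | ¬t.1 < t.2}
      = #{t ∈ M.divisorsAntidiagonal | t.1 < t.2} := by
    refine card_nbij' Prod.swap Prod.swap ?_ ?_ (fun _ _ ↦ rfl) (fun _ _ ↦ rfl) <;>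
    · rintro ⟨a, b⟩ hab
      simp only [coe_filter, Set.mem_ofPred_eq, Nat.mem_divisorsAntidiagonal] at hab ⊢
      have h_ne : a ≠ b := fun h_eq ↦ h_sq ⟨a, by rw [← hab.1.1, h_eq]⟩
      exact ⟨⟨by rw [← hab.1.1]; exact mul_comm b a, hab.1.2⟩, by simp only [Prod.swap]; omega⟩
  rw [← card_map, Nat.map_div_right_divisors, ← card_filter_add_card_filter_not (fun t ↦ t.1 < t.2),
    h_swap, two_mul]

end Zagier

section Representation

theorem coeff_squareSeries_mul_dilate (d M : ℕ) [NeZero d] :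
    coeff M (squareSeries * dilate d squareSeries) = #(posReps d M) := by
  classical
  have hd := NeZero.ne d
  have h_coeff (i j : ℕ) : coeff i squareSeries * coeff j (dilate d squareSeries)
      = if (∃ x y, 0 < x ∧ 0 < y ∧ i = x ^ 2 ∧ j = d * y ^ 2) then 1 else 0 := by
    rw [coeff_expand, squareSeries, coeff_mk, coeff_mk, ← ite_and, ite_zero_mul_ite_zero, one_mul]
    refine if_congr ⟨?_, ?_⟩ rfl rfl
    · rintro ⟨⟨⟨x, rfl⟩, hx⟩, ⟨y, rfl⟩, h_sq, hy⟩
      rw [Nat.mul_div_cancel_left _ hd.bot_lt] at h_sq hy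
      obtain ⟨y, rfl⟩ := h_sq
      exact ⟨x, y, Nat.pos_of_ne_zero (left_ne_zero_of_mul hx),
        Nat.pos_of_ne_zero (left_ne_zero_of_mul hy), by ring, by ring⟩
    · rintro ⟨x, y, hx, hy, rfl, rfl⟩
      rw [Nat.mul_div_cancel_left _ hd.bot_lt]
      exact ⟨⟨.sq x, by positivity⟩, dvd_mul_right _ _, .sq y, by positivity⟩
  rw [coeff_mul]
  simp only [h_coeff]
  rw [sum_boole, Nat.cast_inj]
  symm
  refine card_nbij (fun t ↦ (t.1 ^ 2, d * t.2 ^ 2)) ?_ ?_ ?_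
  · rintro ⟨x, y⟩ ht
    obtain ⟨hx, hy, h⟩ := (mem_posReps hd).mp ht
    exact mem_filter.mpr ⟨mem_antidiagonal.mpr h, x, y, hx, hy, rfl, rfl⟩
  · rintro ⟨x, y⟩ - ⟨u, v⟩ - h
    obtain ⟨h₁, h₂⟩ := Prod.mk.inj h
    exact Prod.ext (Nat.pow_left_injective two_ne_zero h₁)
      (Nat.pow_left_injective two_ne_zero (Nat.eq_of_mul_eq_mul_left hd.bot_lt h₂))
  · rintro ⟨i, j⟩ hij
    obtain ⟨h, x, y, hx, hy, rfl, rfl⟩ := mem_filter.mp hij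
    exact ⟨(x, y), (mem_posReps hd).mpr ⟨hx, hy, mem_antidiagonal.mp h⟩, rfl⟩

theorem card_posReps_sixteen {M : ℕ} (hM : M % 8 = 1) : #(posReps 16 M) = #(posReps 4 M) := by
  refine card_nbij (fun t ↦ (t.1, 2 * t.2)) ?_ ?_ ?_
  · rintro ⟨x, y⟩ ht
    obtain ⟨hx, hy, h⟩ := (mem_posReps (by norm_num)).mp ht
    exact (mem_posReps four_ne_zero).mpr ⟨hx, by positivity, by rw [← h]; ring⟩
  · rintro ⟨x, y⟩ - ⟨u, v⟩ - h
    simpa using h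
  · rintro ⟨x, y⟩ ht
    obtain ⟨hx, hy, h⟩ := (mem_posReps four_ne_zero).mp ht
    obtain ⟨z, rfl⟩ : 2 ∣ y := by
      have h_zmod : ∀ a b : ZMod 8, a ^ 2 + 4 * b ^ 2 = 1 → 4 * b = 0 := by decide
      have h_cast := (ZMod.natCast_eq_natCast_iff' _ 1 8).mpr (h ▸ hM)
      push_cast at h_cast
      have h_eight : 8 ∣ 4 * y :=
        (ZMod.natCast_eq_zero_iff _ _).mp (by push_cast; exact h_zmod x y h_cast)
      omega
    exact ⟨(x, z), (mem_posReps (by norm_num)).mpr ⟨hx, by omega, by rw [← h]; ring⟩, rfl⟩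

theorem regularOverpartitions_two_mul_modEq_card_divisors {M : ℕ} (hM : M % 8 = 1)
    (h_rep : ∀ x y : ℕ, x ^ 2 + 2 * y ^ 2 ≠ M) :
    (regularOverpartitions 4 8 (2 * M) : ℤ) ≡ 8 * #M.divisors [ZMOD 32] := by
  have h_sq : ¬IsSquare M := fun ⟨r, hr⟩ ↦ h_rep r 0 (by rw [hr]; ring)
  have h_coeff : coeff M squareSeries = 0 := (coeff_mk _ _).trans (if_neg fun h ↦ h_sq h.1)
  have h_empty : posReps 8 M = ∅ := eq_empty_of_forall_notMem fun ⟨x, y⟩ ht ↦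
    h_rep x (2 * y) (by rw [← ((mem_posReps (by norm_num)).mp ht).2.2]; ring)
  have h_modEq := regularOverpartitions_two_mul_modEq (Nat.odd_iff.mpr (by omega : M % 2 = 1))
  have h_zagier := card_posReps_four_modEq (by omega : M % 4 = 1) h_sq
  rw [h_coeff, coeff_squareSeries_mul_dilate, coeff_squareSeries_mul_dilate, h_empty, card_empty,
    card_posReps_sixteen hM] at h_modEq
  rw [card_divisors_eq_two_mul h_sq]
  refine h_modEq.trans ?_
  rw [Nat.ModEq] at h_zagier
  rw [Int.ModEq]
  omega

end Representation

section Arithmetic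

theorem dvd_and_dvd_of_dvd_sq_add_mul_sq {p a x y : ℕ} [Fact p.Prime]
    (ha : ¬IsSquare (-a : ZMod p)) (h : p ∣ x ^ 2 + a * y ^ 2) : p ∣ x ∧ p ∣ y := by
  simp only [← ZMod.natCast_eq_zero_iff, Nat.cast_add, Nat.cast_mul, Nat.cast_pow] at h ⊢
  have hy : (y : ZMod p) = 0 := by
    by_contra hy
    refine ha ⟨x / y, ?_⟩
    field_simp
    linear_combination -h
  exact ⟨by simpa [hy] using h, hy⟩

theorem sq_add_mul_sq_ne_prime_pow_mul {p a m : ℕ} [Fact p.Prime] (ha : ¬IsSquare (-a : ZMod p))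
    (hm : ¬p ∣ m) (k x y : ℕ) : x ^ 2 + a * y ^ 2 ≠ p ^ (2 * k + 1) * m := by
  have hp : 0 < p := (Fact.out : p.Prime).pos
  induction k generalizing x y with
  | zero =>
    intro h
    obtain ⟨⟨x, rfl⟩, y, rfl⟩ := dvd_and_dvd_of_dvd_sq_add_mul_sq ha ⟨m, by rw [h]; ring⟩
    refine hm ⟨x ^ 2 + a * y ^ 2, Nat.eq_of_mul_eq_mul_left hp ?_⟩
    linear_combination -h
  | succ k ih =>
    intro h
    obtain ⟨⟨x, rfl⟩, y, rfl⟩ :=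
      dvd_and_dvd_of_dvd_sq_add_mul_sq ha ⟨p ^ (2 * k + 2) * m, by rw [h]; ring⟩
    refine ih x y (Nat.eq_of_mul_eq_mul_left (pow_pos hp 2) ?_)
    linear_combination h

theorem four_dvd_card_divisors_prime_pow_mul {p k m : ℕ} (hp : p.Prime) (hm : ¬p ∣ m)
    (h_sq : ¬IsSquare m) : 4 ∣ #(p ^ (2 * k + 1) * m).divisors := by
  have h_coprime : (p ^ (2 * k + 1)).Coprime m := ((hp.coprime_iff_not_dvd).mpr hm).pow_left _
  rw [h_coprime.card_divisors_mul, Nat.divisors_prime_pow hp, card_map, card_range,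
    card_divisors_eq_two_mul h_sq]
  exact ⟨(k + 1) * #{t ∈ m.divisorsAntidiagonal | t.1 < t.2}, by ring⟩

theorem not_isSquare_of_pow_mul_mod_eight {p k m : ℕ} (hp : p % 8 ≠ 1)
    (h : p ^ (2 * k + 1) * m % 8 = 1) : ¬IsSquare m := by
  rintro ⟨r, rfl⟩
  have h_zmod : ∀ a s : ZMod 8, a * s ^ 2 = 1 → a = 1 := by decide
  refine hp ((ZMod.natCast_eq_natCast_iff' p 1 8).mp ?_)
  have h_cast := (ZMod.natCast_eq_natCast_iff' _ 1 8).mpr h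
  push_cast at h_cast ⊢
  exact h_zmod p (p ^ k * r) (by rw [← h_cast]; ring)

end Arithmetic

end RegularOverpartitions

open RegularOverpartitions in
theorem stmt_7_general {p k m : ℕ} (hp : p.Prime) (hp8 : p % 8 = 5 ∨ p % 8 = 7) (hm : ¬p ∣ m)
    (hM : p ^ (2 * k + 1) * m % 8 = 1) :
    32 ∣ regularOverpartitions 4 8 (2 * (p ^ (2 * k + 1) * m)) := by
  have : Fact p.Prime := ⟨hp⟩
  have h_neg_two : ¬IsSquare (-(2 : ℕ) : ZMod p) := by
    rw [Nat.cast_ofNat, ZMod.exists_sq_eq_neg_two_iff (by rintro rfl; omega)]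
    omega
  have h_modEq := regularOverpartitions_two_mul_modEq_card_divisors hM
    (sq_add_mul_sq_ne_prime_pow_mul h_neg_two hm k)
  have h_four : 4 ∣ #(p ^ (2 * k + 1) * m).divisors := four_dvd_card_divisors_prime_pow_mul hp hm
    (not_isSquare_of_pow_mul_mod_eight (by omega) hM)
  rw [Int.ModEq] at h_modEq
  omega

theorem stmt_7 (n α β γ : ℕ) (j : ℕ) (hj : j ∈ ({1, 2, 3, 4} : Finset ℕ)) :
    32 ∣ regularOverpartitions 4 8
        (16 * 3 ^ (4 * α) * 5 ^ (4 * β + 1) * 7 ^ (4 * γ) * (5 * n + j)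
          + 2 * 3 ^ (4 * α) * 5 ^ (4 * β + 2) * 7 ^ (4 * γ)) := by
  have h_five : ¬5 ∣ 3 ^ (4 * α) * 7 ^ (4 * γ) * (8 * (5 * n + j) + 5) := by
    have h_factor : ¬5 ∣ 8 * (5 * n + j) + 5 := by
      simp only [mem_insert, mem_singleton] at hj
      omega
    simp only [Nat.prime_five.dvd_mul, not_or]
    exact ⟨⟨mt Nat.prime_five.dvd_of_dvd_pow (by norm_num),
      mt Nat.prime_five.dvd_of_dvd_pow (by norm_num)⟩, h_factor⟩
  have h_mod : 5 ^ (2 * (2 * β) + 1) * (3 ^ (4 * α) * 7 ^ (4 * γ) * (8 * (5 * n + j) + 5)) % 8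
      = 1 := by
    simp [pow_succ, pow_mul, Nat.mul_mod, Nat.pow_mod, Nat.add_mod]
  convert stmt_7_general (k := 2 * β) Nat.prime_five (Or.inl rfl) h_five h_mod using 2
  ring
end

section
/- For all integers n ≥ 0, α ≥ 0, β ≥ 0, γ ≥ 0 and every k ∈ {1, 2, 3, 4, 5, 6}, the number of (4,8)-regular overpartitions satisfies p̄_{4,8}( 16 · 3^{4α} · 5^{4β} · 7^{4γ+1} · (7n + k) + 2 · 3^{4α} · 5^{4β} · 7^{4γ+2} ) ≡ 0 (mod 32). -/
/-!
Write `φ(q) = ∑ q ^ n ^ 2` over the integers. Gauss's product for `φ(-q)`, obtained from the finite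
identity of Shanks, turns the generating function of the `(4, 8)`-regular overpartitions into
`φ(-q ^ 4) / (φ(-q) φ(-q ^ 8))`. Clearing denominators with `φ(q) φ(-q) = φ(-q ^ 2) ^ 2` and
splitting `φ` by the parity of the index, the terms of exponent `4 n + 2` form the series
`4 ψ(q ^ 4) φ(-q ^ 4) ^ 2 / φ(-q) ^ 4`, where `ψ(q ^ 4) = ∑ q ^ (2 a (a + 1))` over `a ≥ 0`.

As `φ(-q) ^ 4 ≡ 1` modulo `8`, the denominator can be dropped modulo `32`. Since `φ = 1 + 2 u` and
`u ^ 2` is modulo `2` a series in the squared variable, the coefficient of `q ^ n` in the numerator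
is divisible by `32` unless `2 n + 1` is of the form `x ^ 2 + y ^ 2` or `x ^ 2 + 2 y ^ 2`.
A prime `p ≡ 7` modulo `8` dividing `2 n + 1` to an odd power excludes both forms, because `-1` and
`-2` are nonresidues modulo `p`.
-/

namespace RegularOverpartition

open PowerSeries PowerSeries.WithPiTopology Filter Topology

section SumOfPowers

variable {R ι κ : Type*} [CommRing R]

theorem X_pow_dvd_pow {q : R⟦X⟧} (hq : constantCoeff q = 0) (n : ℕ) : X ^ n ∣ q ^ n :=
  pow_dvd_pow_of_dvd (X_dvd_iff.2 hq) n

theorem tendsto_add_cofinite_atTop {w : ι → ℕ} {v : κ → ℕ} (hw : Tendsto w cofinite atTop)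
    (hv : Tendsto v cofinite atTop) :
    Tendsto (fun p : ι × κ ↦ w p.1 + v p.2) cofinite atTop := by
  rw [← coprod_cofinite, Filter.coprod, tendsto_sup]
  exact ⟨tendsto_atTop_mono (fun _ ↦ Nat.le_add_right _ _) (hw.comp tendsto_comap),
    tendsto_atTop_mono (fun _ ↦ Nat.le_add_left _ _) (hv.comp tendsto_comap)⟩

variable [TopologicalSpace R]

theorem summable_pow {q : R⟦X⟧} (hq : constantCoeff q = 0) {w : ι → ℕ}
    (hw : Tendsto w cofinite atTop) : Summable fun i ↦ q ^ w i := by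
  refine (summable_iff_summable_coeff R).2 fun d ↦ summable_of_hasFiniteSupport ?_
  refine (eventually_cofinite.1 (hw.eventually_gt_atTop d)).subset fun i hi hd ↦ hi ?_
  exact X_pow_dvd_iff.1 (X_pow_dvd_pow hq _) d hd

theorem exists_coeff_ne_zero_of_coeff_tsum_ne_zero [T2Space R] {f : ι → R⟦X⟧} {n : ℕ}
    (hn : coeff n (∑' i, f i) ≠ 0) : ∃ i, coeff n (f i) ≠ 0 := by
  by_cases hf : Summable f
  · contrapose! hn
    rw [hf.map_tsum (coeff n) (continuous_coeff R n)]
    simp [hn]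
  · simp [tsum_eq_zero_of_not_summable hf] at hn

variable [IsTopologicalRing R] [T2Space R]

theorem hasSum_pow_add {q : R⟦X⟧} (hq : constantCoeff q = 0) {w : ι → ℕ} {v : κ → ℕ}
    (hw : Tendsto w cofinite atTop) (hv : Tendsto v cofinite atTop) :
    HasSum (fun p : ι × κ ↦ q ^ (w p.1 + v p.2)) ((∑' i, q ^ w i) * ∑' j, q ^ v j) := by
  simpa only [pow_add] using (summable_pow hq hw).hasSum.mul (summable_pow hq hv).hasSum
    (by simpa only [pow_add] using summable_pow hq (tendsto_add_cofinite_atTop hw hv))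

end SumOfPowers

section ParityOfIndices

variable {M : Type*} [AddCommMonoid M] [TopologicalSpace M] [ContinuousAdd M] {a b : M}

theorem hasSum_int_even_add_odd {f : ℤ → M} (heven : HasSum (fun n ↦ f (2 * n)) a)
    (hodd : HasSum (fun n ↦ f (2 * n + 1)) b) : HasSum f (a + b) := by
  have inj_even : Function.Injective (fun n : ℤ ↦ 2 * n) := fun m n h ↦ by grind
  have inj_odd : Function.Injective (fun n : ℤ ↦ 2 * n + 1) := fun m n h ↦ by grind
  refine (inj_even.hasSum_range_iff.2 heven).add_isCompl ?_ (inj_odd.hasSum_range_iff.2 hodd)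
  refine isCompl_iff.2 ⟨Set.disjoint_left.2 ?_, codisjoint_iff_le_sup.2 ?_⟩
  · rintro _ ⟨m, rfl⟩ ⟨n, h⟩
    grind
  · intro n _
    rcases Int.even_or_odd' n with ⟨m, hm | hm⟩
    · exact .inl ⟨m, hm.symm⟩
    · exact .inr ⟨m, hm.symm⟩

theorem hasSum_int_prod_even_add_odd {f : ℤ × ℤ → M}
    (heven : HasSum (fun p : ℤ × ℤ ↦ f (p.1 + p.2, p.1 - p.2)) a)
    (hodd : HasSum (fun p : ℤ × ℤ ↦ f (p.1 + p.2 + 1, p.1 - p.2)) b) : HasSum f (a + b) := by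
  have inj_even : Function.Injective (fun p : ℤ × ℤ ↦ (p.1 + p.2, p.1 - p.2)) := by
    rintro ⟨x, y⟩ ⟨z, w⟩ h
    grind
  have inj_odd : Function.Injective (fun p : ℤ × ℤ ↦ (p.1 + p.2 + 1, p.1 - p.2)) := by
    rintro ⟨x, y⟩ ⟨z, w⟩ h
    grind
  refine (inj_even.hasSum_range_iff.2 heven).add_isCompl ?_ (inj_odd.hasSum_range_iff.2 hodd)
  refine isCompl_iff.2 ⟨Set.disjoint_left.2 ?_, codisjoint_iff_le_sup.2 ?_⟩
  · rintro _ ⟨p, rfl⟩ ⟨p', h⟩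
    grind
  · rintro ⟨x, y⟩ -
    rcases Int.even_or_odd' (x + y) with ⟨z, hz | hz⟩
    · exact .inl ⟨(z, x - z), by grind⟩
    · exact .inr ⟨(z, x - z - 1), by grind⟩

end ParityOfIndices

section Theta

/-- The pronic number `n (n + 1)`, which is nonnegative for every integer `n`. -/
def pronic (n : ℤ) : ℕ := (n * (n + 1)).toNat

theorem natCast_pronic (n : ℤ) : (pronic n : ℤ) = n * (n + 1) := by
  refine Int.toNat_of_nonneg ?_
  rcases le_or_gt 0 n with hn | hn
  · positivity
  · exact mul_nonneg_of_nonpos_of_nonpos hn.le hn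

theorem pronic_natCast (n : ℕ) : pronic n = n * (n + 1) := by
  zify
  exact natCast_pronic n

theorem pronic_neg_sub_one (n : ℤ) : pronic (-n - 1) = pronic n := by
  simp only [pronic]
  ring_nf

theorem tendsto_natAbs_cofinite_atTop : Tendsto Int.natAbs cofinite atTop := by
  refine tendsto_atTop.2 fun b ↦ eventually_cofinite.2 ?_
  exact (Set.finite_Icc (-b : ℤ) b).subset fun n hn ↦ by
    simp only [Set.mem_ofPred_eq, Set.mem_Icc] at hn ⊢
    omega

theorem tendsto_sq_natAbs_cofinite_atTop :
    Tendsto (fun n : ℤ ↦ n.natAbs ^ 2) cofinite atTop :=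
  tendsto_atTop_mono (fun _ ↦ Nat.le_self_pow two_ne_zero _) tendsto_natAbs_cofinite_atTop

theorem tendsto_pronic_cofinite_atTop : Tendsto pronic cofinite atTop := by
  have hsub := (tendsto_sub_atTop_nat 1).comp tendsto_natAbs_cofinite_atTop
  refine tendsto_atTop_mono (fun n ↦ ?_) hsub
  have hpronic := natCast_pronic n
  rcases le_or_gt 0 n with hn | hn
  · have : n ≤ pronic n := by nlinarith
    grind
  · have : -n - 1 ≤ pronic n := by nlinarith
    grind

variable {R : Type*} [CommRing R] [TopologicalSpace R]

/-- Jacobi's theta function `φ(q) = ∑ q ^ n ^ 2`, summed over the integers. The alternating series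
`∑ (-1) ^ n q ^ n ^ 2` is `theta (-q)`. -/
noncomputable def theta (q : R⟦X⟧) : R⟦X⟧ := ∑' n : ℤ, q ^ n.natAbs ^ 2

/-- The series `∑ q ^ (n (n + 1))`, summed over the integers, which is `2 ψ(q ^ 2)` for Ramanujan's
`ψ`. -/
noncomputable def pronicTheta (q : R⟦X⟧) : R⟦X⟧ := ∑' n : ℤ, q ^ pronic n

/-- The part `∑ q ^ n ^ 2` of Jacobi's theta function over the positive integers, indexed from
`0`. -/
noncomputable def thetaTail (q : R⟦X⟧) : R⟦X⟧ := ∑' n : ℕ, q ^ (n + 1) ^ 2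

/-- Ramanujan's `ψ(q ^ 2) = ∑ q ^ (n (n + 1))`, summed over the natural numbers. -/
noncomputable def halfPronicTheta (q : R⟦X⟧) : R⟦X⟧ := ∑' n : ℕ, q ^ (n * (n + 1))

variable {q : R⟦X⟧}

theorem hasSum_theta (hq : constantCoeff q = 0) :
    HasSum (fun n : ℤ ↦ q ^ n.natAbs ^ 2) (theta q) :=
  (summable_pow hq tendsto_sq_natAbs_cofinite_atTop).hasSum

theorem hasSum_pronicTheta (hq : constantCoeff q = 0) :
    HasSum (fun n ↦ q ^ pronic n) (pronicTheta q) :=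
  (summable_pow hq tendsto_pronic_cofinite_atTop).hasSum

theorem hasSum_thetaTail (hq : constantCoeff q = 0) :
    HasSum (fun n : ℕ ↦ q ^ (n + 1) ^ 2) (thetaTail q) := by
  refine (summable_pow hq (tendsto_atTop_mono (fun n ↦ ?_)
    Nat.cofinite_eq_atTop.le)).hasSum
  nlinarith

theorem hasSum_halfPronicTheta (hq : constantCoeff q = 0) :
    HasSum (fun n : ℕ ↦ q ^ (n * (n + 1))) (halfPronicTheta q) := by
  refine (summable_pow hq (tendsto_atTop_mono (fun n ↦ ?_)
    Nat.cofinite_eq_atTop.le)).hasSum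
  nlinarith

variable [IsTopologicalRing R] [T2Space R]

theorem theta_eq_one_add_two_mul_thetaTail (hq : constantCoeff q = 0) :
    theta q = 1 + 2 * thetaTail q := by
  have htail : HasSum (fun n : ℕ ↦ q ^ (n + 1 : ℤ).natAbs ^ 2) (thetaTail q) := by
    refine (hasSum_thetaTail hq).congr_fun fun n ↦ ?_
    congr 1
  have hneg : HasSum (fun n : ℕ ↦ q ^ (-(n + 1 : ℤ)).natAbs ^ 2) (thetaTail q) := by
    simpa only [Int.natAbs_neg] using htail
  have hsum := HasSum.of_add_one_of_neg_add_one (f := fun n : ℤ ↦ q ^ n.natAbs ^ 2) htail hneg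
  rw [(hasSum_theta hq).unique hsum, Int.natAbs_zero, zero_pow two_ne_zero, pow_zero]
  ring

theorem pronicTheta_eq_two_mul_halfPronicTheta (hq : constantCoeff q = 0) :
    pronicTheta q = 2 * halfPronicTheta q := by
  have hnat : HasSum (fun n : ℕ ↦ q ^ pronic n) (halfPronicTheta q) := by
    simpa only [pronic_natCast] using hasSum_halfPronicTheta hq
  have hneg : HasSum (fun n : ℕ ↦ q ^ pronic (-(n + 1 : ℤ))) (halfPronicTheta q) := by
    simpa only [neg_add', pronic_neg_sub_one] using hnat
  rw [two_mul]
  exact (hasSum_pronicTheta hq).unique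
    (HasSum.of_nat_of_neg_add_one (f := fun n ↦ q ^ pronic n) hnat hneg)

theorem theta_eq_theta_pow_four (hq : constantCoeff q = 0) :
    theta q = theta (q ^ 4) + q * pronicTheta (q ^ 4) := by
  have hq4 : constantCoeff (q ^ 4) = 0 := by simp [hq]
  refine (hasSum_theta hq).unique (hasSum_int_even_add_odd ?_ ?_)
  · refine (hasSum_theta hq4).congr_fun fun n ↦ ?_
    rw [← pow_mul]
    congr 1
    zify [sq_abs]
    ring
  · refine ((hasSum_pronicTheta hq4).mul_left q).congr_fun fun n ↦ ?_
    rw [← pow_mul, ← pow_succ']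
    congr 1
    zify [natCast_pronic, sq_abs]
    ring

theorem theta_sq (hq : constantCoeff q = 0) :
    theta q ^ 2 = theta (q ^ 2) ^ 2 + q * pronicTheta (q ^ 2) ^ 2 := by
  have hq2 : constantCoeff (q ^ 2) = 0 := by simp [hq]
  have hsq := tendsto_sq_natAbs_cofinite_atTop
  have hpr := tendsto_pronic_cofinite_atTop
  rw [sq (theta q), sq (theta _), sq (pronicTheta _)]
  refine (hasSum_pow_add hq hsq hsq).unique (hasSum_int_prod_even_add_odd ?_ ?_)
  · refine (hasSum_pow_add hq2 hsq hsq).congr_fun fun p ↦ ?_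
    rw [← pow_mul]
    congr 1
    zify [sq_abs]
    ring
  · refine ((hasSum_pow_add hq2 hpr hpr).mul_left q).congr_fun fun p ↦ ?_
    rw [← pow_mul, ← pow_succ']
    congr 1
    zify [natCast_pronic, sq_abs]
    ring

theorem pronicTheta_sq (hq : constantCoeff q = 0) :
    pronicTheta q ^ 2 = 2 * pronicTheta (q ^ 2) * theta (q ^ 2) := by
  have hq2 : constantCoeff (q ^ 2) = 0 := by simp [hq]
  have hsq := tendsto_sq_natAbs_cofinite_atTop
  have hpr := tendsto_pronic_cofinite_atTop
  have hmul := hasSum_pow_add hq2 hpr hsq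
  rw [sq (pronicTheta q), two_mul, add_mul]
  refine (hasSum_pow_add hq hpr hpr).unique (hasSum_int_prod_even_add_odd ?_ ?_)
  · refine hmul.congr_fun fun p ↦ ?_
    rw [← pow_mul]
    congr 1
    zify [natCast_pronic, sq_abs]
    ring
  · refine (((Equiv.prodComm ℤ ℤ).trans ((Equiv.refl ℤ).prodCongr
      (Equiv.addRight 1))).hasSum_iff.2 hmul).congr_fun fun p ↦ ?_
    simp only [Function.comp_apply, Equiv.trans_apply, Equiv.prodComm_apply, Equiv.prodCongr_apply,
      Prod.map, Prod.swap, Equiv.refl_apply, Equiv.coe_addRight]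
    rw [← pow_mul]
    congr 1
    zify [natCast_pronic, sq_abs]
    ring

end Theta

section ThetaProduct

variable {R : Type*} [CommRing R] [TopologicalSpace R] [T2Space R] {q : R⟦X⟧}

theorem constantCoeff_thetaTail (hq : constantCoeff q = 0) :
    constantCoeff (thetaTail q) = 0 := by
  have hterm (n : ℕ) : constantCoeff (q ^ (n + 1) ^ 2) = 0 := by simp [hq]
  refine ((hasSum_thetaTail hq).map constantCoeff (continuous_constantCoeff R)).unique ?_
  simpa only [Function.comp_def, hterm] using hasSum_zero

variable [IsTopologicalRing R]

theorem theta_neg_eq_theta_pow_four (hq : constantCoeff q = 0) :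
    theta (-q) = theta (q ^ 4) - q * pronicTheta (q ^ 4) := by
  rw [theta_eq_theta_pow_four (q := -q) (by simp [hq]), Even.neg_pow (by decide)]
  ring

theorem theta_mul_theta_neg (hq : constantCoeff q = 0) :
    theta q * theta (-q) = theta (-q ^ 2) ^ 2 := by
  rw [theta_sq (q := -q ^ 2) (by simp [hq]), neg_sq, ← pow_mul, theta_neg_eq_theta_pow_four hq,
    theta_eq_theta_pow_four hq]
  ring

theorem isUnit_theta (hq : constantCoeff q = 0) : IsUnit (theta q) := by
  rw [isUnit_iff_constantCoeff, theta_eq_one_add_two_mul_thetaTail hq]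
  simp [constantCoeff_thetaTail hq]

end ThetaProduct

section Expand

variable {R : Type*} [CommRing R] [TopologicalSpace R] {m : ℕ} (hm : m ≠ 0)

theorem continuous_expand : Continuous (expand m hm : R⟦X⟧ → R⟦X⟧) := by
  refine continuous_iff_continuousAt.2 fun f ↦ (tendsto_iff_coeff_tendsto ..).2 fun d ↦ ?_
  simp only [coeff_expand]
  split_ifs
  · exact (continuous_coeff R _).continuousAt
  · exact tendsto_const_nhds

variable [T2Space R] {q : R⟦X⟧}

theorem theta_expand (hq : constantCoeff q = 0) :
    theta (expand m hm q) = expand m hm (theta q) := by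
  simpa only [theta, map_pow] using
    (summable_pow hq tendsto_sq_natAbs_cofinite_atTop).map_tsum _ (continuous_expand hm) |>.symm

theorem pronicTheta_expand (hq : constantCoeff q = 0) :
    pronicTheta (expand m hm q) = expand m hm (pronicTheta q) := by
  simpa only [pronicTheta, map_pow] using
    (summable_pow hq tendsto_pronic_cofinite_atTop).map_tsum _ (continuous_expand hm) |>.symm

end Expand

section Shanks

variable {A : Type*} [CommRing A] (q : A) {n s : ℕ}

/-- The summand `(-1) ^ (s + 1) q ^ ((s + 1) (n + 1)) ∏_{i ≤ s} (1 + q ^ i) ∏_{s + 1 < i ≤ n}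
(1 - q ^ i)` of the error term in Shanks's finite form of Gauss's identity. -/
def shanksTerm (n s : ℕ) : A :=
  (-1) ^ (s + 1) * q ^ ((s + 1) * (n + 1)) *
    ((∏ i ∈ Finset.range s, (1 + q ^ (i + 1))) * ∏ i ∈ Finset.Ico (s + 1) n, (1 - q ^ (i + 1)))

/-- The sequence whose differences measure how `shanksTerm` changes with `n`. -/
def shanksBoundary (n s : ℕ) : A :=
  (-1) ^ s * q ^ ((s + 1) * (n + 1)) *
    ((∏ i ∈ Finset.range s, (1 + q ^ (i + 1))) * ∏ i ∈ Finset.Ico s n, (1 - q ^ (i + 1)))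

theorem shanksTerm_succ (hs : s < n) :
    shanksTerm q (n + 1) s = (1 + q ^ (n + 1)) * shanksTerm q n s +
      (shanksBoundary q n s - shanksBoundary q n (s + 1)) := by
  simp only [shanksTerm, shanksBoundary]
  rw [Finset.prod_Ico_succ_top hs, Finset.prod_eq_prod_Ico_succ_bot hs, Finset.prod_range_succ]
  ring

theorem sum_shanksTerm_succ (n : ℕ) :
    ∑ s ∈ Finset.range (n + 1), shanksTerm q (n + 1) s =
      (1 + q ^ (n + 1)) * ∑ s ∈ Finset.range n, shanksTerm q n s +
        (shanksBoundary q n 0 - shanksBoundary q n n) + shanksTerm q (n + 1) n := by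
  rw [Finset.sum_range_succ, Finset.sum_congr rfl fun s hs ↦
    shanksTerm_succ q (Finset.mem_range.1 hs), Finset.sum_add_distrib, ← Finset.mul_sum,
    Finset.sum_range_sub']

theorem pow_dvd_sum_shanksTerm (n : ℕ) :
    q ^ (n + 1) ∣ ∑ s ∈ Finset.range n, shanksTerm q n s :=
  Finset.dvd_sum fun _ _ ↦ ((pow_dvd_pow q (by nlinarith)).mul_left _).mul_right _

theorem shanks_identity (n : ℕ) :
    (1 + 2 * ∑ s ∈ Finset.range n, (-q) ^ (s + 1) ^ 2) * ∏ i ∈ Finset.range n, (1 + q ^ (i + 1)) =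
      ∏ i ∈ Finset.range n, (1 - q ^ (i + 1)) + 2 * ∑ s ∈ Finset.range n, shanksTerm q n s := by
  induction n with
  | zero => simp
  | succ n ih =>
    have hsign : (-q) ^ (n + 1) ^ 2 = (-1) ^ (n + 1) * q ^ (n + 1) ^ 2 := by
      rw [neg_pow, neg_one_pow_congr (n := n + 1) (by simp [Nat.even_pow])]
    rw [sum_shanksTerm_succ, Finset.sum_range_succ, Finset.prod_range_succ, Finset.prod_range_succ,
      hsign]
    simp only [shanksTerm, shanksBoundary, Finset.Ico_self, Finset.prod_empty,
      Finset.range_eq_Ico] at ih ⊢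
    linear_combination (1 + q ^ (n + 1)) * ih

end Shanks

section Gauss

variable {R : Type*} [CommRing R] [TopologicalSpace R] {q : R⟦X⟧}

theorem tendsto_zero_of_X_pow_dvd {f : ℕ → R⟦X⟧} (hf : ∀ n, X ^ n ∣ f n) :
    Tendsto f atTop (𝓝 0) := by
  refine (tendsto_iff_coeff_tendsto ..).2 fun d ↦ ?_
  refine tendsto_atTop_of_eventually_const (i₀ := d + 1) fun i hi ↦ ?_
  rw [map_zero]
  exact X_pow_dvd_iff.1 (hf i) d hi

theorem multipliable_one_add_of_X_pow_dvd {f : ℕ → R⟦X⟧} (hf : ∀ n, X ^ n ∣ f n) :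
    Multipliable fun i ↦ 1 + f i := by
  refine multipliable_one_add_of_tendsto_order_atTop_nhds_top _ ?_
  refine tendsto_nhds_top_mono ?_ (.of_forall fun n ↦ nat_le_order _ _ (X_pow_dvd_iff.1 (hf n)))
  exact ENat.tendsto_natCast_nhds_top

theorem multipliable_one_add_pow_succ (hq : constantCoeff q = 0) (ε : R⟦X⟧) :
    Multipliable fun i : ℕ ↦ 1 + ε * q ^ (i + 1) :=
  multipliable_one_add_of_X_pow_dvd fun n ↦
    ((X_pow_dvd_pow hq n).trans (pow_dvd_pow q n.le_succ)).mul_left ε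

variable [IsTopologicalRing R] [T2Space R]

theorem theta_neg_mul_tprod_one_add (hq : constantCoeff q = 0) :
    theta (-q) * ∏' i : ℕ, (1 + q ^ (i + 1)) = ∏' i : ℕ, (1 - q ^ (i + 1)) := by
  have hplus : Multipliable fun i : ℕ ↦ 1 + q ^ (i + 1) := by
    simpa only [one_mul] using multipliable_one_add_pow_succ hq 1
  have hminus : Multipliable fun i : ℕ ↦ 1 - q ^ (i + 1) := by
    simpa only [neg_one_mul, ← sub_eq_add_neg] using multipliable_one_add_pow_succ hq (-1)
  have herror : Tendsto (fun n ↦ ∑ s ∈ Finset.range n, shanksTerm q n s) atTop (𝓝 0) :=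
    tendsto_zero_of_X_pow_dvd fun n ↦ (X_pow_dvd_pow hq n).trans
      ((pow_dvd_pow q n.le_succ).trans (pow_dvd_sum_shanksTerm q n))
  have htail := (hasSum_thetaTail (q := -q) (by simp [hq])).tendsto_sum_nat
  have hleft := ((htail.const_mul 2).const_add 1).mul hplus.hasProd.tendsto_prod_nat
  simp only [shanks_identity] at hleft
  have hright := hminus.hasProd.tendsto_prod_nat.add (herror.const_mul 2)
  rw [theta_eq_one_add_two_mul_thetaTail (by simp [hq]), tendsto_nhds_unique hleft hright]
  ring

end Gauss

section PartProduct

variable {R : Type*} [CommRing R] [TopologicalSpace R]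

/-- The product of `1 + ε X ^ i` over the positive integers `i` satisfying `p`. -/
noncomputable def partProd (ε : R⟦X⟧) (p : ℕ → Prop) [DecidablePred p] : R⟦X⟧ :=
  ∏' i : ℕ, if p (i + 1) then 1 + ε * X ^ (i + 1) else 1

variable (ε : R⟦X⟧) (p r s t : ℕ → Prop) [DecidablePred p] [DecidablePred r] [DecidablePred s]
  [DecidablePred t]

theorem hasProd_partProd :
    HasProd (fun i : ℕ ↦ if p (i + 1) then 1 + ε * X ^ (i + 1) else 1) (partProd ε p) := by
  refine Multipliable.hasProd ?_
  convert multipliable_one_add_of_X_pow_dvd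
    (f := fun i ↦ if p (i + 1) then ε * X ^ (i + 1) else 0) (fun i ↦ ?_) using 2 with i
  · split_ifs <;> simp
  · split_ifs
    · exact (pow_dvd_pow X i.le_succ).mul_left ε
    · exact dvd_zero _

theorem partProd_dvd {k : ℕ} (hk : 0 < k) :
    partProd ε (k ∣ ·) = ∏' i : ℕ, (1 + ε * (X ^ k) ^ (i + 1)) := by
  have succ_pred (i : ℕ) : k * (i + 1) - 1 + 1 = k * (i + 1) :=
    Nat.sub_add_cancel (Nat.mul_pos hk i.succ_pos)
  have inj : Function.Injective fun i ↦ k * (i + 1) - 1 := fun i j hij ↦ by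
    have := congrArg (· + 1) hij
    simp only [succ_pred, mul_right_inj' hk.ne'] at this
    omega
  refine (inj.tprod_eq fun i hi ↦ ?_).symm.trans ?_
  · obtain ⟨c, hc⟩ : k ∣ i + 1 := by
      by_contra hndvd
      simp [hndvd] at hi
    obtain ⟨d, rfl⟩ : ∃ d, c = d + 1 := Nat.exists_eq_add_one_of_ne_zero (by grind)
    exact ⟨d, by simp [← hc]⟩
  · simp [succ_pred, pow_mul]

variable [T2Space R]

theorem isUnit_partProd : IsUnit (partProd ε p) := by
  have hone : constantCoeff (partProd ε p) = 1 := by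
    refine ((hasProd_partProd ε p).map constantCoeff (continuous_constantCoeff R)).unique ?_
    convert hasProd_one with i
    simp only [Function.comp_apply]
    split_ifs <;> simp
  exact isUnit_iff_constantCoeff.2 (hone ▸ isUnit_one)

variable [IsTopologicalRing R]

variable {p r s t} in
theorem partProd_mul_partProd (hs : ∀ i, s i ↔ p i ∨ r i) (ht : ∀ i, t i ↔ p i ∧ r i) :
    partProd ε p * partProd ε r = partProd ε s * partProd ε t := by
  refine ((hasProd_partProd ε p).mul (hasProd_partProd ε r)).unique ?_
  convert (hasProd_partProd ε s).mul (hasProd_partProd ε t) using 2 with i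
  by_cases hp : p (i + 1) <;> by_cases hr : r (i + 1) <;> simp [hs, ht, hp, hr]

theorem theta_neg_mul_partProd {k : ℕ} (hk : 0 < k) :
    theta (-X ^ k) * partProd (1 : R⟦X⟧) (k ∣ ·) = partProd (-1) (k ∣ ·) := by
  simpa only [partProd_dvd _ hk, one_mul, neg_one_mul, ← sub_eq_add_neg] using
    theta_neg_mul_tprod_one_add (q := (X : R⟦X⟧) ^ k) (by simp [hk.ne'])

end PartProduct

section GeneratingFunction

theorem mod_two_mul_eq_iff {k : ℕ} (hk : 0 < k) (i : ℕ) :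
    i % (2 * k) = k ↔ k ∣ i ∧ ¬2 * k ∣ i := by
  rw [Nat.dvd_iff_mod_eq_zero (m := 2 * k)]
  constructor
  · intro h
    exact ⟨(Nat.dvd_mod_iff (dvd_mul_left k 2)).1 h.symm.dvd, by omega⟩
  · rintro ⟨⟨c, rfl⟩, hc⟩
    rw [mul_comm 2, Nat.mul_mod_mul_left] at hc ⊢
    rcases Nat.mod_two_eq_zero_or_one c with h | h <;> simp_all

variable {R : Type*} [CommRing R] [TopologicalSpace R] [T2Space R] (p : ℕ → Prop) [DecidablePred p]

theorem mk_card_filter_distincts :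
    mk (fun n ↦ (((Nat.Partition.distincts n).filter (∀ i ∈ ·.parts, p i)).card : R)) =
      partProd 1 p := by
  have hgenFun : mk (fun n ↦ (((Nat.Partition.distincts n).filter (∀ i ∈ ·.parts, p i)).card : R)) =
      Nat.Partition.genFun fun i c ↦ if p i ∧ c < 2 then 1 else 0 := by
    simp_rw [Nat.Partition.genFun, ← Nat.Partition.countRestricted_two,
      Nat.Partition.countRestricted, Finset.filter_filter, Finset.card_filter, Finsupp.prod,
      Finset.prod_boole]
    ext n
    simp only [coeff_mk, Nat.cast_sum, Nat.cast_ite, Nat.cast_one, Nat.cast_zero]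
    refine Finset.sum_congr rfl fun μ _ ↦ ?_
    congr 1
    simp only [Order.lt_two_iff, Multiset.toFinsupp_support, Multiset.mem_toFinset,
      Multiset.toFinsupp_apply, eq_iff_iff]
    grind
  rw [hgenFun, Nat.Partition.genFun_eq_tprod]
  refine tprod_congr fun i ↦ ?_
  rw [tsum_eq_single 0]
  · split_ifs <;> simp_all
  · intro j hj
    simp [hj]

variable [IsTopologicalRing R]

theorem mk_card_restricted_mul_partProd :
    mk (fun n ↦ ((Nat.Partition.restricted n p).card : R)) * partProd (-1) p = 1 := by
  refine ((Nat.Partition.hasProd_powerSeriesMk_card_restricted R p).mul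
    (hasProd_partProd (-1) p)).unique ?_
  convert hasProd_one with i
  split_ifs
  · simp_rw [pow_mul]
    rw [neg_one_mul, ← sub_eq_add_neg, tsum_pow_mul_one_sub_of_constantCoeff_eq_zero (by simp)]
  · exact mul_one 1

theorem mk_regularOverpartitions_mul_partProd (j k : ℕ) :
    mk (fun n ↦ (regularOverpartitions j k n : R)) * partProd (-1) (· % k ≠ j) =
      partProd 1 (· % k ≠ j) := by
  have hmul : mk (fun n ↦ (regularOverpartitions j k n : R)) =
      mk (fun n ↦ (((Nat.Partition.distincts n).filter (∀ i ∈ ·.parts, i % k ≠ j)).card : R)) *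
        mk (fun n ↦ ((Nat.Partition.restricted n (· % k ≠ j)).card : R)) := by
    ext n
    rw [coeff_mul, Finset.Nat.sum_antidiagonal_eq_sum_range_succ_mk]
    simp only [coeff_mk, regularOverpartitions, Nat.Partition.restricted]
    push_cast
    rfl
  rw [hmul, mul_assoc, mk_card_restricted_mul_partProd, mul_one, mk_card_filter_distincts]

theorem mk_regularOverpartitions_mul_theta {k : ℕ} (hk : 0 < k) :
    mk (fun n ↦ (regularOverpartitions k (2 * k) n : R)) * theta (-X) * theta (-X ^ (2 * k)) =
      theta (-X ^ k) := by
  set P : R⟦X⟧ := mk fun n ↦ (regularOverpartitions k (2 * k) n : R)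
  have hsplit (ε : R⟦X⟧) : partProd ε (· % (2 * k) ≠ k) * partProd ε (k ∣ ·) =
      partProd ε (1 ∣ ·) * partProd ε (2 * k ∣ ·) :=
    partProd_mul_partProd ε (fun i ↦ by grind [mod_two_mul_eq_iff])
      fun i ↦ by grind [mod_two_mul_eq_iff, dvd_of_mul_left_dvd]
  have hunit : IsUnit (partProd (1 : R⟦X⟧) (1 ∣ ·) * partProd 1 (2 * k ∣ ·)) :=
    (isUnit_partProd 1 _).mul (isUnit_partProd 1 _)
  refine hunit.mul_right_cancel ?_
  calc
    P * theta (-X) * theta (-X ^ (2 * k)) * (partProd 1 (1 ∣ ·) * partProd 1 (2 * k ∣ ·))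
      = P * (theta (-X ^ 1) * partProd 1 (1 ∣ ·) *
          (theta (-X ^ (2 * k)) * partProd 1 (2 * k ∣ ·))) := by
      rw [pow_one]
      ring
    _ = P * (partProd (-1) (1 ∣ ·) * partProd (-1) (2 * k ∣ ·)) := by
      rw [theta_neg_mul_partProd one_pos, theta_neg_mul_partProd (by positivity)]
    _ = partProd 1 (· % (2 * k) ≠ k) * partProd (-1) (k ∣ ·) := by
      rw [← hsplit, ← mul_assoc, mk_regularOverpartitions_mul_partProd]
    _ = theta (-X ^ k) * (partProd 1 (· % (2 * k) ≠ k) * partProd 1 (k ∣ ·)) := by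
      rw [← theta_neg_mul_partProd hk]
      ring
    _ = theta (-X ^ k) * (partProd 1 (1 ∣ ·) * partProd 1 (2 * k ∣ ·)) := by rw [hsplit]

end GeneratingFunction

section Dissection

variable {R : Type*} [CommRing R]

/-- The series `∑ a (m n + r) X ^ n` extracted from `∑ a n X ^ n`. -/
noncomputable def dissection (m r : ℕ) : R⟦X⟧ →ₗ[R] R⟦X⟧ where
  toFun f := mk fun n ↦ coeff (m * n + r) f
  map_add' f g := by ext n; simp
  map_smul' a f := by ext n; simp

theorem coeff_dissection (m r n : ℕ) (f : R⟦X⟧) :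
    coeff n (dissection m r f) = coeff (m * n + r) f := by
  simp [dissection]

theorem dissection_mul_expand {m r : ℕ} (hm : m ≠ 0) (hr : r < m) (f g : R⟦X⟧) :
    dissection m r (f * expand m hm g) = dissection m r f * g := by
  ext n
  rw [coeff_dissection, coeff_mul, coeff_mul]
  refine (Finset.sum_of_injOn (fun p : ℕ × ℕ ↦ (m * p.1 + r, m * p.2)) ?_ ?_ ?_ ?_).symm
  · rintro ⟨a, b⟩ - ⟨c, d⟩ - h
    simpa [hm] using h
  · rintro ⟨a, b⟩ hab
    rw [Finset.mem_coe, Finset.HasAntidiagonal.mem_antidiagonal] at hab ⊢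
    rw [← hab]
    ring
  · rintro ⟨i, j⟩ hij hnot
    rw [Finset.HasAntidiagonal.mem_antidiagonal] at hij
    rw [coeff_expand_of_not_dvd, mul_zero]
    rintro ⟨b, rfl⟩
    have hbn : b ≤ n := Nat.lt_succ_iff.1 (Nat.lt_of_mul_lt_mul_left (a := m) (by grind))
    refine hnot ⟨(n - b, b), by simpa using Nat.sub_add_cancel hbn, ?_⟩
    simp only [Nat.mul_sub, Prod.mk.injEq, and_true]
    have := Nat.mul_le_mul_left m hbn
    omega
  · rintro ⟨a, b⟩ -
    rw [coeff_dissection, coeff_expand_mul]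

theorem dissection_X_pow {m s : ℕ} (r : ℕ) (hs : s < m) :
    dissection m r (X ^ s : R⟦X⟧) = if s = r then 1 else 0 := by
  ext n
  have hiff : m * n + r = s ↔ s = r ∧ n = 0 := by
    rcases n.eq_zero_or_pos with rfl | hn
    · simp [eq_comm]
    · have := Nat.le_mul_of_pos_right m hn
      omega
  rw [coeff_dissection, coeff_X_pow]
  simp only [hiff, ite_and]
  by_cases hsr : s = r <;> simp only [hsr, if_true, if_false, coeff_one, map_zero]

theorem dissection_X_pow_mul_expand {m r s : ℕ} (hm : m ≠ 0) (hr : r < m) (hs : s < m)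
    (g : R⟦X⟧) : dissection m r (X ^ s * expand m hm g) = if s = r then g else 0 := by
  rw [dissection_mul_expand hm hr, dissection_X_pow r hs, ite_mul, one_mul, zero_mul]

end Dissection

section FourDissection

variable {R : Type*} [CommRing R] [TopologicalSpace R] [IsTopologicalRing R] [T2Space R]

theorem mk_regularOverpartitions_mul_theta_pow_three :
    mk (fun n ↦ (regularOverpartitions 4 8 n : R)) * (theta (-X ^ 4) ^ 3 * theta (-X ^ 8)) =
      theta X * theta (X ^ 2) ^ 2 := by
  set P : R⟦X⟧ := mk fun n ↦ (regularOverpartitions 4 8 n : R)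
  have hP : P * theta (-X) * theta (-X ^ 8) = theta (-X ^ 4) :=
    mk_regularOverpartitions_mul_theta (by norm_num)
  have hX : theta X * theta (-X) = theta (-X ^ 2 : R⟦X⟧) ^ 2 :=
    theta_mul_theta_neg constantCoeff_X
  have hX2 : theta (X ^ 2) * theta (-X ^ 2) = theta (-X ^ 4 : R⟦X⟧) ^ 2 := by
    rw [theta_mul_theta_neg (by simp), ← pow_mul]
  refine (isUnit_theta (q := (-X ^ 4 : R⟦X⟧)) (by simp)).mul_right_cancel ?_
  calc
    P * (theta (-X ^ 4) ^ 3 * theta (-X ^ 8)) * theta (-X ^ 4)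
      = P * theta (-X ^ 8) * (theta (-X ^ 4) ^ 2) ^ 2 := by ring
    _ = P * theta (-X ^ 8) * theta (X ^ 2) ^ 2 * theta (-X ^ 2) ^ 2 := by
      rw [← hX2]
      ring
    _ = theta X * theta (X ^ 2) ^ 2 * (P * theta (-X) * theta (-X ^ 8)) := by
      rw [← hX]
      ring
    _ = theta X * theta (X ^ 2) ^ 2 * theta (-X ^ 4) := by rw [hP]

theorem theta_mul_theta_sq_eq_sum_expand :
    theta X * theta (X ^ 2 : R⟦X⟧) ^ 2 =
      X ^ 0 * expand 4 four_ne_zero (theta X ^ 3) +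
      X ^ 1 * expand 4 four_ne_zero (pronicTheta X * theta X ^ 2) +
      X ^ 2 * expand 4 four_ne_zero (theta X * pronicTheta X ^ 2) +
      X ^ 3 * expand 4 four_ne_zero (pronicTheta X ^ 3) := by
  have hq : constantCoeff (X : R⟦X⟧) = 0 := constantCoeff_X
  have htheta : theta (X ^ 4 : R⟦X⟧) = expand 4 four_ne_zero (theta X) := by
    rw [← theta_expand _ hq, expand_X]
  have hpronic : pronicTheta (X ^ 4 : R⟦X⟧) = expand 4 four_ne_zero (pronicTheta X) := by
    rw [← pronicTheta_expand _ hq, expand_X]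
  simp only [map_mul, map_pow, ← htheta, ← hpronic]
  rw [theta_sq (q := X ^ 2) (by simp), theta_eq_theta_pow_four hq, ← pow_mul]
  ring

theorem dissection_regularOverpartitions_mul_theta_pow_three :
    dissection 4 2 (mk fun n ↦ (regularOverpartitions 4 8 n : R)) *
      (theta (-X) ^ 3 * theta (-X ^ 2)) = theta X * pronicTheta X ^ 2 := by
  have hexpand : expand 4 four_ne_zero (theta (-X) ^ 3 * theta (-X ^ 2) : R⟦X⟧) =
      theta (-X ^ 4) ^ 3 * theta (-X ^ 8) := by
    simp only [map_mul, map_pow]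
    rw [← theta_expand _ (by simp), ← theta_expand _ (by simp)]
    simp only [map_neg, map_pow, expand_X, ← pow_mul]
  rw [← dissection_mul_expand four_ne_zero (by norm_num), hexpand,
    mk_regularOverpartitions_mul_theta_pow_three, theta_mul_theta_sq_eq_sum_expand]
  simp only [map_add, dissection_X_pow_mul_expand, Nat.reduceLT]
  norm_num

theorem dissection_regularOverpartitions_mul_theta_pow_four :
    dissection 4 2 (mk fun n ↦ (regularOverpartitions 4 8 n : R)) * theta (-X) ^ 4 =
      4 * (halfPronicTheta (X ^ 2) * theta (-X ^ 4) ^ 2) := by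
  set D : R⟦X⟧ := dissection 4 2 (mk fun n ↦ (regularOverpartitions 4 8 n : R))
  have hD : D * (theta (-X) ^ 3 * theta (-X ^ 2)) = theta X * pronicTheta X ^ 2 :=
    dissection_regularOverpartitions_mul_theta_pow_three
  have hX : theta X * theta (-X) = theta (-X ^ 2 : R⟦X⟧) ^ 2 :=
    theta_mul_theta_neg constantCoeff_X
  have hX2 : theta (X ^ 2) * theta (-X ^ 2) = theta (-X ^ 4 : R⟦X⟧) ^ 2 := by
    rw [theta_mul_theta_neg (by simp), ← pow_mul]
  refine (isUnit_theta (q := (-X ^ 2 : R⟦X⟧)) (by simp)).mul_right_cancel ?_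
  calc
    D * theta (-X) ^ 4 * theta (-X ^ 2)
      = theta (-X) * (D * (theta (-X) ^ 3 * theta (-X ^ 2))) := by ring
    _ = theta (-X ^ 2) ^ 2 * pronicTheta X ^ 2 := by
      rw [hD, ← hX]
      ring
    _ = 4 * (halfPronicTheta (X ^ 2) * (theta (X ^ 2) * theta (-X ^ 2))) * theta (-X ^ 2) := by
      rw [pronicTheta_sq constantCoeff_X, pronicTheta_eq_two_mul_halfPronicTheta (by simp)]
      ring
    _ = 4 * (halfPronicTheta (X ^ 2) * theta (-X ^ 4) ^ 2) * theta (-X ^ 2) := by rw [hX2]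

end FourDissection

section Congruences

theorem sq_mul_dvd_coeff_sub {R : Type*} [CommRing R] {a b : R} {f g w : R⟦X⟧}
    (h : f * (1 + C (a * b) * w) = C a * g) (n : ℕ) :
    a ^ 2 * b ∣ coeff n f - a * coeff n g := by
  have hsub : f - C a * g = C (a ^ 2 * b) * (w * (C b * w * f - g)) := by
    simp only [map_mul, map_pow] at h ⊢
    linear_combination (1 - C a * C b * w) * h
  refine ⟨coeff n (w * (C b * w * f - g)), ?_⟩
  rw [← coeff_C_mul, ← coeff_C_mul, ← map_sub, hsub]

theorem exists_eq_mul_of_not_dvd_coeff_pow {p : ℕ} [Fact p.Prime] {f : ℤ⟦X⟧} {n : ℕ}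
    (hn : ¬ (p : ℤ) ∣ coeff n (f ^ p)) : ∃ j, n = p * j ∧ ¬ (p : ℤ) ∣ coeff j f := by
  have hp : p ≠ 0 := (Fact.out : p.Prime).ne_zero
  have hfrob : map (Int.castRingHom (ZMod p)) (f ^ p) =
      expand p hp (map (Int.castRingHom (ZMod p)) f) := by
    rw [map_pow, ← MvPowerSeries.map_frobenius_expand p hp, ZMod.frobenius_zmod,
      MvPowerSeries.map_id, RingHom.id_apply, expand]
  simp only [← ZMod.intCast_zmod_eq_zero_iff_dvd, ← eq_intCast (Int.castRingHom (ZMod p)),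
    ← coeff_map, hfrob] at hn ⊢
  obtain ⟨j, rfl⟩ : p ∣ n := by
    by_contra hdvd
    exact hn (coeff_expand_of_not_dvd p hp _ hdvd)
  exact ⟨j, rfl, by rwa [coeff_expand_mul] at hn⟩

end Congruences

section Support

variable {R : Type*} [CommRing R] [TopologicalSpace R] [T2Space R]

theorem exists_eq_of_coeff_halfPronicTheta_ne_zero {d n : ℕ}
    (hn : coeff n (halfPronicTheta (X ^ d : R⟦X⟧)) ≠ 0) : ∃ a, n = d * (a * (a + 1)) := by
  obtain ⟨a, ha⟩ := exists_coeff_ne_zero_of_coeff_tsum_ne_zero hn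
  rw [← pow_mul, coeff_X_pow] at ha
  exact ⟨a, of_not_not fun h ↦ ha (if_neg h)⟩

theorem exists_eq_of_coeff_thetaTail_ne_zero {d n : ℕ}
    (hn : coeff n (thetaTail (-X ^ d : R⟦X⟧)) ≠ 0) : ∃ b, n = d * b ^ 2 := by
  obtain ⟨b, hb⟩ := exists_coeff_ne_zero_of_coeff_tsum_ne_zero hn
  refine ⟨b + 1, of_not_not fun h ↦ hb ?_⟩
  rw [neg_pow, ← pow_mul]
  rcases neg_one_pow_eq_or R⟦X⟧ ((b + 1) ^ 2) with hsign | hsign <;>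
    simp [hsign, coeff_X_pow, h]

end Support

section ModThirtyTwo

theorem theta_pow_four {R : Type*} [CommRing R] [TopologicalSpace R] [IsTopologicalRing R]
    [T2Space R] {q : R⟦X⟧} (hq : constantCoeff q = 0) :
    theta q ^ 4 = 1 + 8 *
      (thetaTail q + 3 * thetaTail q ^ 2 + 4 * thetaTail q ^ 3 + 2 * thetaTail q ^ 4) := by
  rw [theta_eq_one_add_two_mul_thetaTail hq]
  ring

theorem thirtyTwo_dvd_regularOverpartitions_sub (n : ℕ) :
    32 ∣ (regularOverpartitions 4 8 (4 * n + 2) : ℤ) -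
      4 * coeff n (halfPronicTheta (X ^ 2) * theta (-X ^ 4 : ℤ⟦X⟧) ^ 2) := by
  have h := dissection_regularOverpartitions_mul_theta_pow_four (R := ℤ)
  rw [theta_pow_four (by simp), show (8 : ℤ⟦X⟧) = C (4 * 2) from rfl,
    show (4 : ℤ⟦X⟧) * (halfPronicTheta _ * _) = C 4 * _ from rfl] at h
  simpa [coeff_dissection] using sq_mul_dvd_coeff_sub (a := 4) (b := 2) h n

variable {m : ℕ}

theorem coeff_halfPronicTheta_eq_zero (hsq : ∀ x : ℕ, 2 * m + 1 ≠ x ^ 2) :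
    coeff m (halfPronicTheta (X ^ 2 : ℤ⟦X⟧)) = 0 := by
  by_contra hne
  obtain ⟨a, rfl⟩ := exists_eq_of_coeff_halfPronicTheta_ne_zero hne
  exact hsq (2 * a + 1) (by ring)

theorem coeff_halfPronicTheta_mul_thetaTail_eq_zero
    (hform : ∀ x y : ℕ, 2 * m + 1 ≠ x ^ 2 + 2 * y ^ 2) :
    coeff m (halfPronicTheta (X ^ 2) * thetaTail (-X ^ 4 : ℤ⟦X⟧)) = 0 := by
  rw [coeff_mul]
  refine Finset.sum_eq_zero fun ⟨i, j⟩ hij ↦ ?_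
  rw [Finset.HasAntidiagonal.mem_antidiagonal] at hij
  by_contra hne
  obtain ⟨a, rfl⟩ := exists_eq_of_coeff_halfPronicTheta_ne_zero (left_ne_zero_of_mul hne)
  obtain ⟨b, rfl⟩ := exists_eq_of_coeff_thetaTail_ne_zero (right_ne_zero_of_mul hne)
  exact hform (2 * a + 1) (2 * b) (by rw [← hij]; ring)

theorem two_dvd_coeff_halfPronicTheta_mul_thetaTail_sq
    (hform : ∀ x y : ℕ, 2 * m + 1 ≠ x ^ 2 + y ^ 2) :
    2 ∣ coeff m (halfPronicTheta (X ^ 2) * thetaTail (-X ^ 4 : ℤ⟦X⟧) ^ 2) := by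
  rw [coeff_mul]
  refine Finset.dvd_sum fun ⟨i, j⟩ hij ↦ ?_
  rw [Finset.HasAntidiagonal.mem_antidiagonal] at hij
  by_contra hndvd
  have hne : coeff i (halfPronicTheta (X ^ 2 : ℤ⟦X⟧)) ≠ 0 := fun h ↦ hndvd (by simp [h])
  obtain ⟨a, rfl⟩ := exists_eq_of_coeff_halfPronicTheta_ne_zero hne
  obtain ⟨l, rfl, hl⟩ :=
    exists_eq_mul_of_not_dvd_coeff_pow (p := 2) fun h ↦ hndvd (h.mul_left _)
  obtain ⟨b, rfl⟩ := exists_eq_of_coeff_thetaTail_ne_zero fun h ↦ hl (h ▸ dvd_zero _)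
  exact hform (2 * a + 1) (4 * b) (by rw [← hij]; ring)

theorem eight_dvd_coeff_halfPronicTheta_mul_theta_sq
    (hone : ∀ x y : ℕ, 2 * m + 1 ≠ x ^ 2 + y ^ 2)
    (htwo : ∀ x y : ℕ, 2 * m + 1 ≠ x ^ 2 + 2 * y ^ 2) :
    8 ∣ coeff m (halfPronicTheta (X ^ 2) * theta (-X ^ 4 : ℤ⟦X⟧) ^ 2) := by
  have hexpand : halfPronicTheta (X ^ 2) * theta (-X ^ 4 : ℤ⟦X⟧) ^ 2 =
      halfPronicTheta (X ^ 2) + C 4 * (halfPronicTheta (X ^ 2) * thetaTail (-X ^ 4)) +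
        C 4 * (halfPronicTheta (X ^ 2) * thetaTail (-X ^ 4) ^ 2) := by
    rw [theta_eq_one_add_two_mul_thetaTail (by simp), show C (4 : ℤ) = (4 : ℤ⟦X⟧) from rfl]
    ring
  obtain ⟨s, hs⟩ := two_dvd_coeff_halfPronicTheta_mul_thetaTail_sq hone
  refine ⟨s, ?_⟩
  rw [hexpand, map_add, map_add, coeff_C_mul, coeff_C_mul, hs,
    coeff_halfPronicTheta_mul_thetaTail_eq_zero htwo,
    coeff_halfPronicTheta_eq_zero fun x hx ↦ hone x 0 (by simpa using hx)]
  ring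

theorem thirtyTwo_dvd_regularOverpartitions_two_mul {M : ℕ} (hM : Odd M)
    (hone : ∀ x y : ℕ, M ≠ x ^ 2 + y ^ 2) (htwo : ∀ x y : ℕ, M ≠ x ^ 2 + 2 * y ^ 2) :
    32 ∣ regularOverpartitions 4 8 (2 * M) := by
  obtain ⟨m, rfl⟩ := hM
  have hsub := thirtyTwo_dvd_regularOverpartitions_sub m
  have hcoeff := eight_dvd_coeff_halfPronicTheta_mul_theta_sq hone htwo
  rw [show 2 * (2 * m + 1) = 4 * m + 2 by ring]
  omega

end ModThirtyTwo

section QuadraticForms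

variable {p : ℕ} [Fact p.Prime]

theorem prime_pow_odd_mul_ne_sq_sub_mul_sq {a c : ℤ} (ha : legendreSym p a = -1)
    (hc : ¬ (p : ℤ) ∣ c) (g : ℕ) (x y : ℤ) : p ^ (2 * g + 1) * c ≠ x ^ 2 - a * y ^ 2 := by
  have hp : (p : ℤ) ≠ 0 := mod_cast (Fact.out : p.Prime).ne_zero
  induction g generalizing x y with
  | zero =>
    intro h
    obtain ⟨⟨x, rfl⟩, ⟨y, rfl⟩⟩ :=
      legendreSym.prime_dvd_of_eq_neg_one ha (x := x) (y := y) ⟨c, by rw [← h]; ring⟩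
    exact hc ⟨x ^ 2 - a * y ^ 2, mul_left_cancel₀ hp (by linear_combination h)⟩
  | succ g ih =>
    intro h
    obtain ⟨⟨x, rfl⟩, ⟨y, rfl⟩⟩ := legendreSym.prime_dvd_of_eq_neg_one ha (x := x) (y := y)
      ⟨p ^ (2 * g + 2) * c, by rw [← h]; ring⟩
    exact ih x y (mul_left_cancel₀ (pow_ne_zero 2 hp) (by linear_combination h))

theorem legendreSym_neg_one_eq_neg_one (hp : p % 8 = 7) : legendreSym p (-1) = -1 := by
  rw [legendreSym.eq_neg_one_iff]
  push_cast
  rw [ZMod.exists_sq_eq_neg_one_iff]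
  omega

theorem legendreSym_neg_two_eq_neg_one (hp : p % 8 = 7) : legendreSym p (-2) = -1 := by
  rw [legendreSym.eq_neg_one_iff]
  push_cast
  rw [ZMod.exists_sq_eq_neg_two_iff (by omega)]
  omega

end QuadraticForms

end RegularOverpartition

open RegularOverpartition in
theorem stmt_8_general {p c : ℕ} [Fact p.Prime] (hp : p % 8 = 7) (hodd : Odd c) (hc : ¬ p ∣ c)
    (g : ℕ) : 32 ∣ regularOverpartitions 4 8 (2 * (p ^ (2 * g + 1) * c)) := by
  have hc' : ¬ (p : ℤ) ∣ c := mod_cast hc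
  refine thirtyTwo_dvd_regularOverpartitions_two_mul ?_ ?_ ?_
  · exact (Odd.pow (Nat.odd_iff.2 (by omega))).mul hodd
  · intro x y h
    refine prime_pow_odd_mul_ne_sq_sub_mul_sq (legendreSym_neg_one_eq_neg_one hp) hc' g x y ?_
    zify at h
    linear_combination h
  · intro x y h
    refine prime_pow_odd_mul_ne_sq_sub_mul_sq (legendreSym_neg_two_eq_neg_one hp) hc' g x y ?_
    zify at h
    linear_combination h

theorem stmt_8 (n α β γ : ℕ) (k : ℕ) (hk : k ∈ ({1, 2, 3, 4, 5, 6} : Finset ℕ)) :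
    32 ∣ regularOverpartitions 4 8
        (16 * 3 ^ (4 * α) * 5 ^ (4 * β) * 7 ^ (4 * γ + 1) * (7 * n + k)
          + 2 * 3 ^ (4 * α) * 5 ^ (4 * β) * 7 ^ (4 * γ + 2)) := by
  have : Fact (Nat.Prime 7) := ⟨by norm_num⟩
  have hodd : Odd (3 ^ (4 * α) * 5 ^ (4 * β) * (8 * (7 * n + k) + 7)) := by
    simp only [Nat.odd_mul]
    exact ⟨⟨Odd.pow (by decide), Odd.pow (by decide)⟩, Nat.odd_iff.2 (by omega)⟩
  have hndvd : ¬ 7 ∣ 3 ^ (4 * α) * 5 ^ (4 * β) * (8 * (7 * n + k) + 7) := by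
    have hlast : ¬ 7 ∣ 8 * (7 * n + k) + 7 := by
      simp only [Finset.mem_insert, Finset.mem_singleton] at hk
      omega
    have hthree : Nat.Coprime 7 (3 ^ (4 * α)) := Nat.Coprime.pow_right _ (by norm_num)
    have hfive : Nat.Coprime 7 (5 ^ (4 * β)) := Nat.Coprime.pow_right _ (by norm_num)
    rwa [(hthree.mul_right hfive).dvd_mul_left]
  convert stmt_8_general (p := 7) rfl hodd hndvd (2 * γ) using 2
  ring
end

section
/- For all integers n ≥ 0, α ≥ 0, β ≥ 0, γ ≥ 0 and every k ∈ {1, 2, 3, 4, 5, 6}, the number of (4,8)-regular overpartitions satisfies p̄_{4,8}( 16 · 3^{4α} · 5^{4β} · 7^{4γ+3} · (7n + k) + 2 · 3^{4α} · 5^{4β} · 7^{4(γ+1)} ) ≡ 0 (mod 32). -/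
/-!
Write `φ(q) = 1 + 2u(q)` with `u(q) = ∑_{k ≥ 1} q^(k²)`. Gauss's identity
`φ(-q) = ∏ (1 - qⁿ) / (1 + qⁿ)` turns the generating function `G` of `(4, 8)`-regular overpartitions
into `φ(-q⁴) / (φ(-q) φ(-q⁸))`. Together with `φ(q) φ(-q) = φ(-q²)²` and the fact that the even part
of `φ(q)` is `φ(q⁴)`, extracting the exponents `2 (2n + 1)` from `G` leaves
`4 ω(q) φ(-q⁴)² / φ(-q)⁴`, where `ω` collects the coefficients of `u` at the odd exponents `2n + 1`.
As `φ(-q)⁴ ≡ 1 (mod 8)` and `φ(-q)² ≡ 1 + 4 u(q) + 4 u(q²) (mod 8)`, this is congruent to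
`4 ω(q) (1 + 4 u(q⁴) + 4 u(q⁸))` modulo `32`. Hence `32` divides the coefficient of `G` at `2m`
whenever the odd number `m` is represented neither by `x² + 8y²` nor by `x² + 16y²`. Since `-1` and
`-2` are nonresidues modulo `7`, a number exactly divisible by an odd power of `7` is represented by
neither form.
-/

open PowerSeries

/-- The substitution `f(X) ↦ f(X ^ d)`. -/
local notation:max "𝓥" d:max => expand d (NeZero.ne d)

section PowerSeriesAlgebra

variable {R : Type*} [CommRing R]

/-- For `f = ∑ a n * X ^ n`, the series `∑ a (d * n + r) * X ^ n` of the coefficients of `f` along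
the residue class of `r` modulo `d`. -/
noncomputable def dissection (d r : ℕ) : R⟦X⟧ →ₗ[R] R⟦X⟧ where
  toFun f := PowerSeries.mk fun n => coeff (d * n + r) f
  map_add' f g := by ext n; simp
  map_smul' c f := by ext n; simp

@[simp]
theorem coeff_dissection (d r n : ℕ) (f : R⟦X⟧) :
    coeff n (dissection d r f) = coeff (d * n + r) f :=
  coeff_mk n fun k => coeff (d * k + r) f

theorem dissection_mul_expand {d r : ℕ} (hd : d ≠ 0) (hr : r < d) (f g : R⟦X⟧) :
    dissection d r (f * expand d hd g) = dissection d r f * g := by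
  ext n
  rw [coeff_dissection, coeff_mul, coeff_mul]
  symm
  apply Finset.sum_of_injOn fun ij : ℕ × ℕ => (d * ij.1 + r, d * ij.2)
  · rintro ⟨i, j⟩ - ⟨i', j'⟩ - h
    simpa [hd] using h
  · rintro ⟨i, j⟩ hij
    have hij : i + j = n := by simpa using hij
    rw [Finset.mem_coe, Finset.HasAntidiagonal.mem_antidiagonal, ← hij]
    ring
  · rintro ⟨i, j⟩ hij hnot
    have hij : i + j = d * n + r := by simpa using hij
    refine mul_eq_zero_of_right _ (coeff_expand_of_not_dvd _ _ _ ?_)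
    rintro ⟨k, rfl⟩
    have hk : k ≤ n := by
      by_contra! hlt
      nlinarith
    obtain ⟨l, rfl⟩ := Nat.exists_eq_add_of_le' hk
    refine hnot ⟨(l, k), by simp, ?_⟩
    simp only [Prod.mk.injEq, and_true]
    linarith
  · rintro ⟨i, j⟩ -
    simp

theorem dissection_zero_expand (d : ℕ) (hd : d ≠ 0) (f : R⟦X⟧) :
    dissection d 0 (expand d hd f) = f := by
  ext n
  simp

theorem dissection_one_of_ne_zero (d : ℕ) {r : ℕ} (hr : r ≠ 0) :
    dissection d r (1 : R⟦X⟧) = 0 := by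
  ext n
  simp [coeff_one, hr]

theorem expand_dissection_zero_add_X_mul_expand_dissection_one (f : R⟦X⟧) :
    𝓥 2 (dissection 2 0 f) + X * 𝓥 2 (dissection 2 1 f) = f := by
  ext n
  obtain ⟨k, rfl | rfl⟩ := n.even_or_odd'
  · rcases k with _ | k
    · rw [map_add, coeff_expand_mul, coeff_dissection, mul_zero, coeff_zero_X_mul, add_zero,
        add_zero]
    · have hodd : ¬ 2 ∣ 2 * k + 1 := by omega
      rw [map_add, coeff_expand_mul, show 2 * (k + 1) = 2 * k + 1 + 1 by ring, coeff_succ_X_mul,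
        coeff_expand_of_not_dvd _ _ _ hodd]
      simp [mul_add]
  · have hodd : ¬ 2 ∣ 2 * k + 1 := by omega
    rw [map_add, coeff_succ_X_mul, coeff_expand_of_not_dvd _ _ _ hodd, coeff_expand_mul]
    simp

theorem dissection_two_one_sq (f : R⟦X⟧) :
    dissection 2 1 (f ^ 2) = 2 * dissection 2 0 f * dissection 2 1 f := by
  set a := dissection 2 0 f
  set b := dissection 2 1 f
  have hsplit : f ^ 2 = 1 * 𝓥 2 (a ^ 2 + X * b ^ 2) + X * 𝓥 2 (2 * a * b) := by
    rw [← expand_dissection_zero_add_X_mul_expand_dissection_one f]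
    simp only [map_add, map_mul, map_pow, expand_X, map_ofNat]
    ring
  have hX : dissection 2 1 (X : R⟦X⟧) = 1 := by
    ext n
    simp [coeff_X, coeff_one]
  rw [hsplit, map_add, dissection_mul_expand _ one_lt_two, dissection_mul_expand _ one_lt_two,
    dissection_one_of_ne_zero 2 one_ne_zero, hX, zero_mul, one_mul, zero_add]

theorem C_dvd_iff_dvd_coeff (r : R) (f : R⟦X⟧) : C r ∣ f ↔ ∀ n, r ∣ coeff n f := by
  constructor
  · rintro ⟨g, rfl⟩ n
    exact ⟨coeff n g, coeff_C_mul _ _ _⟩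
  · intro h
    choose g hg using h
    refine ⟨PowerSeries.mk g, ?_⟩
    ext n
    rw [hg, coeff_C_mul, coeff_mk]

theorem prime_dvd_pow_sub_expand (p : ℕ) [Fact p.Prime] (f : ℤ⟦X⟧) :
    (p : ℤ⟦X⟧) ∣ f ^ p - 𝓥 p f := by
  have hfrob (g : (ZMod p)⟦X⟧) : g ^ p = 𝓥 p g := by
    have h := MvPowerSeries.map_frobenius_expand (σ := Unit) p (NeZero.ne p) (f := g)
    rw [ZMod.frobenius_zmod, MvPowerSeries.map_id] at h
    exact h.symm
  have hmap : map (Int.castRingHom (ZMod p)) (f ^ p - 𝓥 p f) = 0 := by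
    rw [map_sub, map_pow, map_expand, hfrob, sub_self]
  rw [← map_natCast (C (R := ℤ)), C_dvd_iff_dvd_coeff]
  intro n
  rw [← ZMod.intCast_zmod_eq_zero_iff_dvd]
  have hcoeff := congrArg (coeff n) hmap
  rwa [coeff_map, map_zero, eq_intCast] at hcoeff

theorem rescale_neg_one_expand_two (f : R⟦X⟧) : rescale (-1) (𝓥 2 f) = 𝓥 2 f := by
  ext n
  rw [coeff_rescale, coeff_expand]
  split_ifs with h
  · rw [(even_iff_two_dvd.mpr h).neg_one_pow, one_mul]
  · rw [mul_zero]

theorem two_dvd_rescale_neg_one_sub (f : R⟦X⟧) : 2 ∣ rescale (-1) f - f := by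
  rw [← map_ofNat (C (R := R)), C_dvd_iff_dvd_coeff]
  intro n
  rw [map_sub, coeff_rescale]
  rcases neg_one_pow_eq_or R n with h | h <;> rw [h]
  · simp
  · exact ⟨-coeff n f, by ring⟩

theorem exists_coeff_ne_zero_of_coeff_mul_ne_zero {f g : R⟦X⟧} {n : ℕ} (h : coeff n (f * g) ≠ 0) :
    ∃ i j, i + j = n ∧ coeff i f ≠ 0 ∧ coeff j g ≠ 0 := by
  rw [coeff_mul] at h
  obtain ⟨⟨i, j⟩, hij, hne⟩ := Finset.exists_ne_zero_of_sum_ne_zero h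
  exact ⟨i, j, by simpa using hij, left_ne_zero_of_mul hne, right_ne_zero_of_mul hne⟩

end PowerSeriesAlgebra

open PowerSeries.WithPiTopology Filter Topology

section PartProd

variable {R : Type*} [CommRing R] [TopologicalSpace R]

theorem continuous_rescale [IsTopologicalRing R] (a : R) : Continuous (rescale a) := by
  refine continuous_iff_continuousAt.mpr fun f => ?_
  refine (tendsto_iff_coeff_tendsto _ _ _ _).mpr fun n => ?_
  simp only [coeff_rescale]
  exact ((continuous_coeff R n).tendsto f).const_mul _

theorem continuous_expand (d : ℕ) (hd : d ≠ 0) : Continuous (expand (R := R) d hd) := by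
  refine continuous_iff_continuousAt.mpr fun f => ?_
  refine (tendsto_iff_coeff_tendsto _ _ _ _).mpr fun n => ?_
  simp only [coeff_expand]
  split_ifs
  · exact (continuous_coeff R _).tendsto f
  · exact tendsto_const_nhds

/-- The infinite product `∏_{i ∈ S} (1 + a Xⁱ)`: for `a = 1` the generating function of partitions
into distinct parts from `S`, for `a = -1` the inverse of that of all partitions into parts from
`S`. -/
noncomputable def partProd (a : R) (S : Set ℕ+) : R⟦X⟧ :=
  ∏' i : S, (1 + C a * X ^ (i : ℕ))

variable (a : R) (S : Set ℕ+)

theorem multipliable_partProd :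
    Multipliable fun i : S => (1 + C a * X ^ (i : ℕ) : R⟦X⟧) := by
  nontriviality R
  have hind : S.mulIndicator (fun i : ℕ+ => (1 + C a * X ^ (i : ℕ) : R⟦X⟧)) =
      fun i => 1 + S.indicator (fun i : ℕ+ => C a * X ^ (i : ℕ)) i := by
    funext i
    by_cases hi : i ∈ S <;> simp [hi]
  refine (multipliable_subtype_iff_mulIndicator
    (f := fun i : ℕ+ => (1 + C a * X ^ (i : ℕ) : R⟦X⟧))).mpr ?_
  rw [hind]
  refine multipliable_one_add_of_tendsto_order_atTop_nhds_top R ?_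
  refine ENat.tendsto_nhds_top_iff_natCast_lt.mpr fun n => eventually_atTop.mpr ⟨n.succPNat, ?_⟩
  intro m hm
  have hnm : n < m := Nat.succ_le_iff.mp hm
  refine lt_of_lt_of_le (Nat.cast_lt.mpr hnm) (nat_le_order _ _ fun i hi => ?_)
  by_cases hmS : m ∈ S
  · simp [hmS, coeff_X_pow, hi.ne]
  · simp [hmS]

theorem hasProd_partProd :
    HasProd (fun i : S => (1 + C a * X ^ (i : ℕ) : R⟦X⟧)) (partProd a S) :=
  (multipliable_partProd a S).hasProd

theorem constantCoeff_partProd [T2Space R] : constantCoeff (partProd a S) = 1 := by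
  have h := (hasProd_partProd a S).map (constantCoeff (R := R)) (continuous_constantCoeff R)
  refine h.unique ?_
  convert hasProd_one using 1
  funext i
  simp

theorem isUnit_partProd [T2Space R] : IsUnit (partProd a S) := by
  rw [isUnit_iff_constantCoeff, constantCoeff_partProd]
  exact isUnit_one

theorem hasProd_partProd_setOf (p : ℕ → Prop) [DecidablePred p] :
    HasProd (fun n : ℕ => if p (n + 1) then (1 + C a * X ^ (n + 1) : R⟦X⟧) else 1)
      (partProd a {i | p i}) := by
  have h := (hasProd_subtype_iff_mulIndicator
    (f := fun i : ℕ+ => (1 + C a * X ^ (i : ℕ) : R⟦X⟧))).mp (hasProd_partProd a {i | p i})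
  refine hasProd_pnat_iff_hasProd_succ
    (f := fun n => if p n then (1 + C a * X ^ n : R⟦X⟧) else 1) |>.mp ?_
  convert h using 1
  funext i
  simp [Set.mulIndicator_apply]

theorem hasProd_partProd_univ :
    HasProd (fun n : ℕ => (1 + C a * X ^ (n + 1) : R⟦X⟧)) (partProd a Set.univ) := by
  simpa using hasProd_partProd_setOf a fun _ => True

variable [T2Space R]

theorem expand_partProd (d : ℕ+) :
    expand d d.ne_zero (partProd a S) = partProd a ((d * ·) '' S) := by
  have h := (hasProd_partProd a S).map (expand (R := R) d d.ne_zero) (continuous_expand _ _)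
  rw [← h.tprod_eq, partProd, tprod_image (fun i : ℕ+ => (1 + C a * X ^ (i : ℕ) : R⟦X⟧))
    (mul_right_injective d).injOn]
  refine tprod_congr fun i => ?_
  simp [expand_C, expand_X, pow_mul]

variable [IsTopologicalRing R]

theorem partProd_mul_partProd_compl : partProd a S * partProd a Sᶜ = partProd a Set.univ := by
  rw [partProd, partProd, partProd, tprod_univ fun i : ℕ+ => (1 + C a * X ^ (i : ℕ) : R⟦X⟧)]
  exact Multipliable.tprod_mul_tprod_compl (f := fun i : ℕ+ => (1 + C a * X ^ (i : ℕ) : R⟦X⟧))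
    (multipliable_partProd a S) (multipliable_partProd a Sᶜ)

theorem rescale_neg_one_partProd (hS : ∀ i ∈ S, Odd (i : ℕ)) :
    rescale (-1) (partProd a S) = partProd (-a) S := by
  have h := (hasProd_partProd a S).map (rescale (-1 : R)) (continuous_rescale _)
  refine h.unique ?_
  convert hasProd_partProd (-a) S using 1
  funext i
  have hC : rescale (-1) (C a) = C a := by
    ext n
    rcases n with _ | n <;> simp [coeff_C]
  simp [hC, (hS i i.2).neg_pow]

end PartProd

section FiniteGauss

variable {R : Type*} [CommRing R] (q : R) (n : ℕ)

/-- The `j`-th summand of the finite form of Gauss's identity; the summand at `j = 0` is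
`∏_{i ≤ n} (1 - q ^ i)`, and the others are divisible by `q ^ (n + 1)`. -/
def gaussTerm (j : ℕ) : R :=
  (-1) ^ j * q ^ ((n + 1) * j) * (∏ i ∈ Finset.range j, (1 + q ^ i)) *
    ∏ i ∈ Finset.Ico j n, (1 - q ^ (i + 1))

theorem gaussTerm_zero : gaussTerm q n 0 = ∏ i ∈ Finset.range n, (1 - q ^ (i + 1)) := by
  simp [gaussTerm]

theorem pow_dvd_gaussTerm_succ (j : ℕ) : q ^ (n + 1) ∣ gaussTerm q n (j + 1) := by
  refine Dvd.dvd.mul_right (Dvd.dvd.mul_right (Dvd.dvd.mul_left ?_ _) _) _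
  exact pow_dvd_pow q (Nat.le_mul_of_pos_right _ j.succ_pos)

-- The factor multiplying `gaussTerm q n j` is the one that gives
-- `gaussTerm q (n + 1) j - (1 + q ^ (n + 1)) * gaussTerm q n j`.
theorem sum_gaussTerm_mul {k : ℕ} (hk : k ≤ n + 1) :
    ∑ j ∈ Finset.range k, gaussTerm q n j * (q ^ j * (1 - q ^ (n + 1)) - (1 + q ^ (n + 1))) =
      (-1) ^ k * q ^ ((n + 1) * k) * (∏ i ∈ Finset.range k, (1 + q ^ i)) *
        ∏ i ∈ Finset.Ico k (n + 1), (1 - q ^ i) := by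
  induction k with
  | zero =>
    have hzero : ∏ i ∈ Finset.Ico 0 (n + 1), (1 - q ^ i) = 0 :=
      Finset.prod_eq_zero (i := 0) (by simp) (by simp)
    rw [hzero, Finset.sum_range_zero, mul_zero]
  | succ k ih =>
    have hshift : ∏ i ∈ Finset.Ico (k + 1) (n + 1), (1 - q ^ i) =
        ∏ i ∈ Finset.Ico k n, (1 - q ^ (i + 1)) :=
      (Finset.prod_Ico_add' (fun i => 1 - q ^ i) k n 1).symm
    rw [Finset.sum_range_succ, ih (by omega), Finset.prod_range_succ,
      Finset.prod_eq_prod_Ico_succ_bot (show k < n + 1 by omega), hshift, gaussTerm]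
    ring

theorem sum_gaussTerm_succ :
    ∑ j ∈ Finset.range (n + 1), gaussTerm q (n + 1) j =
      (1 + q ^ (n + 1)) * ∑ j ∈ Finset.range (n + 1), gaussTerm q n j +
        (-1) ^ (n + 1) * q ^ ((n + 1) ^ 2) * ∏ i ∈ Finset.range (n + 1), (1 + q ^ i) := by
  have htele := sum_gaussTerm_mul q n le_rfl
  rw [Finset.Ico_self, Finset.prod_empty, mul_one, ← sq] at htele
  rw [← htele, Finset.mul_sum, ← Finset.sum_add_distrib]
  refine Finset.sum_congr rfl fun j hj => ?_
  rw [gaussTerm, gaussTerm, Finset.prod_Ico_succ_top (Finset.mem_range_succ_iff.mp hj)]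
  ring

theorem finite_gauss_identity :
    (1 + 2 * ∑ s ∈ Finset.range n, (-1) ^ (s + 1) * q ^ ((s + 1) ^ 2)) *
      ∏ i ∈ Finset.range n, (1 + q ^ (i + 1)) = ∑ j ∈ Finset.range (n + 1), gaussTerm q n j := by
  induction n with
  | zero => simp [gaussTerm]
  | succ n ih =>
    have hdouble : ∏ i ∈ Finset.range (n + 1), (1 + q ^ i) =
        2 * ∏ i ∈ Finset.range n, (1 + q ^ (i + 1)) := by
      rw [Finset.prod_range_succ', pow_zero, one_add_one_eq_two, mul_comm]
    rw [Finset.sum_range_succ _ (n + 1), sum_gaussTerm_succ, ← ih, gaussTerm, Finset.Ico_self,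
      Finset.prod_empty, Finset.sum_range_succ, hdouble, Finset.prod_range_succ _ n]
    ring

end FiniteGauss

section Theta

variable (R : Type*) [CommRing R]

/-- The series `∑_{k ≥ 1} X ^ (k ^ 2)`. -/
def squareSeries : R⟦X⟧ :=
  PowerSeries.mk fun n => if n ≠ 0 ∧ IsSquare n then 1 else 0

/-- Ramanujan's theta function `φ(q) = ∑_{k ∈ ℤ} q ^ (k ^ 2)`. -/
noncomputable def theta : R⟦X⟧ := 1 + 2 * squareSeries R

/-- Ramanujan's theta function at a negated argument, `φ(-q)`. -/
noncomputable def thetaNeg : R⟦X⟧ := rescale (-1) (theta R)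

@[simp]
theorem coeff_squareSeries (n : ℕ) :
    coeff n (squareSeries R) = if n ≠ 0 ∧ IsSquare n then 1 else 0 :=
  coeff_mk n _

theorem thetaNeg_eq : thetaNeg R = 1 + 2 * rescale (-1) (squareSeries R) := by
  rw [thetaNeg, theta, map_add, map_mul, map_one, map_ofNat]

theorem rescale_neg_one_thetaNeg : rescale (-1) (thetaNeg R) = theta R := by
  rw [thetaNeg, rescale_rescale, neg_one_mul, neg_neg, rescale_one, RingHom.id_apply]

theorem constantCoeff_theta : constantCoeff (theta R) = 1 := by
  have hzero : constantCoeff (squareSeries R) = 0 := by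
    rw [← coeff_zero_eq_constantCoeff_apply, coeff_squareSeries, if_neg (by simp)]
  simp [theta, hzero]

theorem isUnit_theta : IsUnit (theta R) := by
  rw [isUnit_iff_constantCoeff, constantCoeff_theta]
  exact isUnit_one

theorem isUnit_thetaNeg : IsUnit (thetaNeg R) :=
  (isUnit_theta R).map _

variable {R} in
theorem isSquare_of_coeff_squareSeries_ne_zero {n : ℕ} (h : coeff n (squareSeries R) ≠ 0) :
    IsSquare n := by
  by_contra hn
  simp [hn] at h

theorem dissection_two_zero_squareSeries :
    dissection 2 0 (squareSeries R) = 𝓥 2 (squareSeries R) := by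
  have hroot {m r : ℕ} (hr : 2 * m = r * r) : ∃ s, m = 2 * (s * s) := by
    obtain ⟨s, rfl⟩ : 2 ∣ r := Nat.prime_two.dvd_of_dvd_pow (n := 2) ⟨m, by rw [sq, hr]⟩
    exact ⟨s, by linarith⟩
  ext n
  rw [coeff_dissection, coeff_expand, add_zero]
  split_ifs with hn
  · obtain ⟨k, rfl⟩ := hn
    have hsq : IsSquare (2 * (2 * k)) ↔ IsSquare k := by
      constructor
      · rintro ⟨r, hr⟩
        obtain ⟨s, hs⟩ := hroot hr
        exact ⟨s, mul_left_cancel₀ two_ne_zero hs⟩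
      · rintro ⟨r, rfl⟩
        exact ⟨2 * r, by ring⟩
    simp [hsq]
  · have hns : ¬ IsSquare (2 * n) := by
      rintro ⟨r, hr⟩
      obtain ⟨s, hs⟩ := hroot hr
      exact hn ⟨s * s, hs⟩
    simp [hns]

theorem dissection_two_zero_theta : dissection 2 0 (theta R) = 𝓥 2 (theta R) := by
  have hone : dissection 2 0 (1 : R⟦X⟧) = 1 := by
    simpa using dissection_zero_expand 2 two_ne_zero (1 : R⟦X⟧)
  rw [theta, two_mul, map_add, map_add, dissection_two_zero_squareSeries, hone]
  simp

variable [TopologicalSpace R]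

theorem hasSum_squareSeries :
    HasSum (fun k : ℕ => (X ^ ((k + 1) ^ 2) : R⟦X⟧)) (squareSeries R) := by
  have hinj : Function.Injective fun k : ℕ => (k + 1) ^ 2 := fun k l h => by
    simpa using Nat.pow_left_injective two_ne_zero h
  have hmon := hasSum_of_monomials_self (squareSeries R)
  rw [← hinj.hasSum_iff] at hmon
  · convert hmon using 2 with k
    simp [X_pow_eq, IsSquare.sq]
  · intro n hn
    have hcoeff : coeff n (squareSeries R) = 0 := by
      rw [coeff_squareSeries, if_neg]
      rintro ⟨hn0, r, rfl⟩
      obtain ⟨k, rfl⟩ := Nat.exists_eq_succ_of_ne_zero (left_ne_zero_of_mul hn0)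
      exact hn ⟨k, sq _⟩
    rw [hcoeff, map_zero]

variable [IsTopologicalRing R]

theorem hasSum_rescale_neg_one_squareSeries :
    HasSum (fun k : ℕ => ((-1) ^ (k + 1) * X ^ ((k + 1) ^ 2) : R⟦X⟧))
      (rescale (-1) (squareSeries R)) := by
  convert (hasSum_squareSeries R).map (rescale (-1 : R)) (continuous_rescale _) using 2 with k
  have hparity : Even ((k + 1) ^ 2) ↔ Even (k + 1) := by simp [Nat.even_pow]
  simp [neg_pow X, neg_one_pow_congr hparity]

variable [T2Space R]

theorem thetaNeg_mul_partProd_one_univ :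
    thetaNeg R * partProd 1 Set.univ = partProd (-1) Set.univ := by
  have htheta : Tendsto (fun n => (1 + 2 * ∑ s ∈ Finset.range n,
      (-1) ^ (s + 1) * X ^ ((s + 1) ^ 2) : R⟦X⟧)) atTop (𝓝 (thetaNeg R)) := by
    rw [thetaNeg_eq]
    exact ((hasSum_rescale_neg_one_squareSeries R).tendsto_sum_nat.const_mul 2).const_add 1
  have hplus := (hasProd_partProd_univ (1 : R)).tendsto_prod_nat
  have hminus := (hasProd_partProd_univ (-1 : R)).tendsto_prod_nat
  simp only [map_neg, map_one, one_mul, neg_one_mul, ← sub_eq_add_neg] at hplus hminus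
  refine sub_eq_zero.mp (tendsto_nhds_unique ((htheta.mul hplus).sub hminus) ?_)
  refine (tendsto_iff_coeff_tendsto _ _ _ _).mpr fun d => ?_
  refine tendsto_atTop_of_eventually_const (i₀ := d) fun n hn => ?_
  rw [finite_gauss_identity, Finset.sum_range_succ', gaussTerm_zero, add_sub_cancel_right, map_sum,
    map_zero]
  exact Finset.sum_eq_zero fun j _ =>
    X_pow_dvd_iff.mp (pow_dvd_gaussTerm_succ X n j) d (Nat.lt_succ_of_le hn)

end Theta

section ThetaProduct

/-- The odd positive integers. -/
def oddParts : Set ℕ+ := {i | Odd (i : ℕ)}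

theorem image_two_mul_univ : ((2 : ℕ+) * ·) '' Set.univ = oddPartsᶜ := by
  ext i
  have hdvd : (2 : ℕ+) ∣ i ↔ ¬ Odd (i : ℕ) := by
    rw [PNat.dvd_iff, PNat.val_ofNat, ← even_iff_two_dvd, Nat.not_odd_iff_even]
  simpa [oddParts, dvd_def, eq_comm] using hdvd

theorem image_four_mul_oddParts :
    ((4 : ℕ+) * ·) '' oddParts = {i : ℕ+ | (i : ℕ) % 8 ≠ 4}ᶜ := by
  ext i
  simp only [oddParts, Set.mem_image, Set.mem_ofPred_eq, Set.mem_compl_iff, not_not]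
  constructor
  · rintro ⟨j, hj, rfl⟩
    obtain ⟨k, hk⟩ := hj
    rw [PNat.mul_coe, hk, PNat.val_ofNat]
    omega
  · intro hi
    refine ⟨(2 * ((i : ℕ) / 8)).succPNat, ?_, PNat.eq ?_⟩
    · rw [Nat.succPNat_coe]
      exact odd_two_mul_add_one _
    · rw [PNat.mul_coe, Nat.succPNat_coe, PNat.val_ofNat]
      omega

variable (R : Type*) [CommRing R] [TopologicalSpace R] [IsTopologicalRing R] [T2Space R]

theorem thetaNeg_mul_partProd_one_oddParts :
    thetaNeg R * partProd 1 oddParts = 𝓥 2 (thetaNeg R) * partProd (-1) oddParts := by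
  have hexpand (a : R) : 𝓥 2 (partProd a Set.univ) = partProd a oddPartsᶜ := by
    rw [← image_two_mul_univ]
    exact expand_partProd a Set.univ 2
  have heven := congrArg (𝓥 2) (thetaNeg_mul_partProd_one_univ R)
  have hall := thetaNeg_mul_partProd_one_univ R
  rw [map_mul, hexpand, hexpand] at heven
  rw [← partProd_mul_partProd_compl 1 oddParts, ← partProd_mul_partProd_compl (-1) oddParts] at hall
  refine (isUnit_partProd 1 oddPartsᶜ).mul_right_cancel ?_
  linear_combination hall - partProd (-1) oddParts * heven

theorem theta_mul_thetaNeg : theta R * thetaNeg R = 𝓥 2 (thetaNeg R) ^ 2 := by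
  have hneg := thetaNeg_mul_partProd_one_oddParts R
  have hpos := congrArg (rescale (-1)) hneg
  rw [map_mul, map_mul, rescale_neg_one_expand_two, rescale_neg_one_thetaNeg,
    rescale_neg_one_partProd 1 oddParts fun _ => id,
    rescale_neg_one_partProd (-1) oddParts fun _ => id, neg_neg] at hpos
  refine (isUnit_partProd 1 oddParts).mul_right_cancel
    ((isUnit_partProd (-1) oddParts).mul_right_cancel ?_)
  linear_combination
    thetaNeg R * partProd 1 oddParts * hpos + 𝓥 2 (thetaNeg R) * partProd 1 oddParts * hneg

end ThetaProduct

section GeneratingFunction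

theorem nodup_and_forall_mem_iff_count_lt_two {α : Type*} [DecidableEq α] (p : α → Prop)
    (s : Multiset α) :
    (s.Nodup ∧ ∀ i ∈ s, p i) ↔ ∀ i ∈ s, p i ∧ s.count i < 2 := by
  rw [Multiset.nodup_iff_count_le_one]
  constructor
  · rintro ⟨hcount, hp⟩ i hi
    exact ⟨hp i hi, Nat.lt_succ_of_le (hcount i)⟩
  · intro h
    refine ⟨fun i => ?_, fun i hi => (h i hi).1⟩
    by_cases hi : i ∈ s
    · exact Nat.le_of_lt_succ (h i hi).2
    · simp [hi]

variable (R : Type*) [CommRing R] [TopologicalSpace R] [T2Space R]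
variable (p : ℕ → Prop) [DecidablePred p]

theorem mk_card_filter_distincts :
    (PowerSeries.mk fun m => (((Nat.Partition.distincts m).filter
      fun lam => ∀ i ∈ lam.parts, p i).card : R)) = partProd 1 {i | p i} := by
  refine HasProd.unique ?_ (hasProd_partProd_setOf 1 p)
  convert! Nat.Partition.hasProd_genFun fun i c => if p i ∧ c < 2 then (1 : R) else 0 using 1
  · funext i
    rw [tsum_eq_single 0]
    · by_cases hp : p (i + 1) <;> simp [hp]
    · intro j hj
      rw [if_neg (by omega), zero_smul]
  · ext n
    rw [coeff_mk, Nat.Partition.coeff_genFun, Nat.Partition.distincts, Finset.filter_filter,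
      Finset.card_filter, Nat.cast_sum]
    refine Finset.sum_congr rfl fun lam _ => ?_
    simp [Finsupp.prod, Finset.prod_boole, nodup_and_forall_mem_iff_count_lt_two]

variable [IsTopologicalRing R]

theorem mk_card_restricted_mul_partProd_neg_one :
    (PowerSeries.mk fun m => ((Nat.Partition.restricted m p).card : R)) *
      partProd (-1) {i | p i} = 1 := by
  have h := (Nat.Partition.hasProd_powerSeriesMk_card_restricted R p).mul
    (hasProd_partProd_setOf (-1) p)
  refine h.unique ?_
  convert hasProd_one using 1
  funext i
  split_ifs
  · simp_rw [pow_mul, map_neg, map_one, neg_one_mul, ← sub_eq_add_neg]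
    exact tsum_pow_mul_one_sub_of_constantCoeff_eq_zero (by simp)
  · exact one_mul 1

/-- The generating function of the numbers of `(j, k)`-regular overpartitions. -/
def regularOverpartitionSeries (R : Type*) [CommRing R] (j k : ℕ) : R⟦X⟧ :=
  PowerSeries.mk fun n => (regularOverpartitions j k n : R)

theorem regularOverpartitionSeries_mul_partProd_neg_one (j k : ℕ) :
    regularOverpartitionSeries R j k * partProd (-1) {i | (i : ℕ) % k ≠ j} =
      partProd 1 {i | (i : ℕ) % k ≠ j} := by
  have hmul : regularOverpartitionSeries R j k =
      (PowerSeries.mk fun m => (((Nat.Partition.distincts m).filter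
        fun lam => ∀ i ∈ lam.parts, i % k ≠ j).card : R)) *
      PowerSeries.mk fun m => ((Nat.Partition.restricted m fun i => i % k ≠ j).card : R) := by
    ext n
    simp_rw [regularOverpartitionSeries, coeff_mul, coeff_mk,
      Finset.Nat.sum_antidiagonal_eq_sum_range_succ_mk, regularOverpartitions, Nat.cast_sum,
      Nat.cast_mul, Nat.Partition.restricted]
  rw [hmul, mul_assoc, mk_card_restricted_mul_partProd_neg_one R fun i => i % k ≠ j, mul_one,
    mk_card_filter_distincts R fun i => i % k ≠ j]

theorem regularOverpartitionSeries_four_eight_mul_thetaNeg :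
    regularOverpartitionSeries R 4 8 * thetaNeg R * 𝓥 8 (thetaNeg R) = 𝓥 4 (thetaNeg R) := by
  set S : Set ℕ+ := {i | (i : ℕ) % 8 ≠ 4}
  have hexpand (a : R) : 𝓥 4 (partProd a oddParts) = partProd a Sᶜ := by
    rw [← image_four_mul_oddParts]
    exact expand_partProd a oddParts 4
  have hfour := congrArg (𝓥 4) (thetaNeg_mul_partProd_one_oddParts R)
  rw [map_mul, map_mul, hexpand, hexpand, ← expand_mul] at hfour
  have hall := thetaNeg_mul_partProd_one_univ R
  rw [← partProd_mul_partProd_compl 1 S, ← partProd_mul_partProd_compl (-1) S] at hall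
  have hgen := regularOverpartitionSeries_mul_partProd_neg_one R 4 8
  set G := regularOverpartitionSeries R 4 8
  refine (isUnit_partProd 1 S).mul_right_cancel ((isUnit_partProd 1 Sᶜ).mul_right_cancel ?_)
  linear_combination 𝓥 8 (thetaNeg R) * G * hall + 𝓥 8 (thetaNeg R) * partProd (-1) Sᶜ * hgen -
    partProd 1 S * hfour

end GeneratingFunction

section Extraction

variable (R : Type*) [CommRing R] [TopologicalSpace R] [IsTopologicalRing R] [T2Space R]

theorem regularOverpartitionSeries_four_eight_mul_expand_four :
    regularOverpartitionSeries R 4 8 * 𝓥 4 (thetaNeg R ^ 4 * theta R) =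
      theta R * 𝓥 2 (theta R ^ 2) * 𝓥 8 (thetaNeg R) := by
  have hgen := regularOverpartitionSeries_four_eight_mul_thetaNeg R
  have hone := theta_mul_thetaNeg R
  have htwo := congrArg (𝓥 2) hone
  have hfour := congrArg (𝓥 4) hone
  rw [map_mul, map_pow, ← expand_mul] at htwo hfour
  rw [map_mul, map_pow, map_pow]
  refine ((isUnit_thetaNeg R).map (𝓥 8)).mul_right_cancel ?_
  set G := regularOverpartitionSeries R 4 8
  calc G * (𝓥 4 (thetaNeg R) ^ 4 * 𝓥 4 (theta R)) * 𝓥 8 (thetaNeg R)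
      = G * 𝓥 8 (thetaNeg R) * (𝓥 4 (thetaNeg R) ^ 2) ^ 2 * 𝓥 4 (theta R) := by ring
    _ = G * 𝓥 8 (thetaNeg R) * 𝓥 2 (thetaNeg R) ^ 2 * 𝓥 2 (theta R) ^ 2 * 𝓥 4 (theta R) := by
      rw [← htwo]
      ring
    _ = G * thetaNeg R * 𝓥 8 (thetaNeg R) * theta R * 𝓥 2 (theta R) ^ 2 * 𝓥 4 (theta R) := by
      rw [← hone]
      ring
    _ = theta R * 𝓥 2 (theta R) ^ 2 * (𝓥 4 (theta R) * 𝓥 4 (thetaNeg R)) := by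
      rw [hgen]
      ring
    _ = theta R * 𝓥 2 (theta R) ^ 2 * 𝓥 8 (thetaNeg R) * 𝓥 8 (thetaNeg R) := by
      rw [hfour]
      ring

theorem dissection_two_zero_regularOverpartitionSeries :
    dissection 2 0 (regularOverpartitionSeries R 4 8) * 𝓥 2 (thetaNeg R ^ 4) =
      theta R ^ 2 * 𝓥 4 (thetaNeg R) := by
  have h := congrArg (dissection 2 0) (regularOverpartitionSeries_four_eight_mul_expand_four R)
  rw [expand_mul 2 two_ne_zero 2 two_ne_zero, dissection_mul_expand _ two_pos, mul_assoc,
    expand_mul 2 two_ne_zero 4 four_ne_zero, ← map_mul (𝓥 2), dissection_mul_expand _ two_pos,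
    dissection_two_zero_theta] at h
  refine ((isUnit_theta R).map (𝓥 2)).mul_right_cancel ?_
  rw [mul_assoc, ← map_mul, h, mul_comm]

theorem dissection_two_one_dissection_two_zero_regularOverpartitionSeries :
    dissection 2 1 (dissection 2 0 (regularOverpartitionSeries R 4 8)) * thetaNeg R ^ 4 =
      4 * dissection 2 1 (squareSeries R) * 𝓥 4 (thetaNeg R ^ 2) := by
  have h := congrArg (dissection 2 1) (dissection_two_zero_regularOverpartitionSeries R)
  have htheta : dissection 2 1 (theta R) = 2 * dissection 2 1 (squareSeries R) := by
    rw [theta, two_mul, map_add, map_add, dissection_one_of_ne_zero 2 one_ne_zero, zero_add,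
      two_mul]
  have htwo := congrArg (𝓥 2) (theta_mul_thetaNeg R)
  rw [map_mul, map_pow, ← expand_mul] at htwo
  rw [dissection_mul_expand _ one_lt_two, expand_mul 2 two_ne_zero 2 two_ne_zero,
    dissection_mul_expand _ one_lt_two, dissection_two_one_sq, dissection_two_zero_theta,
    htheta] at h
  rw [h, map_pow]
  linear_combination 4 * dissection 2 1 (squareSeries R) * htwo

end Extraction

section Congruence

theorem eight_dvd_thetaNeg_pow_four_sub_one (R : Type*) [CommRing R] :
    8 ∣ thetaNeg R ^ 4 - 1 := by
  rw [thetaNeg_eq]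
  set t := rescale (-1) (squareSeries R)
  exact ⟨t + 3 * t ^ 2 + 4 * t ^ 3 + 2 * t ^ 4, by ring⟩

theorem eight_dvd_thetaNeg_sq_sub :
    8 ∣ thetaNeg ℤ ^ 2 - (1 + 4 * (squareSeries ℤ + 𝓥 2 (squareSeries ℤ))) := by
  obtain ⟨g, hg⟩ := two_dvd_rescale_neg_one_sub (squareSeries ℤ)
  obtain ⟨h, hh⟩ := prime_dvd_pow_sub_expand 2 (squareSeries ℤ)
  rw [thetaNeg_eq]
  set u := squareSeries ℤ
  refine ⟨g + 2 * u * g + 2 * g ^ 2 + h, ?_⟩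
  rw [sub_eq_iff_eq_add.mp hg]
  push_cast at hh
  linear_combination 4 * hh

theorem thirtyTwo_dvd_dissection_sub :
    32 ∣ dissection 2 1 (dissection 2 0 (regularOverpartitionSeries ℤ 4 8)) -
      (4 * dissection 2 1 (squareSeries ℤ) +
        16 * (dissection 2 1 (squareSeries ℤ) * 𝓥 4 (squareSeries ℤ)) +
        16 * (dissection 2 1 (squareSeries ℤ) * 𝓥 8 (squareSeries ℤ))) := by
  have hJ := dissection_two_one_dissection_two_zero_regularOverpartitionSeries ℤ
  obtain ⟨y, hy⟩ := eight_dvd_thetaNeg_pow_four_sub_one ℤ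
  obtain ⟨z, hz⟩ := map_dvd (𝓥 4) eight_dvd_thetaNeg_sq_sub
  simp only [map_sub, map_add, map_mul, map_one, map_ofNat, ← expand_mul] at hz
  rw [sub_eq_iff_eq_add.mp hy, sub_eq_iff_eq_add.mp hz] at hJ
  set J := dissection 2 1 (dissection 2 0 (regularOverpartitionSeries ℤ 4 8))
  set ω := dissection 2 1 (squareSeries ℤ)
  set U := 𝓥 4 (squareSeries ℤ) + 𝓥 8 (squareSeries ℤ) with hU
  refine ⟨ω * z - ω * y * (1 + 4 * U + 8 * z) + 2 * y ^ 2 * J, ?_⟩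
  linear_combination (1 - 8 * y) * hJ + 16 * ω * hU

theorem coeff_dissection_squareSeries_mul_expand_eq_zero {R : Type*} [CommRing R] {d n : ℕ}
    (hd : d ≠ 0) (h : ∀ x y, x ^ 2 + 2 * d * y ^ 2 ≠ 2 * n + 1) :
    coeff n (dissection 2 1 (squareSeries R) * expand d hd (squareSeries R)) = 0 := by
  by_contra hne
  obtain ⟨i, j, rfl, hi, hj⟩ := exists_coeff_ne_zero_of_coeff_mul_ne_zero hne
  rw [coeff_dissection] at hi
  obtain ⟨x, hx⟩ := isSquare_of_coeff_squareSeries_ne_zero hi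
  by_cases hdj : d ∣ j
  · obtain ⟨k, rfl⟩ := hdj
    rw [coeff_expand_mul] at hj
    obtain ⟨y, rfl⟩ := isSquare_of_coeff_squareSeries_ne_zero hj
    refine h x y ?_
    rw [sq, ← hx]
    ring
  · exact hj (coeff_expand_of_not_dvd d hd _ hdj)

theorem thirtyTwo_dvd_regularOverpartitions_of_not_represented {m : ℕ} (hm : Odd m)
    (h8 : ∀ x y, x ^ 2 + 8 * y ^ 2 ≠ m) (h16 : ∀ x y, x ^ 2 + 16 * y ^ 2 ≠ m) :
    32 ∣ regularOverpartitions 4 8 (2 * m) := by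
  obtain ⟨n, rfl⟩ := hm
  have hsquare : coeff n (dissection 2 1 (squareSeries ℤ)) = 0 := by
    by_contra hne
    rw [coeff_dissection] at hne
    obtain ⟨x, hx⟩ := isSquare_of_coeff_squareSeries_ne_zero hne
    exact h8 x 0 (by rw [hx]; ring)
  have hmulFour : coeff n (dissection 2 1 (squareSeries ℤ) * 𝓥 4 (squareSeries ℤ)) = 0 :=
    coeff_dissection_squareSeries_mul_expand_eq_zero _ h8
  have hmulEight : coeff n (dissection 2 1 (squareSeries ℤ) * 𝓥 8 (squareSeries ℤ)) = 0 :=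
    coeff_dissection_squareSeries_mul_expand_eq_zero _ h16
  have hdvd := thirtyTwo_dvd_dissection_sub
  simp only [← map_ofNat (C (R := ℤ)), C_dvd_iff_dvd_coeff] at hdvd
  have hn := hdvd n
  simp only [map_sub, map_add, coeff_C_mul, hsquare, hmulFour, hmulEight, coeff_dissection,
    mul_zero, add_zero, sub_zero, regularOverpartitionSeries, coeff_mk] at hn
  exact_mod_cast hn

end Congruence

section Descent

variable {p : ℕ} [Fact p.Prime]

theorem dvd_of_sq_sub_mul_sq_eq_pow_mul {a : ℤ} (ha : legendreSym p a = -1) (e : ℕ) {x y r : ℤ}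
    (h : x ^ 2 - a * y ^ 2 = p ^ (2 * e + 1) * r) : (p : ℤ) ∣ r := by
  have hp : (p : ℤ) ≠ 0 := Nat.cast_ne_zero.mpr (NeZero.ne p)
  induction e generalizing x y with
  | zero =>
    obtain ⟨⟨s, rfl⟩, t, rfl⟩ :=
      legendreSym.prime_dvd_of_eq_neg_one ha ⟨p ^ (2 * 0) * r, by rw [h]; ring⟩
    exact ⟨s ^ 2 - a * t ^ 2, mul_left_cancel₀ hp (by linear_combination -h)⟩
  | succ e ih =>
    obtain ⟨⟨s, rfl⟩, t, rfl⟩ :=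
      legendreSym.prime_dvd_of_eq_neg_one ha ⟨p ^ (2 * (e + 1)) * r, by rw [h]; ring⟩
    exact ih (x := s) (y := t) (mul_left_cancel₀ (pow_ne_zero 2 hp) (by linear_combination h))

theorem legendreSym_neg_one_of_mod_eight_eq_seven (hp : p % 8 = 7) : legendreSym p (-1) = -1 := by
  rw [legendreSym.eq_neg_one_iff, Int.cast_neg, Int.cast_one, ZMod.exists_sq_eq_neg_one_iff]
  omega

theorem legendreSym_neg_two_of_mod_eight_eq_seven (hp : p % 8 = 7) : legendreSym p (-2) = -1 := by
  rw [legendreSym.eq_neg_one_iff, Int.cast_neg, Int.cast_ofNat, ZMod.exists_sq_eq_neg_two_iff]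
  · omega
  · omega

theorem stmt_9_general (hp : p % 8 = 7) {r : ℕ} (hr : Odd r) (hpr : ¬ p ∣ r) (e : ℕ) :
    32 ∣ regularOverpartitions 4 8 (2 * (p ^ (2 * e + 1) * r)) := by
  have hodd : Odd (p ^ (2 * e + 1) * r) := (Odd.pow (Nat.odd_iff.mpr (by omega))).mul hr
  refine thirtyTwo_dvd_regularOverpartitions_of_not_represented hodd (fun x y h => hpr ?_)
    fun x y h => hpr ?_
  · zify at h ⊢
    exact dvd_of_sq_sub_mul_sq_eq_pow_mul (legendreSym_neg_two_of_mod_eight_eq_seven hp) e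
      (x := x) (y := 2 * y) (by linear_combination h)
  · zify at h ⊢
    exact dvd_of_sq_sub_mul_sq_eq_pow_mul (legendreSym_neg_one_of_mod_eight_eq_seven hp) e
      (x := x) (y := 4 * y) (by linear_combination h)

end Descent

theorem stmt_9 (n α β γ : ℕ) (k : ℕ) (hk : k ∈ ({1, 2, 3, 4, 5, 6} : Finset ℕ)) :
    32 ∣ regularOverpartitions 4 8
        (16 * 3 ^ (4 * α) * 5 ^ (4 * β) * 7 ^ (4 * γ + 3) * (7 * n + k)
          + 2 * 3 ^ (4 * α) * 5 ^ (4 * β) * 7 ^ (4 * (γ + 1))) := by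
  have hseven : Fact (Nat.Prime 7) := ⟨by norm_num⟩
  have hodd : Odd (3 ^ (4 * α) * 5 ^ (4 * β) * (8 * (7 * n + k) + 7)) := by
    refine ((Odd.pow (by decide)).mul (Odd.pow (by decide))).mul (Nat.odd_iff.mpr ?_)
    omega
  have hndvd : ¬ 7 ∣ 3 ^ (4 * α) * 5 ^ (4 * β) * (8 * (7 * n + k) + 7) := by
    have hlast : ¬ 7 ∣ 8 * (7 * n + k) + 7 := by
      simp only [Finset.mem_insert, Finset.mem_singleton] at hk
      omega
    have hthree : ¬ 7 ∣ 3 ^ (4 * α) := mt hseven.out.dvd_of_dvd_pow (by decide)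
    have hfive : ¬ 7 ∣ 5 ^ (4 * β) := mt hseven.out.dvd_of_dvd_pow (by decide)
    exact hseven.out.not_dvd_mul (hseven.out.not_dvd_mul hthree hfive) hlast
  convert stmt_9_general (by norm_num) hodd hndvd (2 * γ + 1) using 2
  ring
end
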